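/- Let Q be an affine quiver, k an algebraically closed field, and m ≥ 1 an integer. Every indecomposable representation X of Q over k with dimension vector mδ satisfies dim_k End(X) = m. -/

import Mathlib

open scoped BigOperators

/-- A finite quiver: finite sets of vertices and arrows with source and target maps. -/
structure FinQuiver where
  V : Type
  A : Type
  [fintypeV : Fintype V]
  [fintypeA : Fintype A]
  [decEqV : DecidableEq V]
  src : A → V
  tgt : A → V

attribute [instance] FinQuiver.fintypeV FinQuiver.fintypeA FinQuiver.decEqV

namespace FinQuiver

variable (Q : FinQuiver)

/-- The Euler form of a finite quiver. -/
def eulerForm (x y : Q.V → ℤ) : ℤ :=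
  (∑ i : Q.V, x i * y i) - ∑ a : Q.A, x (Q.src a) * y (Q.tgt a)

/-- The Tits form of a finite quiver. -/
def titsForm (x : Q.V → ℤ) : ℤ := Q.eulerForm x x

/-- The quiver has no loops. -/
def NoLoops : Prop := ∀ a : Q.A, Q.src a ≠ Q.tgt a

/-- The underlying (simple) graph of a quiver without loops. -/
def graph : SimpleGraph Q.V where
  Adj i j := i ≠ j ∧ ∃ a : Q.A, (Q.src a = i ∧ Q.tgt a = j) ∨ (Q.src a = j ∧ Q.tgt a = i)
  symm := by
    refine ⟨?_⟩
    rintro i j ⟨hij, a, h⟩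
    exact ⟨hij.symm, a, h.symm⟩
  loopless := by
    refine ⟨?_⟩
    rintro i ⟨hii, -⟩
    exact hii rfl

/-- The quiver has no oriented cycles. -/
def Acyclic : Prop :=
  ¬ ∃ (n : ℕ) (g : Fin (n + 1) → Q.A), ∀ k, Q.tgt (g k) = Q.src (g (k + 1))

/-- The double quiver: for each arrow `a : i → j` add a reverse arrow `a* : j → i`. -/
def double : FinQuiver where
  V := Q.V
  A := Q.A ⊕ Q.A
  src := Sum.elim Q.src Q.tgt
  tgt := Sum.elim Q.tgt Q.src

/-- Positive roots: nonzero, nonnegative integer vectors with Tits form at most 1. -/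
def PosRoot (x : Q.V → ℤ) : Prop := (∀ i, 0 ≤ x i) ∧ x ≠ 0 ∧ Q.titsForm x ≤ 1

end FinQuiver

/-- An affine quiver: connected, no loops, no oriented cycles, Tits form positive
semidefinite but not positive definite; `δ` is the minimal positive imaginary root,
generating the radical of the symmetrized Euler form. -/
structure AffineQuiver extends FinQuiver where
  noLoops : toFinQuiver.NoLoops
  connected : toFinQuiver.graph.Connected
  acyclic : toFinQuiver.Acyclic
  posSemidef : ∀ x : V → ℤ, 0 ≤ toFinQuiver.titsForm x
  notPosDef : ∃ x : V → ℤ, x ≠ 0 ∧ toFinQuiver.titsForm x = 0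
  δ : V → ℤ
  delta_pos : ∀ i, 0 < δ i
  radical_iff : ∀ x : V → ℤ,
    (∀ y : V → ℤ, toFinQuiver.eulerForm x y + toFinQuiver.eulerForm y x = 0) ↔
      ∃ m : ℤ, x = m • δ

/-- The defect `∂(x) = e(δ, x)`. -/
def AffineQuiver.defect (Q : AffineQuiver) (x : Q.V → ℤ) : ℤ :=
  Q.eulerForm Q.δ x

/-- A finite-dimensional representation of a finite quiver over a field `k`. -/
structure QRep (Q : FinQuiver) (k : Type) [Field k] where
  carrier : Q.V → Type
  [acgI : ∀ i, AddCommGroup (carrier i)]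
  [modI : ∀ i, Module k (carrier i)]
  [fdI : ∀ i, FiniteDimensional k (carrier i)]
  map : ∀ a : Q.A, carrier (Q.src a) →ₗ[k] carrier (Q.tgt a)

attribute [instance] QRep.acgI QRep.modI QRep.fdI

namespace QRep

variable {Q : FinQuiver} {k : Type} [Field k]

/-- The dimension vector of a representation. -/
noncomputable def dimVec (X : QRep Q k) : Q.V → ℤ :=
  fun i => (Module.finrank k (X.carrier i) : ℤ)

end QRep

/-- A subrepresentation: a family of subspaces stable under all the arrow maps. -/
structure SubRep {Q : FinQuiver} {k : Type} [Field k] (X : QRep Q k) where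
  mod : ∀ i, Submodule k (X.carrier i)
  stable : ∀ a : Q.A, ∀ x ∈ mod (Q.src a), X.map a x ∈ mod (Q.tgt a)

namespace SubRep

variable {Q : FinQuiver} {k : Type} [Field k] {X : QRep Q k}

/-- The dimension vector of a subrepresentation. -/
noncomputable def dimVec (U : SubRep X) : Q.V → ℤ :=
  fun i => (Module.finrank k (U.mod i) : ℤ)

/-- The representation carried by a subrepresentation. -/
def toRep (U : SubRep X) : QRep Q k where
  carrier i := U.mod i
  map a := (X.map a).restrict (U.stable a)

end SubRep

namespace QRep

variable {Q : FinQuiver} {k : Type} [Field k]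

/-- The quotient representation by a subrepresentation. -/
def quotBy (X : QRep Q k) (U : SubRep X) : QRep Q k where
  carrier i := X.carrier i ⧸ U.mod i
  map a := Submodule.mapQ _ _ (X.map a) (fun x hx => U.stable a x hx)

/-- A representation is indecomposable if it is nonzero and is not the internal direct
sum of two nonzero subrepresentations. -/
def Indecomposable (X : QRep Q k) : Prop :=
  (∃ i, 0 < Module.finrank k (X.carrier i)) ∧
    ∀ U W : SubRep X, (∀ i, IsCompl (U.mod i) (W.mod i)) →
      (∀ i, U.mod i = ⊥) ∨ (∀ i, W.mod i = ⊥)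

end QRep

/-- An isomorphism of representations of a quiver. -/
structure RepIso {Q : FinQuiver} {k : Type} [Field k] (X Y : QRep Q k) where
  equiv : ∀ i, X.carrier i ≃ₗ[k] Y.carrier i
  comm : ∀ (a : Q.A) (x : X.carrier (Q.src a)),
    equiv (Q.tgt a) (X.map a x) = Y.map a (equiv (Q.src a) x)

section Preprojective

variable {Q : FinQuiver} {k : Type} [Field k]

/-- The endomorphism of `⊕ᵢ Xᵢ` induced by the map attached to a single arrow. -/
def arrowEnd (X : QRep Q k) (a : Q.A) :
    (∀ i, X.carrier i) →ₗ[k] (∀ i, X.carrier i) :=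
  (LinearMap.single k X.carrier (Q.tgt a)).comp
    ((X.map a).comp (LinearMap.proj (Q.src a)))

/-- The preprojective relation for a representation of the double quiver:
at every vertex, `∑_{t(a)=i} X_a ∘ X_{a*} − ∑_{s(a)=i} X_{a*} ∘ X_a = 0`.
(Stated as one equation of endomorphisms of `⊕ᵢ Xᵢ`, which is equivalent since the
`i`-component of the equation is exactly the relation at the vertex `i`.) -/
def PreprojRel (Q : FinQuiver) {k : Type} [Field k] (X : QRep Q.double k) : Prop :=
  (∑ a : Q.A, (arrowEnd X (Sum.inl a)).comp (arrowEnd X (Sum.inr a)))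
    = ∑ a : Q.A, (arrowEnd X (Sum.inr a)).comp (arrowEnd X (Sum.inl a))

/-- Forget the reverse arrows: a representation of `Π_Q` gives a representation of `Q`. -/
def rho (X : QRep Q.double k) : QRep Q k where
  carrier := X.carrier
  acgI := X.acgI
  modI := X.modI
  fdI := X.fdI
  map a := X.map (Sum.inl a)

/-- A subrepresentation of a `Π_Q`-representation is in particular a subrepresentation of
the underlying `Q`-representation. -/
def rhoSub {X : QRep Q.double k} (U : SubRep X) : SubRep (rho X) where
  mod := U.mod
  stable a x hx := U.stable (Sum.inl a) x hx

/-- A representation of the double quiver is ρ-fixed if all reverse arrows act as zero. -/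
def RhoFixed (X : QRep Q.double k) : Prop :=
  ∀ a : Q.A, X.map (Sum.inr a) = 0

/-- Extend a representation of `Q` to the double quiver by letting all reverse arrows
act as zero. -/
def extendZero (P : QRep Q k) : QRep Q.double k where
  carrier := P.carrier
  acgI := P.acgI
  modI := P.modI
  fdI := P.fdI
  map b := match b with
    | Sum.inl a => P.map a
    | Sum.inr _ => 0

end Preprojective

section SubQuot

variable {Q : FinQuiver} {k : Type} [Field k]

/-- The subquotient representation `W / U` attached to nested subrepresentations
`U ≤ W` of `Z`. -/
def subQuot (Z : QRep Q k) (U W : SubRep Z) (h : ∀ i, U.mod i ≤ W.mod i) : QRep Q k where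
  carrier i := ↥(W.mod i) ⧸ (U.mod i).comap (W.mod i).subtype
  map a := Submodule.mapQ _ _ (W.toRep.map a)
    (fun x hx => U.stable a x.1 hx)

end SubQuot

/-- The endomorphism algebra `End(X)` of a quiver representation, as a subspace of
`Π i, End(Xᵢ)`: families of linear maps commuting with all arrow maps. -/
def endSubmodule {Q : FinQuiver} {k : Type} [Field k] (X : QRep Q k) :
    Submodule k (∀ i, X.carrier i →ₗ[k] X.carrier i) where
  carrier := {f | ∀ a : Q.A, (f (Q.tgt a)).comp (X.map a) = (X.map a).comp (f (Q.src a))}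
  add_mem' := by
    intro f g hf hg a
    simp only [Pi.add_apply, LinearMap.add_comp, LinearMap.comp_add, hf a, hg a]
  zero_mem' := by
    intro a
    simp only [Pi.zero_apply, LinearMap.zero_comp, LinearMap.comp_zero]
  smul_mem' := by
    intro c f hf a
    simp only [Pi.smul_apply, LinearMap.smul_comp, LinearMap.comp_smul, hf a]

/-!
Let `X` be indecomposable of dimension vector `mδ`. It is semistable for the defect `e(δ, ·)`:
the subrepresentations of such `X` have finitely many dimension vectors, and a full round of
reflection functors takes any of them to another one of no smaller defect, with equality only if it
acts by the Coxeter transformation. The vectors of maximal defect would therefore contain a finite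
Coxeter orbit, whose sum is fixed by the Coxeter transformation, hence a multiple of `δ`, of
defect `0`.

Hence `X` has a filtration by stable representations `S i`. As `δ` is in the radical of the
symmetrized Euler form, the multiplicities of a filtration of a representation of dimension `mδ`
are fixed by the matrix `dim Ext¹(S i, S j)`, so this is the matrix of a permutation `σ`. The
resulting Serre duality between `Hom` and `Ext¹` makes `X` uniserial. All composition factors of
`X` lie in one cycle of `σ` and occur with the same multiplicity `c`, and `dim End X = c`.

To compare `c` with `m`, evaluate dimension vectors at a source `e` with `δ e = 1`. If `B` is rigid
of dimension `δ - α_e` then `dim Ext¹(E, B) = 2` for the simple `E` at `e`, and an eigenvalue of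
this pencil provides a semistable `Z` of dimension `δ` with a nonzero map to `X`. So the socle of
`X` occurs in `Z`, the dimension vector of its cycle is at most `δ`, and `mδ e = c · 1`. If `e` is
a sink instead, pass to the dual representation of the opposite quiver.
-/

namespace QRep

section Cohomology

variable {Q : FinQuiver} {k : Type} [Field k] {W X Y Z : QRep Q k}

/-- The degree-zero term `∏ i, Hom(Xᵢ, Yᵢ)` of the two-term complex computing `Hom(X, Y)` and
`Ext¹(X, Y)`. -/
abbrev VertexMaps (X Y : QRep Q k) := ∀ i, X.carrier i →ₗ[k] Y.carrier i

/-- The degree-one term `∏ a, Hom(X_{s(a)}, Y_{t(a)})` of the two-term complex computing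
`Hom(X, Y)` and `Ext¹(X, Y)`; its elements are cocycles of extensions of `X` by `Y`. -/
abbrev ArrowMaps (X Y : QRep Q k) := ∀ a : Q.A, X.carrier (Q.src a) →ₗ[k] Y.carrier (Q.tgt a)

/-- The differential of the two-term complex: its kernel is `Hom(X, Y)` and its cokernel is
`Ext¹(X, Y)`. -/
def differential (X Y : QRep Q k) : VertexMaps X Y →ₗ[k] ArrowMaps X Y where
  toFun f a := (f (Q.tgt a)).comp (X.map a) - (Y.map a).comp (f (Q.src a))
  map_add' f g := by
    funext a
    simp only [Pi.add_apply, LinearMap.add_comp, LinearMap.comp_add]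
    abel
  map_smul' c f := by
    funext a
    simp only [Pi.smul_apply, LinearMap.smul_comp, LinearMap.comp_smul, smul_sub, RingHom.id_apply]

theorem differential_apply (f : VertexMaps X Y) (a : Q.A) (x : X.carrier (Q.src a)) :
    differential X Y f a x = f (Q.tgt a) (X.map a x) - Y.map a (f (Q.src a) x) := rfl

/-- The space of homomorphisms of representations, as a subspace of the vertexwise linear maps. -/
abbrev homSubmodule (X Y : QRep Q k) : Submodule k (VertexMaps X Y) :=
  LinearMap.ker (differential X Y)

theorem mem_homSubmodule {f : VertexMaps X Y} :
    f ∈ homSubmodule X Y ↔ ∀ a x, f (Q.tgt a) (X.map a x) = Y.map a (f (Q.src a) x) := by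
  rw [LinearMap.mem_ker, funext_iff]
  refine forall_congr' fun a => ?_
  rw [LinearMap.ext_iff]
  exact forall_congr' fun x => sub_eq_zero

theorem endSubmodule_eq_homSubmodule (X : QRep Q k) : endSubmodule X = homSubmodule X X := by
  ext f
  rw [mem_homSubmodule]
  exact forall_congr' fun a => LinearMap.ext_iff

/-- Homomorphisms of representations; the component of `f` at the vertex `i` is `f.1 i`. -/
abbrev Hom (X Y : QRep Q k) : Type := ↥(homSubmodule X Y)

namespace Hom

theorem comm (f : Hom X Y) (a : Q.A) (x : X.carrier (Q.src a)) :
    f.1 (Q.tgt a) (X.map a x) = Y.map a (f.1 (Q.src a) x) := mem_homSubmodule.1 f.2 a x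

theorem ext {f g : Hom X Y} (h : ∀ i x, f.1 i x = g.1 i x) : f = g :=
  Subtype.ext (funext fun i => LinearMap.ext (h i))

theorem congr {f g : Hom X Y} (h : f = g) (i : Q.V) (x : X.carrier i) : f.1 i x = g.1 i x := by
  rw [h]

/-- Composition of homomorphisms of representations. -/
def comp (g : Hom Y Z) (f : Hom X Y) : Hom X Z :=
  ⟨fun i => (g.1 i).comp (f.1 i), mem_homSubmodule.2 fun a x => by
    simp only [LinearMap.comp_apply, f.comm, g.comm]⟩

@[simp] theorem comp_apply (g : Hom Y Z) (f : Hom X Y) (i : Q.V) (x : X.carrier i) :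
    (g.comp f).1 i x = g.1 i (f.1 i x) := rfl

/-- The identity homomorphism of a representation. -/
def id (X : QRep Q k) : Hom X X :=
  ⟨fun _ => LinearMap.id, mem_homSubmodule.2 fun _ _ => rfl⟩

@[simp] theorem id_apply (X : QRep Q k) (i : Q.V) (x : X.carrier i) : (Hom.id X).1 i x = x := rfl

theorem comp_assoc (h : Hom Z W) (g : Hom Y Z) (f : Hom X Y) :
    (h.comp g).comp f = h.comp (g.comp f) := rfl

@[simp] theorem id_comp (f : Hom X Y) : (Hom.id Y).comp f = f := rfl

@[simp] theorem comp_id (f : Hom X Y) : f.comp (Hom.id X) = f := rfl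

/-- Composition with `g` on the left, as a linear map `Hom(W, X) → Hom(W, Y)`. -/
def postcomp (W : QRep Q k) (g : Hom X Y) : Hom W X →ₗ[k] Hom W Y where
  toFun f := g.comp f
  map_add' _ _ := Hom.ext fun i _ => map_add (g.1 i) _ _
  map_smul' _ _ := Hom.ext fun i _ => map_smul (g.1 i) _ _

/-- Composition with `g` on the right, as a linear map `Hom(Y, W) → Hom(X, W)`. -/
def precomp (W : QRep Q k) (g : Hom X Y) : Hom Y W →ₗ[k] Hom X W where
  toFun f := f.comp g
  map_add' _ _ := rfl
  map_smul' _ _ := rfl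

@[simp] theorem zero_comp (f : Hom X Y) : (0 : Hom Y Z).comp f = 0 := rfl

@[simp] theorem comp_zero (g : Hom Y Z) : g.comp (0 : Hom X Y) = 0 := map_zero (g.postcomp X)

theorem add_comp (g g' : Hom Y Z) (f : Hom X Y) : (g + g').comp f = g.comp f + g'.comp f := rfl

theorem sub_comp (g g' : Hom Y Z) (f : Hom X Y) : (g - g').comp f = g.comp f - g'.comp f := rfl

theorem comp_sub (g : Hom Y Z) (f f' : Hom X Y) : g.comp (f - f') = g.comp f - g.comp f' :=
  map_sub (g.postcomp X) f f'

theorem smul_comp (c : k) (g : Hom Y Z) (f : Hom X Y) : (c • g).comp f = c • g.comp f := rfl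

end Hom

/-- `dim Hom(X, Y)`. -/
noncomputable def homDim (X Y : QRep Q k) : ℕ := Module.finrank k (Hom X Y)

/-- `dim Ext¹(X, Y)`. -/
noncomputable def extDim (X Y : QRep Q k) : ℕ :=
  Module.finrank k (ArrowMaps X Y ⧸ LinearMap.range (differential X Y))

theorem homDim_sub_extDim (X Y : QRep Q k) :
    (homDim X Y : ℤ) - extDim X Y = Q.eulerForm X.dimVec Y.dimVec := by
  have h_rank := LinearMap.finrank_range_add_finrank_ker (differential X Y)
  have h_quot := Submodule.finrank_quotient_add_finrank (LinearMap.range (differential X Y))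
  rw [Module.finrank_pi_fintype] at h_rank h_quot
  simp only [Module.finrank_linearMap] at h_rank h_quot
  unfold homDim extDim FinQuiver.eulerForm QRep.dimVec
  zify at h_rank h_quot
  linarith

theorem homDim_eq_zero_iff : homDim X Y = 0 ↔ ∀ f : Hom X Y, f = 0 := by
  rw [homDim, Module.finrank_eq_zero_iff_of_free, subsingleton_iff_forall_eq 0]

theorem exists_ne_zero_of_homDim_ne_zero (h : homDim X Y ≠ 0) : ∃ f : Hom X Y, f ≠ 0 := by
  contrapose! h
  exact homDim_eq_zero_iff.2 h

/-- A cocycle representing the zero class of `Ext¹(X, Y)`. -/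
def IsCoboundary (ξ : ArrowMaps X Y) : Prop := ξ ∈ LinearMap.range (differential X Y)

theorem isCoboundary_zero : IsCoboundary (0 : ArrowMaps X Y) := Submodule.zero_mem _

theorem IsCoboundary.of_sub {ξ η : ArrowMaps X Y} (h : IsCoboundary (ξ - η))
    (h' : IsCoboundary η) : IsCoboundary ξ := by
  rw [← sub_add_cancel ξ η]
  exact Submodule.add_mem _ h h'

/-- The action of `u : Y → Z` on cocycles, inducing `Ext¹(X, Y) → Ext¹(X, Z)`. -/
def push (u : Hom Y Z) : ArrowMaps X Y →ₗ[k] ArrowMaps X Z where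
  toFun ξ a := (u.1 (Q.tgt a)).comp (ξ a)
  map_add' _ _ := funext fun _ => LinearMap.comp_add _ _ _
  map_smul' _ _ := funext fun _ => LinearMap.comp_smul _ _ _

/-- The action of `u : X → Y` on cocycles, inducing `Ext¹(Y, Z) → Ext¹(X, Z)`. -/
def pull (u : Hom X Y) : ArrowMaps Y Z →ₗ[k] ArrowMaps X Z where
  toFun ξ a := (ξ a).comp (u.1 (Q.src a))
  map_add' _ _ := rfl
  map_smul' _ _ := rfl

theorem push_apply (u : Hom Y Z) (ξ : ArrowMaps X Y) (a) (x) : push u ξ a x = u.1 _ (ξ a x) := rfl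

theorem pull_apply (u : Hom X Y) (ξ : ArrowMaps Y Z) (a) (x) : pull u ξ a x = ξ a (u.1 _ x) := rfl

/-- The cocycle `push u ξ` as a linear function of `u`. -/
def pushₗ (ξ : ArrowMaps X Y) : Hom Y Z →ₗ[k] ArrowMaps X Z where
  toFun u := push u ξ
  map_add' _ _ := rfl
  map_smul' _ _ := rfl

/-- The cocycle `pull u ξ` as a linear function of `u`. -/
def pullₗ (ξ : ArrowMaps Y Z) : Hom X Y →ₗ[k] ArrowMaps X Z where
  toFun u := pull u ξ
  map_add' _ _ := funext fun a => LinearMap.comp_add _ _ (ξ a)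
  map_smul' _ _ := funext fun a => LinearMap.comp_smul (ξ a) _ _

theorem push_id (ξ : ArrowMaps X Y) : push (Hom.id Y) ξ = ξ := rfl

theorem push_differential (u : Hom Y Z) (h : VertexMaps X Y) :
    push u (differential X Y h) = differential X Z (fun i => (u.1 i).comp (h i)) := by
  funext a; ext x
  simp only [push_apply, differential_apply, LinearMap.comp_apply, map_sub, u.comm]

theorem pull_differential (u : Hom X Y) (h : VertexMaps Y Z) :
    pull u (differential Y Z h) = differential X Z (fun i => (h i).comp (u.1 i)) := by
  funext a; ext x
  simp only [pull_apply, differential_apply, LinearMap.comp_apply, u.comm]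

theorem IsCoboundary.push (u : Hom Y Z) {ξ : ArrowMaps X Y} (h : IsCoboundary ξ) :
    IsCoboundary (push u ξ) := by
  obtain ⟨w, rfl⟩ := h
  exact ⟨_, (push_differential u w).symm⟩

theorem IsCoboundary.pull (u : Hom X Y) {ξ : ArrowMaps Y Z} (h : IsCoboundary ξ) :
    IsCoboundary (pull u ξ) := by
  obtain ⟨w, rfl⟩ := h
  exact ⟨_, (pull_differential u w).symm⟩

/-- The vanishing of `Ext¹(X, Y)`. -/
def ExtVanishes (X Y : QRep Q k) : Prop := ∀ ξ : ArrowMaps X Y, IsCoboundary ξ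

theorem extVanishes_iff_extDim_eq_zero : ExtVanishes X Y ↔ extDim X Y = 0 := by
  rw [extDim, Module.finrank_eq_zero_iff_of_free, Submodule.Quotient.subsingleton_iff,
    Submodule.eq_top_iff']
  rfl

end Cohomology

section ExtensionClasses

variable {Q : FinQuiver} {k : Type} [Field k] {A B C : QRep Q k}

/-- A short exact sequence `0 → A → B → C → 0` of representations. -/
structure ShortExact (A B C : QRep Q k) where
  f : Hom A B
  g : Hom B C
  inj : ∀ i, Function.Injective (f.1 i)
  surj : ∀ i, Function.Surjective (g.1 i)
  exact : ∀ i x, g.1 i x = 0 ↔ ∃ y, f.1 i y = x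

namespace ShortExact

theorem g_f_apply (s : ShortExact A B C) (i : Q.V) (x : A.carrier i) :
    s.g.1 i (s.f.1 i x) = 0 := (s.exact i _).2 ⟨x, rfl⟩

theorem g_comp_f (s : ShortExact A B C) : s.g.comp s.f = 0 := Hom.ext s.g_f_apply

/-- The cocycle `ξ` represents the class of `s`, expressed by the vanishing of the two connecting
maps `Hom(A, Y) → Ext¹(C, Y)` and `Hom(Y, C) → Ext¹(Y, A)`. -/
structure IsExtensionClass (s : ShortExact A B C) (ξ : ArrowMaps C A) : Prop where
  exists_extension_iff : ∀ (Y : QRep Q k) (u : Hom A Y),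
    (∃ w : Hom B Y, w.comp s.f = u) ↔ IsCoboundary (push u ξ)
  exists_lift_iff : ∀ (Y : QRep Q k) (u : Hom Y C),
    (∃ w : Hom Y B, s.g.comp w = u) ↔ IsCoboundary (pull u ξ)

/-- A splitting of the short exact sequence by linear maps at each vertex, not required to commute
with the arrows. -/
structure VertexSplitting (s : ShortExact A B C) where
  sec : VertexMaps C B
  ret : VertexMaps B A
  g_sec : ∀ i x, s.g.1 i (sec i x) = x
  f_ret_add : ∀ i x, s.f.1 i (ret i x) + sec i (s.g.1 i x) = x

namespace VertexSplitting

variable {s : ShortExact A B C} (v : s.VertexSplitting)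

theorem ret_f (i : Q.V) (x : A.carrier i) : v.ret i (s.f.1 i x) = x := by
  apply s.inj
  simpa only [s.g_f_apply, map_zero, add_zero] using v.f_ret_add i (s.f.1 i x)

theorem ret_sec (i : Q.V) (x : C.carrier i) : v.ret i (v.sec i x) = 0 := by
  apply s.inj
  rw [map_zero]
  simpa only [v.g_sec, add_eq_right] using v.f_ret_add i (v.sec i x)

/-- The failure of the section to commute with the arrows. -/
def cocycle : ArrowMaps C A := fun a => (v.ret (Q.tgt a)).comp ((B.map a).comp (v.sec (Q.src a)))

theorem map_sec (a : Q.A) (c : C.carrier (Q.src a)) :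
    B.map a (v.sec _ c) = s.f.1 _ (v.cocycle a c) + v.sec _ (C.map a c) := by
  have h := v.f_ret_add _ (B.map a (v.sec _ c))
  rw [s.g.comm, v.g_sec] at h
  exact h.symm

theorem exists_extension_iff {Y : QRep Q k} (u : Hom A Y) :
    (∃ w : Hom B Y, w.comp s.f = u) ↔ IsCoboundary (push u v.cocycle) := by
  constructor
  · rintro ⟨w, rfl⟩
    refine ⟨fun i => -((w.1 i).comp (v.sec i)), ?_⟩
    funext a; ext x
    have h_map := congrArg (w.1 _) (v.map_sec a x)
    rw [w.comm, map_add] at h_map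
    simp only [differential_apply, push_apply, Hom.comp_apply, LinearMap.neg_apply,
      LinearMap.comp_apply, map_neg, h_map]
    abel
  · rintro ⟨h, h_eq⟩
    have h_cocycle (a x) : u.1 _ (v.cocycle a x) = h _ (C.map a x) - Y.map a (h _ x) :=
      (LinearMap.congr_fun (congrFun h_eq a) x).symm
    refine ⟨⟨fun i => (u.1 i).comp (v.ret i) - (h i).comp (s.g.1 i),
      mem_homSubmodule.2 fun a x => ?_⟩, Hom.ext fun i x => ?_⟩
    · rw [← v.f_ret_add _ x]
      simp only [map_add, LinearMap.sub_apply, LinearMap.comp_apply, map_sub, s.g_f_apply, v.g_sec,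
        v.ret_f, v.map_sec, map_zero, ← s.f.comm, ← u.comm, v.ret_sec, h_cocycle]
      abel
    · simp only [Hom.comp_apply, LinearMap.sub_apply, LinearMap.comp_apply, v.ret_f, s.g_f_apply,
        map_zero, sub_zero]

theorem exists_lift_iff {Y : QRep Q k} (u : Hom Y C) :
    (∃ w : Hom Y B, s.g.comp w = u) ↔ IsCoboundary (pull u v.cocycle) := by
  constructor
  · rintro ⟨w, rfl⟩
    refine ⟨fun i => (v.ret i).comp (w.1 i), ?_⟩
    funext a; ext x
    simp only [differential_apply, pull_apply, Hom.comp_apply, LinearMap.comp_apply, w.comm]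
    conv_lhs => rw [← v.f_ret_add _ (w.1 _ x)]
    simp only [map_add, ← s.f.comm, v.ret_f, v.map_sec, v.ret_sec, add_zero,
      add_sub_cancel_left]
  · rintro ⟨h, h_eq⟩
    have h_cocycle (a x) : v.cocycle a (u.1 _ x) = h _ (Y.map a x) - A.map a (h _ x) :=
      (LinearMap.congr_fun (congrFun h_eq a) x).symm
    refine ⟨⟨fun i => (s.f.1 i).comp (h i) + (v.sec i).comp (u.1 i),
      mem_homSubmodule.2 fun a x => ?_⟩, Hom.ext fun i x => ?_⟩
    · simp only [LinearMap.add_apply, LinearMap.comp_apply, map_add, v.map_sec, ← s.f.comm,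
        h_cocycle, u.comm, map_sub]
      abel
    · simp only [Hom.comp_apply, LinearMap.add_apply, LinearMap.comp_apply, map_add, s.g_f_apply,
        v.g_sec, zero_add]

theorem isExtensionClass_cocycle : s.IsExtensionClass v.cocycle :=
  ⟨fun _ => v.exists_extension_iff, fun _ => v.exists_lift_iff⟩

end VertexSplitting

theorem nonempty_vertexSplitting (s : ShortExact A B C) : Nonempty s.VertexSplitting := by
  have h_sec (i) := LinearMap.exists_rightInverse_of_surjective (s.g.1 i)
    (LinearMap.range_eq_top.2 (s.surj i))
  have h_ret (i) := LinearMap.exists_leftInverse_of_injective (s.f.1 i)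
    (LinearMap.ker_eq_bot.2 (s.inj i))
  choose σ hσ using h_sec
  choose ρ hρ using h_ret
  have g_σ (i x) : s.g.1 i (σ i x) = x := LinearMap.congr_fun (hσ i) x
  refine ⟨σ, fun i => (ρ i).comp (LinearMap.id - (σ i).comp (s.g.1 i)), g_σ, fun i x => ?_⟩
  obtain ⟨y, hy⟩ : ∃ y, s.f.1 i y = x - σ i (s.g.1 i x) :=
    (s.exact i _).1 (by rw [map_sub, g_σ, sub_self])
  have ρ_f : ρ i (s.f.1 i y) = y := LinearMap.congr_fun (hρ i) y
  simp only [LinearMap.comp_apply, LinearMap.sub_apply, LinearMap.id_apply, ← hy, ρ_f]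
  rw [hy, sub_add_cancel]

theorem exists_isExtensionClass (s : ShortExact A B C) :
    ∃ ξ : ArrowMaps C A, s.IsExtensionClass ξ :=
  ⟨_, s.nonempty_vertexSplitting.some.isExtensionClass_cocycle⟩

end ShortExact

/-- The extension of `C` by `A` with cocycle `ξ`. -/
def extensionRep (ξ : ArrowMaps C A) : QRep Q k where
  carrier i := A.carrier i × C.carrier i
  map a := LinearMap.prod
    ((A.map a).comp (LinearMap.fst _ _ _) + (ξ a).comp (LinearMap.snd _ _ _))
    ((C.map a).comp (LinearMap.snd _ _ _))

/-- The short exact sequence with cocycle `ξ`. -/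
def ShortExact.ofCocycle (ξ : ArrowMaps C A) : ShortExact A (extensionRep ξ) C where
  f := ⟨fun i => LinearMap.inl k _ _, mem_homSubmodule.2 fun a x => by
    change ((A.map a x, 0) : A.carrier _ × C.carrier _) = (A.map a x + ξ a 0, C.map a 0)
    rw [map_zero, map_zero, add_zero]⟩
  g := ⟨fun i => LinearMap.snd k _ _, mem_homSubmodule.2 fun _ _ => rfl⟩
  inj i := LinearMap.inl_injective
  surj i := Prod.snd_surjective
  exact i x := ⟨fun h => ⟨x.1, Prod.ext rfl (Eq.symm h)⟩, by rintro ⟨y, rfl⟩; rfl⟩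

theorem ShortExact.isExtensionClass_ofCocycle (ξ : ArrowMaps C A) :
    (ShortExact.ofCocycle ξ).IsExtensionClass ξ := by
  let v : (ShortExact.ofCocycle ξ).VertexSplitting :=
    { sec := fun i => LinearMap.inr k _ _
      ret := fun i => LinearMap.fst k _ _
      g_sec := fun _ _ => rfl
      f_ret_add := fun i x => Prod.ext (add_zero x.1) (zero_add x.2) }
  convert v.isExtensionClass_cocycle using 1
  funext a; ext x
  change ξ a x = A.map a 0 + ξ a x
  rw [map_zero, zero_add]

end ExtensionClasses

section Dimensions

variable {Q : FinQuiver} {k : Type} [Field k] {X Y Z : QRep Q k}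

/-- Vertexwise injective homomorphisms. -/
def Hom.Injective (f : Hom X Y) : Prop := ∀ i, Function.Injective (f.1 i)

/-- Vertexwise surjective homomorphisms. -/
def Hom.Surjective (f : Hom X Y) : Prop := ∀ i, Function.Surjective (f.1 i)

theorem Hom.Injective.comp {g : Hom Y Z} {f : Hom X Y} (hg : g.Injective) (hf : f.Injective) :
    (g.comp f).Injective := fun i => (hg i).comp (hf i)

theorem Hom.Surjective.comp {g : Hom Y Z} {f : Hom X Y} (hg : g.Surjective) (hf : f.Surjective) :
    (g.comp f).Surjective := fun i => (hg i).comp (hf i)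

theorem Hom.Injective.comp_left_cancel {f : Hom Y Z} (hf : f.Injective) {u v : Hom X Y}
    (h : f.comp u = f.comp v) : u = v :=
  Hom.ext fun i x => hf i (Hom.congr h i x)

theorem Hom.Surjective.comp_right_cancel {f : Hom X Y} (hf : f.Surjective) {u v : Hom Y Z}
    (h : u.comp f = v.comp f) : u = v :=
  Hom.ext fun i x => by
    obtain ⟨y, rfl⟩ := hf i x
    exact Hom.congr h i y

theorem Hom.surjective_of_comp_eq_id {f : Hom X Y} {g : Hom Y X} (h : f.comp g = Hom.id Y) :
    f.Surjective := fun i y => ⟨g.1 i y, Hom.congr h i y⟩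

theorem Hom.injective_of_comp_eq_id {f : Hom X Y} {g : Hom Y X} (h : f.comp g = Hom.id Y) :
    g.Injective := fun i => Function.LeftInverse.injective (g := f.1 i) (Hom.congr h i)

theorem Hom.exists_inverse {f : Hom X Y} (hi : f.Injective) (hs : f.Surjective) :
    ∃ g : Hom Y X, f.comp g = Hom.id Y ∧ g.comp f = Hom.id X := by
  let e (i) : X.carrier i ≃ₗ[k] Y.carrier i := LinearEquiv.ofBijective (f.1 i) ⟨hi i, hs i⟩
  have f_symm (i y) : f.1 i ((e i).symm y) = y := (e i).apply_symm_apply y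
  refine ⟨⟨fun i => (e i).symm.toLinearMap, mem_homSubmodule.2 fun a y => ?_⟩,
    Hom.ext f_symm, Hom.ext fun i => (e i).symm_apply_apply⟩
  apply hi
  simp only [LinearEquiv.coe_coe]
  rw [f_symm, f.comm, f_symm]

/-- Zero representations. -/
def IsZero (X : QRep Q k) : Prop := ∀ i (x : X.carrier i), x = 0

/-- The total dimension `∑ i, dim Xᵢ`. -/
noncomputable def totalDim (X : QRep Q k) : ℕ := ∑ i, Module.finrank k (X.carrier i)

theorem totalDim_cast (X : QRep Q k) : (totalDim X : ℤ) = ∑ i, X.dimVec i := by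
  simp only [totalDim, QRep.dimVec, Nat.cast_sum]

theorem isZero_iff_finrank_eq_zero : IsZero X ↔ ∀ i, Module.finrank k (X.carrier i) = 0 := by
  refine forall_congr' fun i => ?_
  rw [Module.finrank_eq_zero_iff_of_free, subsingleton_iff_forall_eq 0]

theorem isZero_iff_totalDim : IsZero X ↔ totalDim X = 0 := by
  simp only [isZero_iff_finrank_eq_zero, totalDim, Finset.sum_eq_zero_iff, Finset.mem_univ,
    true_imp_iff]

theorem isZero_iff_dimVec : IsZero X ↔ X.dimVec = 0 := by
  simp only [isZero_iff_finrank_eq_zero, funext_iff, QRep.dimVec, Pi.zero_apply,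
    Int.natCast_eq_zero]

theorem Hom.eq_zero_of_isZero_left (h : IsZero X) (f : Hom X Y) : f = 0 :=
  Hom.ext fun i x => by rw [h i x, map_zero, map_zero]

theorem Hom.eq_zero_of_isZero_right (h : IsZero Y) (f : Hom X Y) : f = 0 :=
  Hom.ext fun i _ => h i _

theorem Hom.Injective.totalDim_le {f : Hom X Y} (h : f.Injective) : totalDim X ≤ totalDim Y :=
  Finset.sum_le_sum fun i _ => LinearMap.finrank_le_finrank_of_injective (h i)

theorem Hom.Surjective.totalDim_le {f : Hom X Y} (h : f.Surjective) : totalDim Y ≤ totalDim X :=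
  Finset.sum_le_sum fun i _ => (f.1 i).finrank_le_finrank_of_surjective (h i)

theorem Hom.Injective.surjective_of_totalDim_le {f : Hom X Y} (h : f.Injective)
    (hd : totalDim Y ≤ totalDim X) : f.Surjective := by
  have h_eq := (Finset.sum_eq_sum_iff_of_le
    fun i _ => LinearMap.finrank_le_finrank_of_injective (h i)).1 (le_antisymm h.totalDim_le hd)
  exact fun i => (LinearMap.injective_iff_surjective_of_finrank_eq_finrank
    (h_eq i (Finset.mem_univ i))).1 (h i)

theorem Hom.Surjective.injective_of_totalDim_le {f : Hom X Y} (h : f.Surjective)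
    (hd : totalDim X ≤ totalDim Y) : f.Injective := by
  have h_eq := (Finset.sum_eq_sum_iff_of_le
    fun i _ => (f.1 i).finrank_le_finrank_of_surjective (h i)).1 (le_antisymm h.totalDim_le hd)
  exact fun i => (LinearMap.injective_iff_surjective_of_finrank_eq_finrank
    (h_eq i (Finset.mem_univ i)).symm).2 (h i)

end Dimensions

section KernelsAndQuotients

variable {Q : FinQuiver} {k : Type} [Field k] {X Y : QRep Q k}

/-- The kernel of a homomorphism, as a subrepresentation. -/
def Hom.ker (f : Hom X Y) : SubRep X where
  mod i := LinearMap.ker (f.1 i)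
  stable a x hx := by
    rw [LinearMap.mem_ker] at *
    rw [f.comm, hx, map_zero]

/-- The range of a homomorphism, as a subrepresentation. -/
def Hom.range (f : Hom X Y) : SubRep Y where
  mod i := LinearMap.range (f.1 i)
  stable a x hx := by
    obtain ⟨y, rfl⟩ := hx
    exact ⟨_, f.comm a y⟩

/-- A homomorphism corestricted to its range. -/
def Hom.rangeRestrict (f : Hom X Y) : Hom X f.range.toRep :=
  ⟨fun i => (f.1 i).rangeRestrict, mem_homSubmodule.2 fun a x => Subtype.ext (f.comm a x)⟩

theorem Hom.rangeRestrict_surjective (f : Hom X Y) : f.rangeRestrict.Surjective :=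
  fun _ => LinearMap.surjective_rangeRestrict _

/-- The inclusion of a subrepresentation. -/
def _root_.SubRep.incl (U : SubRep X) : Hom U.toRep X :=
  ⟨fun i => (U.mod i).subtype, mem_homSubmodule.2 fun _ _ => rfl⟩

/-- The projection to the quotient by a subrepresentation. -/
def _root_.SubRep.mkQ (U : SubRep X) : Hom X (X.quotBy U) :=
  ⟨fun i => (U.mod i).mkQ, mem_homSubmodule.2 fun _ _ => rfl⟩

theorem _root_.SubRep.incl_injective (U : SubRep X) : U.incl.Injective :=
  fun _ => Subtype.val_injective

theorem _root_.SubRep.mkQ_surjective (U : SubRep X) : U.mkQ.Surjective :=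
  fun _ => Submodule.mkQ_surjective _

theorem _root_.SubRep.isZero_toRep_of_eq_bot {U : SubRep X} (h : ∀ i, U.mod i = ⊥) :
    IsZero U.toRep :=
  fun i x => Subtype.ext ((Submodule.eq_bot_iff _).1 (h i) x.1 x.2)

theorem incl_comp_rangeRestrict (f : Hom X Y) : f.range.incl.comp f.rangeRestrict = f := rfl

theorem Hom.injective_of_isZero_ker {f : Hom X Y} (h : IsZero f.ker.toRep) : f.Injective := by
  intro i
  rw [injective_iff_map_eq_zero]
  intro x hx
  exact congrArg Subtype.val (h i ⟨x, hx⟩)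

theorem Hom.eq_zero_of_isZero_range {f : Hom X Y} (h : IsZero f.range.toRep) : f = 0 :=
  Hom.ext fun i x => congrArg Subtype.val (h i ⟨f.1 i x, ⟨x, rfl⟩⟩)

/-- The sequence `0 → ker g → X → Y → 0`. -/
def ShortExact.ofSurjective (g : Hom X Y) (h : g.Surjective) : ShortExact g.ker.toRep X Y where
  f := g.ker.incl
  g := g
  inj := g.ker.incl_injective
  surj := h
  exact _ x := ⟨fun h => ⟨⟨x, h⟩, rfl⟩, by rintro ⟨y, rfl⟩; exact y.2⟩

/-- The sequence `0 → X → Y → coker f → 0`. -/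
def ShortExact.ofInjective (f : Hom X Y) (h : f.Injective) :
    ShortExact X Y (Y.quotBy f.range) where
  f := f
  g := f.range.mkQ
  inj := h
  surj := f.range.mkQ_surjective
  exact i _ := Submodule.Quotient.mk_eq_zero (f.range.mod i)

/-- The sequence `0 → ker f → X → range f → 0`. -/
def ShortExact.ofHom (f : Hom X Y) : ShortExact f.ker.toRep X f.range.toRep where
  f := f.ker.incl
  g := f.rangeRestrict
  inj := f.ker.incl_injective
  surj := f.rangeRestrict_surjective
  exact _ x := ⟨fun h => ⟨⟨x, congrArg Subtype.val h⟩, rfl⟩,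
    by rintro ⟨y, rfl⟩; exact Subtype.ext y.2⟩

end KernelsAndQuotients

section LongExactSequences

variable {Q : FinQuiver} {k : Type} [Field k] {A B C X Y Z : QRep Q k}

theorem ShortExact.dimVec (s : ShortExact A B C) : B.dimVec = A.dimVec + C.dimVec := by
  funext i
  have h_rank := LinearMap.finrank_range_add_finrank_ker (s.g.1 i)
  have h_ker : LinearMap.ker (s.g.1 i) = LinearMap.range (s.f.1 i) := by
    ext x; exact s.exact i x
  rw [LinearMap.range_eq_top.2 (s.surj i), finrank_top, h_ker,
    LinearMap.finrank_range_of_inj (s.inj i)] at h_rank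
  simp only [QRep.dimVec, Pi.add_apply]
  omega

theorem ShortExact.totalDim (s : ShortExact A B C) :
    QRep.totalDim B = QRep.totalDim A + QRep.totalDim C := by
  zify
  simp only [totalDim_cast, s.dimVec, Pi.add_apply, Finset.sum_add_distrib]

theorem ShortExact.exists_f_comp_eq (s : ShortExact A B C) (u : Hom Y B) (h : s.g.comp u = 0) :
    ∃ v : Hom Y A, s.f.comp v = u := by
  obtain ⟨v⟩ := s.nonempty_vertexSplitting
  have f_ret (i x) : s.f.1 i (v.ret i (u.1 i x)) = u.1 i x := by
    have hx : s.g.1 i (u.1 i x) = 0 := Hom.congr h i x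
    simpa only [hx, map_zero, add_zero] using v.f_ret_add i (u.1 i x)
  refine ⟨⟨fun i => (v.ret i).comp (u.1 i), mem_homSubmodule.2 fun a x => ?_⟩, Hom.ext f_ret⟩
  apply s.inj
  simp only [LinearMap.comp_apply, s.f.comm, f_ret, ← u.comm]

theorem ShortExact.exists_comp_g_eq (s : ShortExact A B C) (u : Hom B Y) (h : u.comp s.f = 0) :
    ∃ v : Hom C Y, v.comp s.g = u := by
  obtain ⟨v⟩ := s.nonempty_vertexSplitting
  have u_sec (i x) : u.1 i (v.sec i (s.g.1 i x)) = u.1 i x := by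
    have hx : u.1 i (s.f.1 i (v.ret i x)) = 0 := Hom.congr h i _
    simpa only [map_add, hx, zero_add] using congrArg (u.1 i) (v.f_ret_add i x)
  refine ⟨⟨fun i => (u.1 i).comp (v.sec i), mem_homSubmodule.2 fun a x => ?_⟩, Hom.ext u_sec⟩
  obtain ⟨y, rfl⟩ := s.surj _ x
  simp only [LinearMap.comp_apply, ← s.g.comm, u_sec, u.comm]

theorem ShortExact.homDim_to_middle (s : ShortExact A B C) (Y : QRep Q k) :
    homDim Y B = homDim Y A + Module.finrank k (LinearMap.range (s.g.postcomp Y)) := by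
  have h_ker : LinearMap.ker (s.g.postcomp Y) = LinearMap.range (s.f.postcomp Y) := by
    ext u
    refine ⟨s.exists_f_comp_eq u, ?_⟩
    rintro ⟨v, rfl⟩
    exact Hom.ext fun i x => s.g_f_apply i _
  have h_inj : Function.Injective (s.f.postcomp Y) := fun u v h =>
    Hom.Injective.comp_left_cancel s.inj h
  rw [homDim, ← LinearMap.finrank_range_add_finrank_ker (s.g.postcomp Y), h_ker,
    LinearMap.finrank_range_of_inj h_inj, add_comm, homDim]

theorem ShortExact.homDim_from_middle (s : ShortExact A B C) (Y : QRep Q k) :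
    homDim B Y = homDim C Y + Module.finrank k (LinearMap.range (s.f.precomp Y)) := by
  have h_ker : LinearMap.ker (s.f.precomp Y) = LinearMap.range (s.g.precomp Y) := by
    ext u
    refine ⟨s.exists_comp_g_eq u, ?_⟩
    rintro ⟨v, rfl⟩
    exact (congrArg v.comp s.g_comp_f).trans (Hom.comp_zero v)
  have h_inj : Function.Injective (s.g.precomp Y) := fun u v h =>
    Hom.Surjective.comp_right_cancel s.surj h
  rw [homDim, ← LinearMap.finrank_range_add_finrank_ker (s.f.precomp Y), h_ker,
    LinearMap.finrank_range_of_inj h_inj, add_comm, homDim]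

theorem ShortExact.homDim_to_middle_le (s : ShortExact A B C) (Y : QRep Q k) :
    homDim Y B ≤ homDim Y A + homDim Y C := by
  rw [s.homDim_to_middle]
  exact Nat.add_le_add_left (Submodule.finrank_le _) _

theorem ShortExact.homDim_from_middle_le (s : ShortExact A B C) (Y : QRep Q k) :
    homDim B Y ≤ homDim C Y + homDim A Y := by
  rw [s.homDim_from_middle]
  exact Nat.add_le_add_left (Submodule.finrank_le _) _

theorem finrank_range_eq_iff_surjective {V V' : Type*} [AddCommGroup V] [Module k V]
    [AddCommGroup V'] [Module k V'] [FiniteDimensional k V'] (φ : V →ₗ[k] V') :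
    Module.finrank k (LinearMap.range φ) = Module.finrank k V' ↔ Function.Surjective φ := by
  rw [← LinearMap.range_eq_top]
  exact ⟨Submodule.eq_top_of_finrank_eq, fun h => by rw [h, finrank_top]⟩

theorem ShortExact.homDim_to_middle_eq_iff (s : ShortExact A B C) (Y : QRep Q k) :
    homDim Y B = homDim Y A + homDim Y C ↔ ∀ u : Hom Y C, ∃ w : Hom Y B, s.g.comp w = u := by
  rw [s.homDim_to_middle, Nat.add_left_cancel_iff]
  exact finrank_range_eq_iff_surjective (s.g.postcomp Y)

theorem ShortExact.homDim_from_middle_eq_iff (s : ShortExact A B C) (Y : QRep Q k) :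
    homDim B Y = homDim C Y + homDim A Y ↔ ∀ u : Hom A Y, ∃ w : Hom B Y, w.comp s.f = u := by
  rw [s.homDim_from_middle, Nat.add_left_cancel_iff]
  exact finrank_range_eq_iff_surjective (s.f.precomp Y)

theorem Hom.Injective.homDim_le {f : Hom X Y} (h : f.Injective) (W : QRep Q k) :
    homDim W X ≤ homDim W Y := by
  rw [(ShortExact.ofInjective f h).homDim_to_middle]
  exact Nat.le_add_right _ _

theorem Hom.Surjective.homDim_le {f : Hom X Y} (h : f.Surjective) (W : QRep Q k) :
    homDim Y W ≤ homDim X W := by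
  rw [(ShortExact.ofSurjective f h).homDim_from_middle]
  exact Nat.le_add_right _ _

theorem push_surjective {g : Hom Y Z} (hg : g.Surjective) (ξ : ArrowMaps X Z) :
    ∃ η : ArrowMaps X Y, push g η = ξ := by
  obtain ⟨v⟩ := (ShortExact.ofSurjective g hg).nonempty_vertexSplitting
  exact ⟨fun a => (v.sec _).comp (ξ a),
    funext fun a => LinearMap.ext fun x => (v.g_sec _ (ξ a x) :)⟩

theorem pull_surjective {f : Hom X Y} (hf : f.Injective) (ξ : ArrowMaps X Z) :
    ∃ η : ArrowMaps Y Z, pull f η = ξ := by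
  obtain ⟨v⟩ := (ShortExact.ofInjective f hf).nonempty_vertexSplitting
  exact ⟨fun a => (ξ a).comp (v.ret _),
    funext fun a => LinearMap.ext fun x => (congrArg (ξ a) (v.ret_f _ x) :)⟩

theorem ExtVanishes.of_injective {f : Hom X Y} (hf : f.Injective) (h : ExtVanishes Y Z) :
    ExtVanishes X Z := by
  intro ξ
  obtain ⟨η, rfl⟩ := pull_surjective hf ξ
  exact (h η).pull f

theorem ShortExact.push_exact (s : ShortExact A B C) (ξ : ArrowMaps Y B)
    (h : IsCoboundary (push s.g ξ)) : ∃ η : ArrowMaps Y A, IsCoboundary (ξ - push s.f η) := by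
  obtain ⟨v⟩ := s.nonempty_vertexSplitting
  obtain ⟨w, hw⟩ := h
  set w' : VertexMaps Y B := fun i => (v.sec i).comp (w i)
  set ξ' := ξ - differential Y B w' with hξ'
  have h_zero : push s.g ξ' = 0 := by
    rw [map_sub, push_differential, ← hw, sub_eq_zero]
    congr 1
    funext i; ext x
    exact (v.g_sec i (w i x)).symm
  have h_push : push s.f (fun a => (v.ret _).comp (ξ' a)) = ξ' := by
    funext a; ext x
    have hx : s.g.1 _ (ξ' a x) = 0 := LinearMap.congr_fun (congrFun h_zero a) x
    change s.f.1 _ (v.ret _ (ξ' a x)) = ξ' a x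
    simpa only [hx, map_zero, add_zero] using v.f_ret_add _ (ξ' a x)
  exact ⟨_, w', by rw [h_push, hξ', sub_sub_cancel]⟩

theorem ShortExact.pull_exact (s : ShortExact A B C) (ξ : ArrowMaps B Y)
    (h : IsCoboundary (pull s.f ξ)) : ∃ η : ArrowMaps C Y, IsCoboundary (ξ - pull s.g η) := by
  obtain ⟨v⟩ := s.nonempty_vertexSplitting
  obtain ⟨w, hw⟩ := h
  set w' : VertexMaps B Y := fun i => (w i).comp (v.ret i)
  set ξ' := ξ - differential B Y w' with hξ'
  have h_zero : pull s.f ξ' = 0 := by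
    rw [map_sub, pull_differential, ← hw, sub_eq_zero]
    congr 1
    funext i; ext x
    exact congrArg (w i) (v.ret_f i x).symm
  have h_pull : pull s.g (fun a => (ξ' a).comp (v.sec _)) = ξ' := by
    funext a; ext x
    have hx : ξ' a (s.f.1 _ (v.ret _ x)) = 0 := LinearMap.congr_fun (congrFun h_zero a) _
    change ξ' a (v.sec _ (s.g.1 _ x)) = ξ' a x
    simpa only [map_add, hx, zero_add] using congrArg (ξ' a) (v.f_ret_add _ x)
  exact ⟨_, w', by rw [h_pull, hξ', sub_sub_cancel]⟩

theorem ShortExact.extVanishes_to_middle (s : ShortExact A B C) (hA : ExtVanishes Y A)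
    (hC : ExtVanishes Y C) : ExtVanishes Y B := by
  intro ξ
  obtain ⟨η, hη⟩ := s.push_exact ξ (hC _)
  exact hη.of_sub ((hA η).push _)

theorem ShortExact.extVanishes_from_middle (s : ShortExact A B C) (hA : ExtVanishes A Y)
    (hC : ExtVanishes C Y) : ExtVanishes B Y := by
  intro ξ
  obtain ⟨η, hη⟩ := s.pull_exact ξ (hA _)
  exact hη.of_sub ((hC η).pull _)

theorem ShortExact.exists_extension (s : ShortExact A B C) (h : ExtVanishes C Y) (u : Hom A Y) :
    ∃ w : Hom B Y, w.comp s.f = u := by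
  obtain ⟨ξ, hξ⟩ := s.exists_isExtensionClass
  exact (hξ.exists_extension_iff Y u).2 (h _)

end LongExactSequences

section Indecomposable

variable {Q : FinQuiver} {k : Type} [Field k] {X P : QRep Q k}

theorem Indecomposable.not_isZero (h : X.Indecomposable) : ¬ IsZero X := by
  obtain ⟨i, hi⟩ := h.1
  exact fun hX => hi.ne' (isZero_iff_finrank_eq_zero.1 hX i)

theorem Hom.isCompl_range_ker {i : Hom P X} {r : Hom X P} (h : r.comp i = Hom.id P) (j : Q.V) :
    IsCompl (i.range.mod j) (r.ker.mod j) := by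
  have r_i (x) : r.1 j (i.1 j x) = x := Hom.congr h j x
  refine IsCompl.of_eq ?_ ?_
  · rw [Submodule.eq_bot_iff]
    rintro x ⟨⟨y, rfl⟩, hx : r.1 j (i.1 j y) = 0⟩
    rw [r_i] at hx
    rw [hx, map_zero]
  · rw [Submodule.eq_top_iff']
    intro x
    refine Submodule.mem_sup.2
      ⟨i.1 j (r.1 j x), ⟨_, rfl⟩, x - i.1 j (r.1 j x), ?_, add_sub_cancel _ _⟩
    change r.1 j _ = 0
    rw [map_sub, r_i, sub_self]

theorem Indecomposable.isZero_or_bijective_of_retract (h : X.Indecomposable) (i : Hom P X)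
    (r : Hom X P) (hri : r.comp i = Hom.id P) : IsZero P ∨ (i.Surjective ∧ r.Injective) := by
  rcases h.2 i.range r.ker (Hom.isCompl_range_ker hri) with h_range | h_ker
  · have hi : i = 0 :=
      Hom.eq_zero_of_isZero_range (SubRep.isZero_toRep_of_eq_bot h_range)
    left
    intro j x
    rw [← Hom.id_apply P j x, ← hri, hi, Hom.comp_zero]
    rfl
  · have hr : r.Injective := Hom.injective_of_isZero_ker (SubRep.isZero_toRep_of_eq_bot h_ker)
    exact Or.inr ⟨fun j x => ⟨r.1 j x, hr j (Hom.congr hri j _)⟩, hr⟩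

/-- The projection onto a direct summand. -/
noncomputable def _root_.SubRep.projection (U W : SubRep X) (h : ∀ i, IsCompl (U.mod i) (W.mod i)) :
    Hom X U.toRep :=
  ⟨fun i => Submodule.projectionOnto _ _ (h i), mem_homSubmodule.2 fun a x => by
    obtain ⟨u, hu, w, hw, rfl⟩ : ∃ u ∈ U.mod (Q.src a), ∃ w ∈ W.mod (Q.src a), u + w = x := by
      rw [← Submodule.mem_sup, (h _).sup_eq_top]; trivial
    have proj_u := Submodule.projectionOnto_apply_left (h (Q.src a)) ⟨u, hu⟩
    have proj_w := Submodule.projectionOnto_apply_right (h (Q.src a)) ⟨w, hw⟩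
    have proj_map_u := Submodule.projectionOnto_apply_left (h (Q.tgt a)) ⟨_, U.stable a u hu⟩
    have proj_map_w := Submodule.projectionOnto_apply_right (h (Q.tgt a)) ⟨_, W.stable a w hw⟩
    dsimp only at proj_u proj_w proj_map_u proj_map_w
    have h_src : Submodule.projectionOnto _ _ (h (Q.src a)) (u + w) = ⟨u, hu⟩ := by
      rw [map_add, proj_u, proj_w, add_zero]
    have h_tgt : Submodule.projectionOnto _ _ (h (Q.tgt a)) (X.map a (u + w)) =
        ⟨_, U.stable a u hu⟩ := by
      rw [map_add, map_add, proj_map_u, proj_map_w, add_zero]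
    exact h_tgt.trans (congrArg (U.toRep.map a) h_src).symm⟩

theorem _root_.SubRep.projection_comp_incl (U W : SubRep X) (h : ∀ i, IsCompl (U.mod i) (W.mod i)) :
    (U.projection W h).comp U.incl = Hom.id U.toRep :=
  Hom.ext fun i => Submodule.projectionOnto_apply_left (h i)

theorem indecomposable_of_retracts (h0 : ¬ IsZero X)
    (h : ∀ (P : QRep Q k) (i : Hom P X) (r : Hom X P), r.comp i = Hom.id P →
      IsZero P ∨ i.Surjective) : X.Indecomposable := by
  constructor
  · contrapose! h0
    exact isZero_iff_finrank_eq_zero.2 fun i => Nat.le_zero.1 (h0 i)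
  · intro U W h_compl
    rcases h _ U.incl _ (U.projection_comp_incl W h_compl) with hU | h_surj
    · exact Or.inl fun i => (Submodule.eq_bot_iff _).2 fun x hx =>
        congrArg Subtype.val (hU i ⟨x, hx⟩)
    · refine Or.inr fun i => ?_
      have hU : U.mod i = ⊤ := by
        rw [Submodule.eq_top_iff']
        intro x
        obtain ⟨y, rfl⟩ := h_surj i x
        exact y.2
      simpa only [hU, top_inf_eq] using (h_compl i).inf_eq_bot

end Indecomposable
end QRep

namespace FinQuiver

section Forms

variable (Q : FinQuiver)

/-- The Euler form as a bilinear map. -/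
def eulerBilin : (Q.V → ℤ) →ₗ[ℤ] (Q.V → ℤ) →ₗ[ℤ] ℤ :=
  LinearMap.mk₂ ℤ Q.eulerForm
    (fun x x' y => by
      simp only [eulerForm, Pi.add_apply, add_mul, Finset.sum_add_distrib]; ring)
    (fun c x y => by
      simp only [eulerForm, Pi.smul_apply, smul_eq_mul, mul_sub, Finset.mul_sum, mul_assoc])
    (fun x y y' => by
      simp only [eulerForm, Pi.add_apply, mul_add, Finset.sum_add_distrib]; ring)
    (fun c x y => by
      simp only [eulerForm, Pi.smul_apply, smul_eq_mul, mul_sub, Finset.mul_sum, mul_left_comm])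

theorem eulerBilin_apply (x y : Q.V → ℤ) : Q.eulerBilin x y = Q.eulerForm x y := rfl

theorem titsForm_eq (x : Q.V → ℤ) : Q.titsForm x = Q.eulerBilin x x := rfl

/-- The symmetrized Euler form `(x, y) = e(x, y) + e(y, x)`. -/
def symEuler : (Q.V → ℤ) →ₗ[ℤ] (Q.V → ℤ) →ₗ[ℤ] ℤ := Q.eulerBilin + Q.eulerBilin.flip

theorem symEuler_apply (x y : Q.V → ℤ) :
    Q.symEuler x y = Q.eulerBilin x y + Q.eulerBilin y x := rfl

theorem symEuler_comm (x y : Q.V → ℤ) : Q.symEuler x y = Q.symEuler y x := add_comm _ _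

theorem eulerBilin_single_left (v : Q.V) (x : Q.V → ℤ) :
    Q.eulerBilin (Pi.single v 1) x = x v - ∑ a, if Q.src a = v then x (Q.tgt a) else 0 := by
  simp only [eulerBilin_apply, eulerForm, Pi.single_apply, ite_mul, one_mul, zero_mul,
    Finset.sum_ite_eq', Finset.mem_univ, if_true]

theorem eulerBilin_single_right (v : Q.V) (x : Q.V → ℤ) :
    Q.eulerBilin x (Pi.single v 1) = x v - ∑ a, if Q.tgt a = v then x (Q.src a) else 0 := by
  simp only [eulerBilin_apply, eulerForm, Pi.single_apply, mul_ite, mul_one, mul_zero,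
    Finset.sum_ite_eq', Finset.mem_univ, if_true]

theorem symEuler_single (x : Q.V → ℤ) (v : Q.V) :
    Q.symEuler x (Pi.single v 1) = 2 * x v - (∑ a, if Q.src a = v then x (Q.tgt a) else 0) -
      ∑ a, if Q.tgt a = v then x (Q.src a) else 0 := by
  rw [symEuler_apply, eulerBilin_single_left, eulerBilin_single_right]; ring

variable {Q} {δ : Q.V → ℤ}

theorem symEuler_single_of_sink {v : Q.V} (hv : ∀ a, Q.src a ≠ v) (x : Q.V → ℤ) :
    Q.symEuler x (Pi.single v 1) = 2 * x v - ∑ a : {a // Q.tgt a = v}, x (Q.src a) := by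
  rw [symEuler_single, Finset.sum_eq_zero fun a _ => if_neg (hv a), sub_zero,
    ← Finset.sum_filter, Finset.sum_subtype _ (p := fun a => Q.tgt a = v) (by simp)]

variable (Q δ) in
/-- The numerical part of the definition of an affine quiver with imaginary root `δ`. Acyclicity
is recorded as an enumeration of the vertices along which all arrows increase. -/
structure IsAffine : Prop where
  pos : ∀ i, 0 < δ i
  titsForm_nonneg : ∀ x : Q.V → ℤ, 0 ≤ Q.titsForm x
  radical_iff : ∀ x : Q.V → ℤ, (∀ y : Q.V → ℤ, Q.eulerForm x y + Q.eulerForm y x = 0) ↔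
    ∃ m : ℤ, x = m • δ
  exists_order : ∃ r : Q.V → ℕ, Function.Injective r ∧ ∀ a, r (Q.src a) < r (Q.tgt a)

namespace IsAffine

variable (h : Q.IsAffine δ)

include h

theorem symEuler_delta (y : Q.V → ℤ) : Q.symEuler δ y = 0 :=
  (h.radical_iff δ).2 ⟨1, (one_smul ℤ δ).symm⟩ y

theorem eulerBilin_delta_right (y : Q.V → ℤ) : Q.eulerBilin y δ = -Q.eulerBilin δ y := by
  linarith [h.symEuler_delta y, Q.symEuler_apply δ y]

theorem eulerBilin_delta_delta : Q.eulerBilin δ δ = 0 := by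
  linarith [h.eulerBilin_delta_right δ]

theorem eq_smul_of_symEuler_single {x : Q.V → ℤ} (hx : ∀ v, Q.symEuler x (Pi.single v 1) = 0) :
    ∃ m : ℤ, x = m • δ := by
  have symEuler_eq_zero : Q.symEuler x = 0 :=
    LinearMap.pi_ext' fun v => LinearMap.ext_ring (hx v)
  exact (h.radical_iff x).1 fun y => LinearMap.congr_fun symEuler_eq_zero y

theorem eq_smul_of_titsForm_eq_zero {x : Q.V → ℤ} (hx : Q.titsForm x = 0) :
    ∃ m : ℤ, x = m • δ := by
  refine (h.radical_iff x).1 fun y => ?_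
  change Q.symEuler x y = 0
  have linear_nonneg (n : ℤ) : 0 ≤ n * Q.symEuler x y + Q.titsForm y := by
    have := h.titsForm_nonneg (n • x + y)
    simp only [titsForm_eq, map_add, LinearMap.add_apply, map_smul, LinearMap.smul_apply,
      smul_eq_mul, symEuler_apply] at this hx ⊢
    rw [hx] at this
    linarith
  by_contra hne
  have sq_pos : 1 ≤ Q.symEuler x y * Q.symEuler x y := mul_self_pos.2 hne
  nlinarith [linear_nonneg (-(Q.titsForm y + 1) * Q.symEuler x y), h.titsForm_nonneg y]

end IsAffine

end Forms

section Reorientations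

variable (Q : FinQuiver)

/-- The quiver with the vertices and arrows of `Q` and prescribed sources and targets. -/
abbrev reorient (s t : Q.A → Q.V) : FinQuiver := { Q with src := s, tgt := t }

/-- The quiver obtained by reversing all arrows ending at `v`. -/
abbrev reverseAt (v : Q.V) : FinQuiver :=
  Q.reorient (fun a => if Q.tgt a = v then Q.tgt a else Q.src a)
    fun a => if Q.tgt a = v then Q.src a else Q.tgt a

/-- The quiver obtained by reversing all arrows from a vertex of level `< j` to a vertex of
level `≥ j`, where `r` assigns levels to the vertices. -/
abbrev reverseAcross (r : Q.V → ℕ) (j : ℕ) : FinQuiver :=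
  Q.reorient (fun a => if r (Q.src a) < j ∧ j ≤ r (Q.tgt a) then Q.tgt a else Q.src a)
    fun a => if r (Q.src a) < j ∧ j ≤ r (Q.tgt a) then Q.src a else Q.tgt a

variable {Q}

theorem symEuler_reorient {s t : Q.A → Q.V}
    (hst : ∀ a, s a = Q.src a ∧ t a = Q.tgt a ∨ s a = Q.tgt a ∧ t a = Q.src a) (x y : Q.V → ℤ) :
    (Q.reorient s t).symEuler x y = Q.symEuler x y := by
  have symEuler_eq (Q' : FinQuiver) (x y : Q'.V → ℤ) : Q'.symEuler x y = ∑ i, x i * y i +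
      ∑ i, y i * x i - ∑ a, (x (Q'.src a) * y (Q'.tgt a) + y (Q'.src a) * x (Q'.tgt a)) := by
    rw [Finset.sum_add_distrib, symEuler_apply, eulerBilin_apply, eulerBilin_apply, eulerForm,
      eulerForm]
    ring
  rw [symEuler_eq, symEuler_eq]
  congr 1
  refine Finset.sum_congr rfl fun a _ => ?_
  rcases hst a with ⟨hs, ht⟩ | ⟨hs, ht⟩ <;> simp only [hs, ht]
  ring

theorem symEuler_reverseAcross (r : Q.V → ℕ) (j : ℕ) (x y : Q.V → ℤ) :
    (Q.reverseAcross r j).symEuler x y = Q.symEuler x y :=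
  symEuler_reorient (fun a => by split_ifs <;> simp) x y

theorem eulerForm_reverseAt {v : Q.V} (hv : ∀ a, Q.src a ≠ v) {δ u u' : Q.V → ℤ}
    (hδ : Q.symEuler δ (Pi.single v 1) = 0) (hu : ∀ i, i ≠ v → u' i = u i) :
    (Q.reverseAt v).eulerForm δ u' - Q.eulerForm δ u =
      δ v * (u' v - u v + Q.symEuler u (Pi.single v 1)) := by
  have vertex_part : ∑ i, δ i * u' i - ∑ i, δ i * u i = δ v * (u' v - u v) := by
    rw [← Finset.sum_sub_distrib, Finset.sum_eq_single v (fun i _ hi => by rw [hu i hi]; ring)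
      (by simp)]
    ring
  have arrow_part : ∑ a, δ ((Q.reverseAt v).src a) * u' ((Q.reverseAt v).tgt a) -
      ∑ a, δ (Q.src a) * u (Q.tgt a) =
      δ v * (∑ a, if Q.tgt a = v then u (Q.src a) else 0) -
        u v * ∑ a, if Q.tgt a = v then δ (Q.src a) else 0 := by
    rw [Finset.mul_sum, Finset.mul_sum, ← Finset.sum_sub_distrib, ← Finset.sum_sub_distrib]
    refine Finset.sum_congr rfl fun a _ => ?_
    by_cases ha : Q.tgt a = v
    · simp only [ha, if_true]
      rw [hu _ (hv a)]
      ring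
    · simp only [ha, if_false]
      rw [hu _ ha]
      ring
  rw [symEuler_single, Finset.sum_eq_zero fun a _ => if_neg (hv a)] at hδ ⊢
  rw [eulerForm, eulerForm]
  linear_combination vertex_part - arrow_part - u v * hδ

theorem src_reverseAcross_ne {r : Q.V → ℕ} (hr' : ∀ a, r (Q.src a) < r (Q.tgt a)) (v : Q.V)
    (a : Q.A) : (Q.reverseAcross r (r v + 1)).src a ≠ v := by
  intro hav
  have := hr' a
  change (if _ then _ else _) = v at hav
  split_ifs at hav with hc <;> subst hav <;> omega

theorem reverseAt_reverseAcross {r : Q.V → ℕ} (hr : Function.Injective r)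
    (hr' : ∀ a, r (Q.src a) < r (Q.tgt a)) (v : Q.V) :
    ((Q.reverseAcross r (r v + 1)).reverseAt v).src = (Q.reverseAcross r (r v)).src ∧
      ((Q.reverseAcross r (r v + 1)).reverseAt v).tgt = (Q.reverseAcross r (r v)).tgt := by
  constructor <;> funext a <;> have increasing := hr' a <;>
    have src_eq := hr.eq_iff (a := Q.src a) (b := v) <;>
    have tgt_eq := hr.eq_iff (a := Q.tgt a) (b := v) <;> dsimp only <;> grind

end Reorientations

end FinQuiver

section LinearAlgebra

variable {k ι M N : Type*} [Field k] [AddCommGroup M] [Module k M] [AddCommGroup N] [Module k N]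

theorem isCompl_submodulePi {E : ι → Type*} [∀ i, AddCommGroup (E i)] [∀ i, Module k (E i)]
    {p q : ∀ i, Submodule k (E i)} (h : ∀ i, IsCompl (p i) (q i)) :
    IsCompl (Submodule.pi Set.univ p) (Submodule.pi Set.univ q) := by
  refine IsCompl.of_eq ?_ (eq_top_iff.2 fun x _ => ?_)
  · rw [← Submodule.iInf_comap_proj, Submodule.eq_bot_iff]
    rintro x ⟨hp, hq⟩
    funext i
    simp only [SetLike.mem_coe, Submodule.mem_iInf, Submodule.mem_comap] at hp
    exact Submodule.disjoint_def.1 (h i).disjoint _ (hp i) (hq i trivial)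
  · have split (i) : ∃ y ∈ p i, ∃ z ∈ q i, y + z = x i := by
      rw [← Submodule.mem_sup, (h i).sup_eq_top]; trivial
    choose y hy z hz hyz using split
    exact Submodule.mem_sup.2 ⟨y, fun i _ => hy i, z, fun i _ => hz i, funext hyz⟩

theorem isCompl_map_of_ker_le {f : M →ₗ[k] N} (hf : LinearMap.range f = ⊤) {p q : Submodule k M}
    (h : IsCompl p q) (hker : LinearMap.ker f ≤ LinearMap.ker f ⊓ p ⊔ LinearMap.ker f ⊓ q) :
    IsCompl (p.map f) (q.map f) := by
  refine IsCompl.of_eq ?_ ?_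
  · rw [Submodule.eq_bot_iff]
    rintro _ ⟨⟨x, hx, rfl⟩, ⟨y, hy, hxy⟩⟩
    have hsub : x - y ∈ LinearMap.ker f := by rw [LinearMap.mem_ker, map_sub, hxy, sub_self]
    obtain ⟨z, ⟨hzf, hzp⟩, w, ⟨-, hwq⟩, hzw⟩ := Submodule.mem_sup.1 (hker hsub)
    have hx_sub : x - z = y + w := by rw [sub_eq_iff_eq_add, add_assoc, add_comm w, hzw]; abel
    have hxz : x - z = 0 := Submodule.disjoint_def.1 h.disjoint _ (p.sub_mem hx hzp)
      (hx_sub ▸ q.add_mem hy hwq)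
    rw [sub_eq_zero.1 hxz]
    exact hzf
  · rw [← Submodule.map_sup, h.sup_eq_top, Submodule.map_top, hf]

theorem finrank_le_finrank_add_finrank_ker_inf [FiniteDimensional k M] [FiniteDimensional k N]
    (f : M →ₗ[k] N) {p : Submodule k M} {q : Submodule k N} (h : p ≤ q.comap f) :
    Module.finrank k p ≤ Module.finrank k q +
      Module.finrank k (p.comap (LinearMap.ker f).subtype) := by
  have hker : Module.finrank k (LinearMap.ker (f.domRestrict p)) =
      Module.finrank k (p.comap (LinearMap.ker f).subtype) := by
    rw [LinearMap.ker_domRestrict, ← Submodule.finrank_map_subtype_eq p,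
      ← Submodule.finrank_map_subtype_eq (LinearMap.ker f), Submodule.map_comap_subtype,
      Submodule.map_comap_subtype, inf_comm]
  rw [← LinearMap.finrank_range_add_finrank_ker (f.domRestrict p), hker,
    LinearMap.range_domRestrict]
  exact Nat.add_le_add_right (Submodule.finrank_mono (Submodule.map_le_iff_le_comap.2 h)) _

theorem finrank_submodulePi [Fintype ι] {E : ι → Type*} [∀ i, AddCommGroup (E i)]
    [∀ i, Module k (E i)] [∀ i, FiniteDimensional k (E i)] (p : ∀ i, Submodule k (E i)) :
    Module.finrank k (Submodule.pi Set.univ p) = ∑ i, Module.finrank k (p i) := by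
  let e : Submodule.pi Set.univ p ≃ₗ[k] ∀ i, p i :=
    { toFun x i := ⟨x.1 i, x.2 i trivial⟩
      invFun x := ⟨fun i => (x i).1, fun i _ => (x i).2⟩
      map_add' _ _ := rfl
      map_smul' _ _ := rfl }
  rw [e.finrank_eq, Module.finrank_pi_fintype]

end LinearAlgebra

namespace QRep

section Reflection

variable {Q : FinQuiver} {k : Type} [Field k] (X : QRep Q k) (v : Q.V)

/-- The identity of `Xᵢ` when `i = j`, and zero otherwise. It transports elements along equalities
of vertices that do not hold definitionally. -/
def carrierCast (i j : Q.V) : X.carrier i →ₗ[k] X.carrier j :=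
  LinearMap.proj j ∘ₗ LinearMap.single k X.carrier i

@[simp]
theorem carrierCast_self (i : Q.V) (x : X.carrier i) : carrierCast X i i x = x := by
  simp [carrierCast]

theorem forall_carrierCast_mem_iff {i i' j j' : Q.V} (hi : i = i') (hj : j' = j)
    (f : X.carrier i' →ₗ[k] X.carrier j') (U : ∀ i, Submodule k (X.carrier i)) :
    (∀ x ∈ U i, (carrierCast X j' j ∘ₗ f ∘ₗ carrierCast X i i') x ∈ U j) ↔
      ∀ x ∈ U i', f x ∈ U j' := by
  subst hi hj
  simp only [LinearMap.comp_apply, carrierCast_self]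

/-- The sum `⊕_{t(a) = v} X_{s(a)} → X_v` of the maps along all arrows ending at `v`. -/
noncomputable def inflow :
    (∀ a : {a // Q.tgt a = v}, X.carrier (Q.src a)) →ₗ[k] X.carrier v :=
  ∑ a : {a // Q.tgt a = v}, carrierCast X (Q.tgt a) v ∘ₗ X.map a ∘ₗ LinearMap.proj a

variable {X v}

theorem inflow_apply (x : ∀ a : {a // Q.tgt a = v}, X.carrier (Q.src a)) :
    inflow X v x = ∑ a : {a // Q.tgt a = v}, carrierCast X (Q.tgt a) v (X.map a (x a)) := by
  simp only [inflow, LinearMap.sum_apply, LinearMap.comp_apply, LinearMap.proj_apply]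

theorem inflow_single [DecidableEq Q.A] (a : {a // Q.tgt a = v}) (x : X.carrier (Q.src a)) :
    inflow X v (Pi.single a x) = carrierCast X (Q.tgt a) v (X.map a x) := by
  rw [inflow_apply, Finset.sum_eq_single a _ (by simp), Pi.single_eq_same]
  intro b _ hb
  rw [Pi.single_eq_of_ne hb, map_zero, map_zero]

theorem inflow_single_mem_iff [DecidableEq Q.A] (a : {a // Q.tgt a = v}) {x : X.carrier (Q.src a)}
    {U : ∀ i, Submodule k (X.carrier i)} :
    inflow X v (Pi.single a x) ∈ U v ↔ X.map a x ∈ U (Q.tgt a) := by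
  obtain ⟨a, rfl⟩ := a
  rw [inflow_single, carrierCast_self]

theorem inflow_mem {U : ∀ i, Submodule k (X.carrier i)}
    (hU : ∀ a, ∀ x ∈ U (Q.src a), X.map a x ∈ U (Q.tgt a))
    {x : ∀ a : {a // Q.tgt a = v}, X.carrier (Q.src a)} (hx : ∀ a, x a ∈ U (Q.src a.1)) :
    inflow X v x ∈ U v := by
  classical
  rw [← Finset.univ_sum_single x, map_sum]
  exact Submodule.sum_mem _ fun a _ => (inflow_single_mem_iff a).2 (hU a _ (hx a))

/-- The family of subspaces `U` of `X`, replaced at the sink `v` by the image of the subspaces at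
the neighbours of `v`. -/
noncomputable def pushToSink (v : Q.V) (U : ∀ i, Submodule k (X.carrier i)) (i : Q.V) :
    Submodule k (X.carrier i) :=
  Function.update U v ((Submodule.pi Set.univ fun a : {a // Q.tgt a = v} =>
    U (Q.src a)).map (inflow X v)) i

theorem pushToSink_self (U : ∀ i, Submodule k (X.carrier i)) : pushToSink v U v =
    (Submodule.pi Set.univ fun a : {a // Q.tgt a = v} => U (Q.src a)).map (inflow X v) :=
  Function.update_self ..

theorem pushToSink_of_ne {i : Q.V} (hi : i ≠ v) (U : ∀ i, Submodule k (X.carrier i)) :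
    pushToSink v U i = U i :=
  Function.update_of_ne hi ..

theorem pushToSink_stable (hv : ∀ a, Q.src a ≠ v) {U : ∀ i, Submodule k (X.carrier i)}
    (hU : ∀ a, Q.tgt a ≠ v → ∀ x ∈ U (Q.src a), X.map a x ∈ U (Q.tgt a)) (a : Q.A) :
    ∀ x ∈ pushToSink v U (Q.src a), X.map a x ∈ pushToSink v U (Q.tgt a) := by
  classical
  intro x hx
  rw [pushToSink_of_ne (hv a)] at hx
  by_cases ha : Q.tgt a = v
  · rw [← inflow_single_mem_iff ⟨a, ha⟩, pushToSink_self]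
    refine ⟨_, fun b _ => ?_, rfl⟩
    obtain rfl | hb := eq_or_ne b ⟨a, ha⟩
    · rwa [Pi.single_eq_same]
    · rw [Pi.single_eq_of_ne hb]
      exact Submodule.zero_mem _
  · rw [pushToSink_of_ne ha]
    exact hU a ha x hx

theorem Indecomposable.range_inflow_eq_top (hX : X.Indecomposable) (hv : ∀ a, Q.src a ≠ v)
    {i : Q.V} (hi : i ≠ v) (hXi : 0 < Module.finrank k (X.carrier i)) :
    LinearMap.range (inflow X v) = ⊤ := by
  have push_top : pushToSink v (fun i => (⊤ : Submodule k (X.carrier i))) v =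
      LinearMap.range (inflow X v) := by
    rw [pushToSink_self, Submodule.pi_top, Submodule.map_top]
  obtain ⟨W, hW⟩ := Submodule.exists_isCompl (LinearMap.range (inflow X v))
  have isCompl (j) : IsCompl (pushToSink v (fun i => (⊤ : Submodule k (X.carrier i))) j)
      (Function.update (fun i => (⊥ : Submodule k (X.carrier i))) v W j) := by
    obtain rfl | hj := eq_or_ne j v
    · rwa [push_top, Function.update_self]
    · rw [pushToSink_of_ne hj, Function.update_of_ne hj]
      exact isCompl_top_bot
  have decomposition : (∀ i, pushToSink v (fun i => (⊤ : Submodule k (X.carrier i))) i = ⊥) ∨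
      ∀ i, Function.update (fun i => (⊥ : Submodule k (X.carrier i))) v W i = ⊥ := hX.2
    ⟨pushToSink v fun i => ⊤, pushToSink_stable hv fun _ _ _ _ => Submodule.mem_top⟩
    ⟨Function.update (fun i => ⊥) v W, fun a x hx => by
      rw [Function.update_of_ne (hv a)] at hx
      rw [(Submodule.mem_bot k).1 hx, map_zero]
      exact Submodule.zero_mem _⟩ isCompl
  rcases decomposition with hbot | hbot
  · have top_eq_bot : (⊤ : Submodule k (X.carrier i)) = ⊥ := by
      rw [← hbot i, pushToSink_of_ne hi]
    rw [← finrank_top k (X.carrier i), top_eq_bot, finrank_bot] at hXi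
    exact absurd hXi (lt_irrefl 0)
  · have hWbot : W = ⊥ := by rw [← hbot v, Function.update_self]
    rw [← hW.sup_eq_top, hWbot, sup_bot_eq]

/-- The reflection of `X` at the sink `v`. Its space at `v` is the kernel of `inflow X v`, here
identified with `X_v` along `κ` so that the vertex spaces do not change. -/
noncomputable def reflect (κ : X.carrier v ≃ₗ[k] LinearMap.ker (inflow X v)) :
    QRep (Q.reverseAt v) k where
  carrier := X.carrier
  map a := if h : Q.tgt a = v then
      carrierCast X (Q.src a) _ ∘ₗ (LinearMap.proj (⟨a, h⟩ : {a // Q.tgt a = v}) ∘ₗ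
        (LinearMap.ker (inflow X v)).subtype ∘ₗ κ.toLinearMap) ∘ₗ carrierCast X _ v
    else carrierCast X (Q.tgt a) _ ∘ₗ X.map a ∘ₗ carrierCast X _ (Q.src a)

section

variable (κ : X.carrier v ≃ₗ[k] LinearMap.ker (inflow X v))

theorem reflect_stable_iff {U : ∀ i, Submodule k (X.carrier i)} :
    (∀ a, ∀ x ∈ U ((Q.reverseAt v).src a), (reflect κ).map a x ∈ U ((Q.reverseAt v).tgt a)) ↔
      (∀ a, Q.tgt a ≠ v → ∀ x ∈ U (Q.src a), X.map a x ∈ U (Q.tgt a)) ∧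
        ∀ x ∈ U v, ∀ a : {a // Q.tgt a = v}, (κ x).1 a ∈ U (Q.src a) := by
  have away (a : Q.A) (ha : Q.tgt a ≠ v) :
      (∀ x ∈ U ((Q.reverseAt v).src a), (reflect κ).map a x ∈ U ((Q.reverseAt v).tgt a)) ↔
        ∀ x ∈ U (Q.src a), X.map a x ∈ U (Q.tgt a) := by
    simp only [reflect, dif_neg ha]
    exact forall_carrierCast_mem_iff X (if_neg ha) (if_neg ha).symm _ U
  have into (a : Q.A) (ha : Q.tgt a = v) :
      (∀ x ∈ U ((Q.reverseAt v).src a), (reflect κ).map a x ∈ U ((Q.reverseAt v).tgt a)) ↔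
        ∀ x ∈ U v, (κ x).1 ⟨a, ha⟩ ∈ U (Q.src a) := by
    simp only [reflect, dif_pos ha]
    exact forall_carrierCast_mem_iff X ((if_pos ha).trans ha) (if_pos ha).symm _ U
  refine ⟨fun h => ⟨fun a ha => (away a ha).1 (h a), fun x hx a => (into a a.2).1 (h a) x hx⟩,
    fun h a => ?_⟩
  by_cases ha : Q.tgt a = v
  · exact (into a ha).2 fun x hx => h.2 x hx ⟨a, ha⟩
  · exact (away a ha).2 (h.1 a ha)

theorem isCompl_pushToSink (hsurj : LinearMap.range (inflow X v) = ⊤)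
    {U W : ∀ i, Submodule k (X.carrier i)} (h : ∀ i, IsCompl (U i) (W i))
    (hU : ∀ x ∈ U v, ∀ a : {a // Q.tgt a = v}, (κ x).1 a ∈ U (Q.src a))
    (hW : ∀ x ∈ W v, ∀ a : {a // Q.tgt a = v}, (κ x).1 a ∈ W (Q.src a)) (i : Q.V) :
    IsCompl (pushToSink v U i) (pushToSink v W i) := by
  obtain rfl | hi := eq_or_ne i v
  · rw [pushToSink_self, pushToSink_self]
    refine isCompl_map_of_ker_le hsurj (isCompl_submodulePi fun a => h _) fun x hx => ?_
    obtain ⟨z, hz⟩ := κ.surjective ⟨x, hx⟩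
    obtain ⟨y, hy, w, hw, rfl⟩ : ∃ y ∈ U i, ∃ w ∈ W i, y + w = z := by
      rw [← Submodule.mem_sup, (h i).sup_eq_top]; trivial
    refine Submodule.mem_sup.2 ⟨(κ y).1, ⟨(κ y).2, fun a _ => hU y hy a⟩, (κ w).1,
      ⟨(κ w).2, fun a _ => hW w hw a⟩, ?_⟩
    rw [map_add] at hz
    exact congrArg Subtype.val hz
  · rw [pushToSink_of_ne hi, pushToSink_of_ne hi]
    exact h i

theorem eq_bot_of_pushToSink_eq_bot (hv : ∀ a, Q.src a ≠ v) {U : ∀ i, Submodule k (X.carrier i)}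
    (hU : ∀ x ∈ U v, ∀ a : {a // Q.tgt a = v}, (κ x).1 a ∈ U (Q.src a))
    (h : ∀ i, pushToSink v U i = ⊥) (i : Q.V) : U i = ⊥ := by
  have eq_bot_of_ne {j : Q.V} (hj : j ≠ v) : U j = ⊥ := by rw [← h j, pushToSink_of_ne hj]
  obtain rfl | hi := eq_or_ne i v
  · refine (Submodule.eq_bot_iff _).2 fun x hx => κ.map_eq_zero_iff.1 (Subtype.ext ?_)
    funext a
    have := hU x hx a
    rwa [eq_bot_of_ne (hv a), Submodule.mem_bot] at this
  · exact eq_bot_of_ne hi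

theorem indecomposable_reflect (hX : X.Indecomposable) (hv : ∀ a, Q.src a ≠ v)
    (hsurj : LinearMap.range (inflow X v) = ⊤) : (reflect κ).Indecomposable := by
  refine ⟨hX.1, fun U W hUW => ?_⟩
  obtain ⟨hU, hκU⟩ := (reflect_stable_iff κ).1 U.stable
  obtain ⟨hW, hκW⟩ := (reflect_stable_iff κ).1 W.stable
  exact (hX.2 ⟨_, pushToSink_stable hv hU⟩ ⟨_, pushToSink_stable hv hW⟩
    (isCompl_pushToSink κ hsurj hUW hκU hκW)).imp
    (eq_bot_of_pushToSink_eq_bot κ hv hκU) (eq_bot_of_pushToSink_eq_bot κ hv hκW)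

end

/-- The value at the sink `v` of the reflection of a subrepresentation `U`. -/
noncomputable def kerInflow (κ : X.carrier v ≃ₗ[k] LinearMap.ker (inflow X v)) (U : SubRep X) :
    Submodule k (X.carrier v) :=
  ((Submodule.pi Set.univ fun a : {a // Q.tgt a = v} => U.mod (Q.src a)).comap
    (LinearMap.ker (inflow X v)).subtype).comap κ.toLinearMap

theorem sum_dimVec_le_finrank_kerInflow (κ : X.carrier v ≃ₗ[k] LinearMap.ker (inflow X v))
    (U : SubRep X) : ∑ a : {a // Q.tgt a = v}, U.dimVec (Q.src a) ≤
      U.dimVec v + Module.finrank k (kerInflow κ U) := by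
  have finrank_le := finrank_le_finrank_add_finrank_ker_inf (inflow X v) (q := U.mod v)
    (p := Submodule.pi Set.univ fun a : {a // Q.tgt a = v} => U.mod (Q.src a))
    fun x hx => inflow_mem U.stable fun a => hx _ trivial
  rw [finrank_submodulePi] at finrank_le
  rw [kerInflow, Submodule.comap_equiv_eq_map_symm, LinearEquiv.finrank_map_eq]
  simp only [SubRep.dimVec]
  exact_mod_cast finrank_le

theorem Indecomposable.exists_reflection (hX : X.Indecomposable) (hv : ∀ a, Q.src a ≠ v)
    (hXv : 0 < X.dimVec v) (hdim : Q.symEuler X.dimVec (Pi.single v 1) = 0) (U : SubRep X) :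
    ∃ X' : QRep (Q.reverseAt v) k, X'.Indecomposable ∧ X'.dimVec = X.dimVec ∧
      ∃ U' : SubRep X', (∀ i, i ≠ v → U'.dimVec i = U.dimVec i) ∧
        U.dimVec v - Q.symEuler U.dimVec (Pi.single v 1) ≤ U'.dimVec v := by
  rw [FinQuiver.symEuler_single_of_sink hv] at hdim ⊢
  obtain ⟨a, -, ha⟩ : ∃ a ∈ Finset.univ, X.dimVec (Q.src (a : {a // Q.tgt a = v})) ≠ 0 :=
    Finset.exists_ne_zero_of_sum_ne_zero (by omega)
  have hsurj := hX.range_inflow_eq_top hv (hv a) (Int.natCast_pos.1 (lt_of_le_of_ne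
    (Int.natCast_nonneg _) ha.symm))
  have finrank_ker : Module.finrank k (X.carrier v) =
      Module.finrank k (LinearMap.ker (inflow X v)) := by
    have rank_nullity := LinearMap.finrank_range_add_finrank_ker (inflow X v)
    rw [hsurj, finrank_top, Module.finrank_pi_fintype] at rank_nullity
    simp only [dimVec] at hdim
    zify at rank_nullity ⊢
    linarith
  let κ := LinearEquiv.ofFinrankEq _ _ finrank_ker
  obtain ⟨U', hU'v, hU'⟩ : ∃ U' : ∀ i, Submodule k (X.carrier i),
      U' v = kerInflow κ U ∧ ∀ i, i ≠ v → U' i = U.mod i :=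
    ⟨Function.update U.mod v (kerInflow κ U), Function.update_self .., fun i hi =>
      Function.update_of_ne hi ..⟩
  refine ⟨reflect κ, indecomposable_reflect κ hX hv hsurj, rfl,
    ⟨U', (reflect_stable_iff κ).2 ⟨fun a ha x hx => ?_, fun x hx a => ?_⟩⟩, fun i hi => ?_, ?_⟩
  · rw [hU' _ (hv a)] at hx
    rw [hU' _ ha]
    exact U.stable a x hx
  · rw [hU'v] at hx
    rw [hU' _ (hv a)]
    exact hx a trivial
  · change (Module.finrank k (U' i) : ℤ) = Module.finrank k (U.mod i)
    rw [hU' i hi]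
  · have := sum_dimVec_le_finrank_kerInflow κ U
    rw [← hU'v] at this
    simp only [SubRep.dimVec] at this ⊢
    change _ ≤ (Module.finrank k (U' v) : ℤ)
    linarith

end Reflection

end QRep

/-- A vector of `S` maximizing `L` has its whole orbit under `T` in `S`; the sum over a cycle of
this finite orbit is fixed by `T`. -/
theorem exists_map_eq_self_of_pos {M : Type*} [AddCommGroup M] {S : Set M} (hS : S.Finite)
    {T : M →ₗ[ℤ] M} {L : M →ₗ[ℤ] ℤ}
    (step : ∀ x ∈ S, ∃ x' ∈ S, L x ≤ L x' ∧ (L x' = L x → x' = T x)) {x : M} (hx : x ∈ S)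
    (hpos : 0 < L x) : ∃ w, T w = w ∧ 0 < L w := by
  obtain ⟨u, hu, hmax⟩ := Set.exists_max_image S L hS ⟨x, hx⟩
  have orbit (n : ℕ) : T^[n] u ∈ S ∧ L (T^[n] u) = L u := by
    induction n with
    | zero => exact ⟨hu, rfl⟩
    | succ n ih =>
      obtain ⟨y, hy, hle, heq⟩ := step _ ih.1
      have hLy : L y = L (T^[n] u) := le_antisymm ((hmax y hy).trans_eq ih.2.symm) hle
      rw [Function.iterate_succ_apply', ← heq hLy]
      exact ⟨hy, hLy.trans ih.2⟩
  obtain ⟨a, b, hab, periodic⟩ := hS.exists_lt_map_eq_of_forall_mem fun n => (orbit n).1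
  refine ⟨∑ n ∈ Finset.Ico a b, T^[n] u, ?_, ?_⟩
  · rw [map_sum, Finset.sum_congr rfl fun n _ => (Function.iterate_succ_apply' T n u).symm,
      Finset.sum_Ico_add' (fun n => T^[n] u) a b 1, Finset.sum_Ico_succ_top (by omega),
      Finset.sum_eq_sum_Ico_succ_bot hab, periodic, add_comm]
  · rw [map_sum, Finset.sum_congr rfl fun n _ => (orbit n).2]
    exact Finset.sum_pos (fun _ _ => hpos.trans_le (hmax x hx)) (Finset.nonempty_Ico.2 hab)

namespace FinQuiver

section CoxeterTransformation

variable (Q : FinQuiver) (r : Q.V → ℕ)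

/-- The composition of the simple reflections at the vertices of level `j`, provided that these
are pairwise not adjacent. -/
def levelReflection (j : ℕ) : (Q.V → ℤ) →ₗ[ℤ] (Q.V → ℤ) :=
  LinearMap.pi fun i =>
    LinearMap.proj i - if r i = j then Q.symEuler.flip (Pi.single i 1) else 0

/-- The reflections at the levels `j - 1, …, 1, 0`, in this order. When `j` exceeds all levels this
is a Coxeter transformation. -/
def descendingReflections : ℕ → (Q.V → ℤ) →ₗ[ℤ] (Q.V → ℤ)
  | 0 => LinearMap.id
  | j + 1 => descendingReflections j ∘ₗ Q.levelReflection r j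

variable {Q r}

theorem levelReflection_apply_of_eq {j : ℕ} {i : Q.V} (hi : r i = j) (u : Q.V → ℤ) :
    Q.levelReflection r j u i = u i - Q.symEuler u (Pi.single i 1) := by
  simp [levelReflection, hi]

theorem levelReflection_apply_of_ne {j : ℕ} {i : Q.V} (hi : r i ≠ j) (u : Q.V → ℤ) :
    Q.levelReflection r j u i = u i := by
  simp [levelReflection, hi]

theorem descendingReflections_apply_of_le {j : ℕ} {i : Q.V} (hi : j ≤ r i) (u : Q.V → ℤ) :
    Q.descendingReflections r j u i = u i := by
  induction j generalizing u with
  | zero => rfl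
  | succ j ih =>
    rw [descendingReflections, LinearMap.comp_apply, ih (by omega),
      levelReflection_apply_of_ne (by omega)]

theorem symEuler_single_eq_zero_of_descendingReflections {j : ℕ} {w : Q.V → ℤ}
    (hw : Q.descendingReflections r j w = w) {i : Q.V} (hi : r i < j) :
    Q.symEuler w (Pi.single i 1) = 0 := by
  induction j with
  | zero => omega
  | succ j ih =>
    rw [descendingReflections, LinearMap.comp_apply] at hw
    have fixed : Q.levelReflection r j w = w := by
      funext i
      by_cases hi : r i = j
      · rw [← descendingReflections_apply_of_le hi.ge (Q.levelReflection r j w), hw]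
      · exact levelReflection_apply_of_ne hi w
    by_cases hi' : r i = j
    · have := congrFun fixed i
      rw [levelReflection_apply_of_eq hi'] at this
      omega
    · rw [fixed] at hw
      exact ih hw (by omega)

end CoxeterTransformation

end FinQuiver

namespace QRep

section Semistability

variable {Q : FinQuiver} (k : Type) [Field k]

variable (Q) in
/-- `u` is the dimension vector of a subrepresentation of an indecomposable representation of
dimension vector `d`. -/
def IsSubDimVec (d u : Q.V → ℤ) : Prop :=
  ∃ X : QRep Q k, X.Indecomposable ∧ X.dimVec = d ∧ ∃ U : SubRep X, U.dimVec = u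

variable {k}

theorem isSubDimVec_reorient_congr {s t s' t' : Q.A → Q.V} (hs : s = s') (ht : t = t')
    {d u : Q.V → ℤ} (hu : IsSubDimVec (Q.reorient s t) k d u) :
    IsSubDimVec (Q.reorient s' t') k d u := by
  subst hs ht
  exact hu

theorem eulerForm_reorient_congr {s t s' t' : Q.A → Q.V} (hs : s = s') (ht : t = t')
    (x y : Q.V → ℤ) : (Q.reorient s t).eulerForm x y = (Q.reorient s' t').eulerForm x y := by
  subst hs ht
  rfl

variable (Q k) in
theorem finite_setOf_isSubDimVec (d : Q.V → ℤ) : {u | IsSubDimVec Q k d u}.Finite := by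
  refine (Set.finite_Icc 0 d).subset ?_
  rintro _ ⟨X, -, rfl, U, rfl⟩
  exact ⟨fun i => Int.natCast_nonneg _, fun i => Int.ofNat_le.2 (Submodule.finrank_le _)⟩

variable {δ : Q.V → ℤ} {r : Q.V → ℕ} {m : ℕ}

theorem IsSubDimVec.exists_step (h : Q.IsAffine δ) (hr : Function.Injective r)
    (hr' : ∀ a, r (Q.src a) < r (Q.tgt a)) (hm : 1 ≤ m) (j : ℕ) {u : Q.V → ℤ}
    (hu : IsSubDimVec (Q.reverseAcross r (j + 1)) k (m • δ) u) :
    ∃ u', IsSubDimVec (Q.reverseAcross r j) k (m • δ) u' ∧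
      (Q.reverseAcross r (j + 1)).eulerForm δ u ≤ (Q.reverseAcross r j).eulerForm δ u' ∧
      ((Q.reverseAcross r j).eulerForm δ u' = (Q.reverseAcross r (j + 1)).eulerForm δ u →
        u' = Q.levelReflection r j u) := by
  by_cases hj : ∃ v, r v = j
  · obtain ⟨v, rfl⟩ := hj
    obtain ⟨src_eq, tgt_eq⟩ := FinQuiver.reverseAt_reverseAcross hr hr' v
    have sink := FinQuiver.src_reverseAcross_ne hr' v
    have symEuler_eq (x) := FinQuiver.symEuler_reverseAcross (Q := Q) r (r v + 1) x (Pi.single v 1)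
    obtain ⟨X, hX, hXdim, U, rfl⟩ := hu
    obtain ⟨X', hX', hXdim', U', hU', hle⟩ := hX.exists_reflection sink
      (by rw [hXdim]; exact nsmul_pos (h.pos v) (by omega))
      (by rw [hXdim, symEuler_eq, map_nsmul, LinearMap.smul_apply, h.symEuler_delta, smul_zero]) U
    have defect_change := FinQuiver.eulerForm_reverseAt sink
      ((symEuler_eq δ).trans (h.symEuler_delta _)) hU'
    rw [symEuler_eq, eulerForm_reorient_congr src_eq tgt_eq] at defect_change
    rw [symEuler_eq] at hle
    refine ⟨U'.dimVec, isSubDimVec_reorient_congr src_eq tgt_eq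
      ⟨X', hX', hXdim'.trans hXdim, U', rfl⟩, ?_, fun heq => ?_⟩
    · nlinarith [h.pos v]
    · have excess := (mul_eq_zero.1 (defect_change.symm.trans (sub_eq_zero.2 heq))).resolve_left
        (h.pos v).ne'
      funext i
      by_cases hi : i = v
      · rw [hi, FinQuiver.levelReflection_apply_of_eq rfl]
        linarith
      · rw [FinQuiver.levelReflection_apply_of_ne (hr.ne hi), hU' i hi]
  · have ne (i) : r i ≠ j := fun hi => hj ⟨i, hi⟩
    have same (a) : (r (Q.src a) < j + 1 ∧ j + 1 ≤ r (Q.tgt a)) ↔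
        (r (Q.src a) < j ∧ j ≤ r (Q.tgt a)) := by
      have := ne (Q.src a)
      have := ne (Q.tgt a)
      omega
    have src_eq : (Q.reverseAcross r (j + 1)).src = (Q.reverseAcross r j).src := by
      simp only [same]
    have tgt_eq : (Q.reverseAcross r (j + 1)).tgt = (Q.reverseAcross r j).tgt := by
      simp only [same]
    exact ⟨u, isSubDimVec_reorient_congr src_eq tgt_eq hu,
      (eulerForm_reorient_congr src_eq tgt_eq δ u).le, fun _ => funext fun i =>
        (FinQuiver.levelReflection_apply_of_ne (ne i) u).symm⟩

theorem IsSubDimVec.exists_descent (h : Q.IsAffine δ) (hr : Function.Injective r)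
    (hr' : ∀ a, r (Q.src a) < r (Q.tgt a)) (hm : 1 ≤ m) (j : ℕ) {u : Q.V → ℤ}
    (hu : IsSubDimVec (Q.reverseAcross r j) k (m • δ) u) :
    ∃ u', IsSubDimVec (Q.reverseAcross r 0) k (m • δ) u' ∧
      (Q.reverseAcross r j).eulerForm δ u ≤ (Q.reverseAcross r 0).eulerForm δ u' ∧
      ((Q.reverseAcross r 0).eulerForm δ u' = (Q.reverseAcross r j).eulerForm δ u →
        u' = Q.descendingReflections r j u) := by
  induction j generalizing u with
  | zero => exact ⟨u, hu, le_rfl, fun _ => rfl⟩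
  | succ j ih =>
    obtain ⟨u₁, hu₁, hle₁, heq₁⟩ := hu.exists_step h hr hr' hm
    obtain ⟨u₂, hu₂, hle₂, heq₂⟩ := ih hu₁
    refine ⟨u₂, hu₂, hle₁.trans hle₂, fun heq => ?_⟩
    rw [heq₂ (by omega), heq₁ (by omega)]
    rfl

theorem IsSubDimVec.eulerBilin_nonpos (h : Q.IsAffine δ) (hm : 1 ≤ m) {u : Q.V → ℤ}
    (hu : IsSubDimVec Q k (m • δ) u) : Q.eulerBilin δ u ≤ 0 := by
  obtain ⟨r, hr, hr'⟩ := h.exists_order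
  obtain ⟨n, hn⟩ : ∃ n, ∀ i, r i < n :=
    ⟨Finset.univ.sup r + 1, fun i => Nat.lt_succ_of_le (Finset.le_sup (Finset.mem_univ i))⟩
  have unchanged (j) (hj : j = 0 ∨ j = n) :
      (Q.reverseAcross r j).src = Q.src ∧ (Q.reverseAcross r j).tgt = Q.tgt := by
    have never (a) : ¬(r (Q.src a) < j ∧ j ≤ r (Q.tgt a)) := by
      have := hn (Q.tgt a)
      omega
    simp only [never, if_false, and_self]
  obtain ⟨src_zero, tgt_zero⟩ := unchanged 0 (Or.inl rfl)
  obtain ⟨src_top, tgt_top⟩ := unchanged n (Or.inr rfl)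
  have step (x) (hx : IsSubDimVec Q k (m • δ) x) : ∃ x', IsSubDimVec Q k (m • δ) x' ∧
      Q.eulerBilin δ x ≤ Q.eulerBilin δ x' ∧ (Q.eulerBilin δ x' = Q.eulerBilin δ x →
        x' = Q.descendingReflections r n x) := by
    obtain ⟨x', hx', descent⟩ := IsSubDimVec.exists_descent h hr hr' hm n
      (isSubDimVec_reorient_congr src_top.symm tgt_top.symm hx)
    rw [eulerForm_reorient_congr src_zero tgt_zero, eulerForm_reorient_congr src_top tgt_top]
      at descent
    exact ⟨x', isSubDimVec_reorient_congr src_zero tgt_zero hx', descent⟩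
  by_contra hpos
  obtain ⟨w, hw, hw_pos⟩ := exists_map_eq_self_of_pos (finite_setOf_isSubDimVec Q k (m • δ)) step hu
    (not_le.1 hpos)
  obtain ⟨c, rfl⟩ := h.eq_smul_of_symEuler_single fun i =>
    FinQuiver.symEuler_single_eq_zero_of_descendingReflections hw (hn i)
  rw [map_smul, h.eulerBilin_delta_delta, smul_zero] at hw_pos
  exact lt_irrefl 0 hw_pos

theorem Indecomposable.eulerBilin_delta_dimVec_nonpos (h : Q.IsAffine δ) (hm : 1 ≤ m)
    {X : QRep Q k} (hX : X.Indecomposable) (hdim : X.dimVec = m • δ) (U : SubRep X) :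
    Q.eulerBilin δ U.dimVec ≤ 0 :=
  IsSubDimVec.eulerBilin_nonpos h hm ⟨X, hX, hdim, U, rfl⟩

end Semistability

end QRep

section IntegralForms

variable {R ι : Type*} [CommRing R]

theorem apply_eq_sum_mul_apply_single [Fintype ι] [DecidableEq ι] (φ : (ι → R) →ₗ[R] R)
    (x : ι → R) : φ x = ∑ i, x i * φ (Pi.single i 1) := by
  conv_lhs => rw [← Finset.univ_sum_single x, map_sum]
  refine Finset.sum_congr rfl fun i _ => ?_
  rw [← smul_eq_mul, ← map_smul, ← Pi.single_smul, smul_eq_mul, mul_one]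

theorem exists_apply_eq_smul [IsDomain R] [Finite ι] {B : (ι → R) →ₗ[R] (ι → R) →ₗ[R] R}
    (hB : ∀ x, B x = 0 → x = 0) (φ : (ι → R) →ₗ[R] R) : ∃ c : R, c ≠ 0 ∧ ∃ w, B w = c • φ := by
  classical
  have := Fintype.ofFinite ι
  let T : (ι → R) →ₗ[R] (ι → R) := LinearMap.pi fun i => B.flip (Pi.single i 1)
  have det_ne_zero : (LinearMap.toMatrix' T).det ≠ 0 := by
    intro hdet
    obtain ⟨x, hx, hTx⟩ := Matrix.exists_mulVec_eq_zero_iff.2 hdet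
    rw [LinearMap.toMatrix'_mulVec] at hTx
    exact hx (hB x (LinearMap.pi_ext' fun i => LinearMap.ext_ring (congrFun hTx i)))
  refine ⟨_, det_ne_zero,
    (LinearMap.toMatrix' T).adjugate.mulVec fun i => φ (Pi.single i 1), ?_⟩
  refine LinearMap.pi_ext' fun i => LinearMap.ext_ring ?_
  change T _ i = _
  rw [← LinearMap.toMatrix'_mulVec, Matrix.mulVec_mulVec, Matrix.mul_adjugate, Matrix.smul_mulVec,
    Matrix.one_mulVec]
  rfl

end IntegralForms

namespace FinQuiver

section Acyclicity

variable {Q : FinQuiver}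

variable (Q) in
/-- There is an arrow from `v` to `w`. -/
def HasArrow (v w : Q.V) : Prop := ∃ a, Q.src a = v ∧ Q.tgt a = w

theorem exists_path_of_transGen {v w : Q.V} (h : Relation.TransGen Q.HasArrow v w) :
    ∃ (n : ℕ) (g : ℕ → Q.A), Q.src (g 0) = v ∧ Q.tgt (g n) = w ∧
      ∀ i < n, Q.tgt (g i) = Q.src (g (i + 1)) := by
  induction h with
  | single h =>
    obtain ⟨a, hsrc, htgt⟩ := h
    exact ⟨0, fun _ => a, hsrc, htgt, by simp⟩
  | tail _ h ih =>
    obtain ⟨a, hsrc, htgt⟩ := h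
    obtain ⟨n, g, hstart, hend, hpath⟩ := ih
    refine ⟨n + 1, fun i => if i ≤ n then g i else a, by simpa using hstart, by simpa using htgt,
      fun i hi => ?_⟩
    beta_reduce
    rw [if_pos (by omega)]
    obtain rfl | hin := eq_or_ne i n
    · rw [if_neg (by omega), hend, hsrc]
    · rw [if_pos (by omega)]
      exact hpath i (by omega)

theorem Acyclic.not_transGen (hQ : Q.Acyclic) (v : Q.V) : ¬Relation.TransGen Q.HasArrow v v := by
  intro hv
  obtain ⟨n, g, hstart, hend, hpath⟩ := exists_path_of_transGen hv
  refine hQ ⟨n, fun i => g i, fun i => ?_⟩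
  change Q.tgt (g i) = Q.src (g (i + 1 : Fin (n + 1)))
  by_cases hi : i = Fin.last n
  · rw [hi, Fin.last_add_one, Fin.val_last, Fin.val_zero, hend, hstart]
  · rw [Fin.val_add_one, if_neg hi]
    exact hpath i (Fin.val_lt_last hi)

theorem Acyclic.exists_order (hQ : Q.Acyclic) :
    ∃ r : Q.V → ℕ, Function.Injective r ∧ ∀ a, r (Q.src a) < r (Q.tgt a) := by
  classical
  let ancestors (v : Q.V) : Finset Q.V := {w | Relation.TransGen Q.HasArrow w v}
  have card_lt (a : Q.A) : (ancestors (Q.src a)).card < (ancestors (Q.tgt a)).card := by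
    have hasArrow : Q.HasArrow (Q.src a) (Q.tgt a) := ⟨a, rfl, rfl⟩
    refine Finset.card_lt_card ((Finset.ssubset_iff_of_subset fun w hw => ?_).2
      ⟨Q.src a, ?_, ?_⟩)
    · exact Finset.mem_filter.2 ⟨Finset.mem_univ w, (Finset.mem_filter.1 hw).2.tail hasArrow⟩
    · exact Finset.mem_filter.2 ⟨Finset.mem_univ _, .single hasArrow⟩
    · exact fun hmem => hQ.not_transGen _ (Finset.mem_filter.1 hmem).2
  let e := Fintype.equivFin Q.V
  refine ⟨fun v => (ancestors v).card * Fintype.card Q.V + e v, fun v w hvw => ?_, fun a => ?_⟩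
  · have hmod := congrArg (· % Fintype.card Q.V) hvw
    simp only [Nat.mul_add_mod_of_lt (e _).2] at hmod
    exact e.injective (Fin.ext hmod)
  · calc (ancestors (Q.src a)).card * Fintype.card Q.V + e (Q.src a)
        < ((ancestors (Q.src a)).card + 1) * Fintype.card Q.V := by
          rw [add_one_mul]
          exact Nat.add_lt_add_left (e _).2 _
      _ ≤ (ancestors (Q.tgt a)).card * Fintype.card Q.V := Nat.mul_le_mul_right _ (card_lt a)
      _ ≤ _ := Nat.le_add_right _ _

end Acyclicity

namespace IsAffine

section ExtendingVertices

variable {Q : FinQuiver} {δ : Q.V → ℤ} (h : Q.IsAffine δ)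

include h

theorem src_ne_tgt (a : Q.A) : Q.src a ≠ Q.tgt a := by
  obtain ⟨r, -, hr⟩ := h.exists_order
  exact fun heq => (hr a).ne (congrArg r heq)

theorem eulerBilin_single_self (i : Q.V) : Q.eulerBilin (Pi.single i 1) (Pi.single i 1) = 1 := by
  rw [eulerBilin_single_left, Finset.sum_eq_zero, Pi.single_eq_same, sub_zero]
  intro a _
  split_ifs with ha
  · exact Pi.single_eq_of_ne (ha ▸ (h.src_ne_tgt a).symm) _
  · rfl

variable [Nonempty Q.V]

theorem exists_apply_delta_eq_one : ∃ φ : (Q.V → ℤ) →ₗ[ℤ] ℤ, φ δ = 1 := by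
  let I : Ideal ℤ := LinearMap.range (LinearMap.applyₗ δ : ((Q.V → ℤ) →ₗ[ℤ] ℤ) →ₗ[ℤ] ℤ)
  obtain ⟨φ, hφ⟩ : Submodule.IsPrincipal.generator I ∈ I := Submodule.IsPrincipal.generator_mem I
  have divides (i) : φ δ ∣ δ i := by
    have := (Submodule.IsPrincipal.mem_iff_generator_dvd I).1 ⟨LinearMap.proj i, rfl⟩
    rwa [← hφ] at this
  choose d hd using divides
  replace hd : δ = φ δ • d := funext hd
  obtain ⟨i⟩ := ‹Nonempty Q.V›
  have delta_ne_zero : δ ≠ 0 := fun h0 => (h.pos i).ne' (congrFun h0 i)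
  have symEuler_d : Q.symEuler d = 0 := by
    have symEuler_delta : Q.symEuler (φ δ • d) = 0 := hd ▸ LinearMap.ext h.symEuler_delta
    rw [map_smul] at symEuler_delta
    exact (smul_eq_zero.1 symEuler_delta).resolve_left fun h0 => delta_ne_zero (by
      rw [hd, h0, zero_smul])
  obtain ⟨n, rfl⟩ := h.eq_smul_of_symEuler_single fun v => LinearMap.congr_fun symEuler_d _
  rw [smul_smul] at hd
  refine ⟨n • φ, ?_⟩
  rw [LinearMap.smul_apply, smul_eq_mul, mul_comm]
  exact smul_left_injective ℤ delta_ne_zero ((one_smul ℤ δ).trans hd).symm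

theorem bddBelow_titsForm_add {φ : (Q.V → ℤ) →ₗ[ℤ] ℤ} (hφ : φ δ = 0) {N : ℤ} (hN : 0 < N) :
    ∃ b, ∀ x, b ≤ N * Q.titsForm x + φ x := by
  obtain ⟨c, hc⟩ := h.exists_apply_delta_eq_one
  have injective (x) (hx : (Q.symEuler + (LinearMap.mul ℤ ℤ).compl₁₂ c c) x = 0) : x = 0 := by
    have apply_eq (y) : Q.symEuler x y + c x * c y = 0 := LinearMap.congr_fun hx y
    have cx_eq_zero : c x = 0 := by
      have := apply_eq δ
      rwa [symEuler_comm, h.symEuler_delta, zero_add, hc, mul_one] at this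
    obtain ⟨n, rfl⟩ := h.eq_smul_of_symEuler_single (x := x) fun v => by
      simpa [cx_eq_zero] using apply_eq (Pi.single v 1)
    rw [map_smul, hc, smul_eq_mul, mul_one] at cx_eq_zero
    rw [cx_eq_zero, zero_smul]
  obtain ⟨K, hK, w, hw⟩ := exists_apply_eq_smul injective φ
  replace hw (x) : Q.symEuler w x + c w * c x = K * φ x := LinearMap.congr_fun hw x
  have cw_eq_zero : c w = 0 := by
    have := hw δ
    rwa [symEuler_comm, h.symEuler_delta, zero_add, hc, mul_one, hφ, mul_zero] at this
  refine ⟨-Q.titsForm w, fun x => ?_⟩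
  have nonneg : 0 ≤ N * K * K * (N * Q.titsForm x + φ x) + Q.titsForm w := by
    have expand := h.titsForm_nonneg ((N * K) • x + w)
    have hwx := hw x
    simp only [titsForm_eq, symEuler_apply, cw_eq_zero, map_add, LinearMap.add_apply, map_smul,
      LinearMap.smul_apply, smul_eq_mul] at expand hwx ⊢
    linear_combination expand + N * K * hwx
  have coeff_pos : 1 ≤ N * K * K := by
    rw [mul_assoc]
    exact mul_pos hN (mul_self_pos.2 hK)
  by_contra! hlt
  nlinarith [h.titsForm_nonneg w]

theorem exists_nonneg_apply_delta_eq_one :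
    ∃ φ : (Q.V → ℤ) →ₗ[ℤ] ℤ, φ δ = 1 ∧ ∀ i, 0 ≤ φ (Pi.single i 1) := by
  obtain ⟨c, hc⟩ := h.exists_apply_delta_eq_one
  let N := ∑ i, δ i
  let ψ : (Q.V → ℤ) →ₗ[ℤ] ℤ := N • c - ∑ i, LinearMap.proj i
  have hψδ : ψ δ = 0 := by simp [ψ, N, hc]
  have hψ (i) : ψ (Pi.single i 1) = N * c (Pi.single i 1) - 1 := by simp [ψ]
  have hN : 0 < N := Finset.sum_pos (fun i _ => h.pos i) Finset.univ_nonempty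
  obtain ⟨b, hb⟩ := h.bddBelow_titsForm_add hψδ hN
  obtain ⟨_, ⟨x, rfl⟩, hmin⟩ := Int.exists_least_of_bdd
    (P := fun z => ∃ x, N * Q.titsForm x + ψ x = z) ⟨b, by rintro _ ⟨x, rfl⟩; exact hb x⟩
    ⟨_, 0, rfl⟩
  refine ⟨Q.symEuler x + c, ?_, fun i => ?_⟩
  · rw [LinearMap.add_apply, symEuler_comm, h.symEuler_delta, hc, zero_add]
  · have minimal := hmin _ ⟨x + Pi.single i 1, rfl⟩
    simp only [titsForm_eq, map_add, LinearMap.add_apply, h.eulerBilin_single_self, hψ,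
      symEuler_apply] at minimal ⊢
    by_contra! hneg
    nlinarith

theorem exists_delta_eq_one : ∃ e, δ e = 1 := by
  obtain ⟨φ, hφ, nonneg⟩ := h.exists_nonneg_apply_delta_eq_one
  rw [apply_eq_sum_mul_apply_single] at hφ
  obtain ⟨i, -, hi⟩ := Finset.exists_ne_zero_of_sum_ne_zero (hφ.trans_ne one_ne_zero)
  have term_nonneg (j) : 0 ≤ δ j * φ (Pi.single j 1) := mul_nonneg (h.pos j).le (nonneg j)
  have term_le_one : δ i * φ (Pi.single i 1) ≤ 1 :=
    (Finset.single_le_sum (fun j _ => term_nonneg j) (Finset.mem_univ i)).trans_eq hφ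
  exact ⟨i, Int.eq_one_of_mul_eq_one_right (h.pos i).le
    (le_antisymm term_le_one (lt_of_le_of_ne (term_nonneg i) hi.symm))⟩

/-- Among the vertices with `δ e = 1` choose one of maximal level: if it had both an incoming and
an outgoing arrow, `(δ, eₑ) = 0` would force `δ = 1` at the target of the latter. -/
theorem exists_extending_vertex :
    ∃ e, δ e = 1 ∧ ((∀ a, Q.tgt a ≠ e) ∨ ∀ a, Q.src a ≠ e) := by
  obtain ⟨r, -, hr⟩ := h.exists_order
  obtain ⟨e₀, he₀⟩ := h.exists_delta_eq_one
  obtain ⟨e, he, hmax⟩ := Finset.exists_max_image (Finset.univ.filter fun e => δ e = 1) r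
    ⟨e₀, by simpa using he₀⟩
  simp only [Finset.mem_filter, Finset.mem_univ, true_and] at he hmax
  refine ⟨e, he, ?_⟩
  by_contra! hc
  obtain ⟨⟨b, hb⟩, ⟨a, ha⟩⟩ := hc
  have radical := h.symEuler_delta (Pi.single e 1)
  rw [symEuler_single, he] at radical
  have ite_nonneg (p : Prop) [Decidable p] (i : Q.V) : 0 ≤ if p then δ i else 0 := by
    split_ifs
    exacts [(h.pos i).le, le_rfl]
  have outgoing := Finset.single_le_sum (f := fun a => if Q.src a = e then δ (Q.tgt a) else 0)
    (fun a _ => ite_nonneg _ _) (Finset.mem_univ a)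
  have incoming := Finset.single_le_sum (f := fun a => if Q.tgt a = e then δ (Q.src a) else 0)
    (fun a _ => ite_nonneg _ _) (Finset.mem_univ b)
  simp only [ha, hb, if_true] at outgoing incoming
  have level_le := hmax (Q.tgt a) (by linarith [h.pos (Q.tgt a), h.pos (Q.src b)])
  exact (hr a).not_ge (ha ▸ level_le)

end ExtendingVertices

end IsAffine

end FinQuiver

namespace QRep

section Biproducts

variable {Q : FinQuiver} {k : Type} [Field k] {X P C : QRep Q k}

/-- A decomposition `X = P ⊕ C`, given by its inclusions and projections. -/
structure Biproduct (X P C : QRep Q k) where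
  inl : Hom P X
  inr : Hom C X
  fst : Hom X P
  snd : Hom X C
  fst_inl : fst.comp inl = Hom.id P
  snd_inr : snd.comp inr = Hom.id C
  fst_inr : fst.comp inr = 0
  snd_inl : snd.comp inl = 0
  total : inl.comp fst + inr.comp snd = Hom.id X

namespace Biproduct

/-- The decomposition with its summands exchanged. -/
def symm (s : Biproduct X P C) : Biproduct X C P where
  inl := s.inr
  inr := s.inl
  fst := s.snd
  snd := s.fst
  fst_inl := s.snd_inr
  snd_inr := s.fst_inl
  fst_inr := s.snd_inl
  snd_inl := s.fst_inr
  total := (add_comm _ _).trans s.total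

/-- The split exact sequence `0 → P → X → C → 0`. -/
def shortExact (s : Biproduct X P C) : ShortExact P X C where
  f := s.inl
  g := s.snd
  inj := Hom.injective_of_comp_eq_id s.fst_inl
  surj := Hom.surjective_of_comp_eq_id s.snd_inr
  exact j x := by
    refine ⟨fun hx => ⟨s.fst.1 j x, ?_⟩, ?_⟩
    · have decomposition : s.inl.1 j (s.fst.1 j x) + s.inr.1 j (s.snd.1 j x) = x :=
        Hom.congr s.total j x
      rwa [hx, map_zero, add_zero] at decomposition
    · rintro ⟨y, rfl⟩
      exact Hom.congr s.snd_inl j y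

theorem totalDim (s : Biproduct X P C) : QRep.totalDim X = QRep.totalDim P + QRep.totalDim C :=
  s.shortExact.totalDim

theorem homDim_to (s : Biproduct X P C) (Y : QRep Q k) :
    homDim Y X = homDim Y P + homDim Y C :=
  (s.shortExact.homDim_to_middle_eq_iff Y).2 fun u => ⟨s.inr.comp u, by
    change s.snd.comp (s.inr.comp u) = u
    rw [← Hom.comp_assoc, s.snd_inr, Hom.id_comp]⟩

theorem homDim_from (s : Biproduct X P C) (Y : QRep Q k) :
    homDim X Y = homDim C Y + homDim P Y :=
  (s.shortExact.homDim_from_middle_eq_iff Y).2 fun u => ⟨u.comp s.fst, by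
    change (u.comp s.fst).comp s.inl = u
    rw [Hom.comp_assoc, s.fst_inl, Hom.comp_id]⟩

end Biproduct

theorem exists_biproduct_of_retract {i : Hom P X} {r : Hom X P} (h : r.comp i = Hom.id P) :
    ∃ (C : QRep Q k) (s : Biproduct X P C), s.inl = i ∧ s.fst = r := by
  let s := ShortExact.ofSurjective r (Hom.surjective_of_comp_eq_id h)
  have r_f : r.comp s.f = 0 := s.g_comp_f
  obtain ⟨v, hv⟩ := s.exists_f_comp_eq (Hom.id X - i.comp r) (by
    change r.comp (Hom.id X - i.comp r) = 0
    rw [Hom.comp_sub, ← Hom.comp_assoc, h, Hom.comp_id, Hom.id_comp, sub_self])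
  refine ⟨_, ⟨i, s.f, r, v, h, ?_, r_f, ?_, ?_⟩, rfl, rfl⟩
  · apply Hom.Injective.comp_left_cancel s.inj
    rw [← Hom.comp_assoc, hv, Hom.sub_comp, Hom.comp_assoc, r_f, Hom.comp_zero, sub_zero,
      Hom.id_comp, Hom.comp_id]
  · apply Hom.Injective.comp_left_cancel s.inj
    rw [← Hom.comp_assoc, hv, Hom.sub_comp, Hom.comp_assoc, h, Hom.id_comp, Hom.comp_id, sub_self,
      Hom.comp_zero]
  · rw [hv, add_sub_cancel]

theorem Indecomposable.of_biproducts (h0 : ¬IsZero X)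
    (h : ∀ (P C : QRep Q k), Biproduct X P C → IsZero P ∨ IsZero C) : X.Indecomposable := by
  refine indecomposable_of_retracts h0 fun P i r hri => ?_
  obtain ⟨C, s, rfl, rfl⟩ := exists_biproduct_of_retract hri
  refine (h P C s).imp_right fun hC => ?_
  rw [isZero_iff_totalDim] at hC
  exact (Hom.injective_of_comp_eq_id hri).surjective_of_totalDim_le
    (by rw [s.totalDim, hC, add_zero])

/-- A retract of minimal dimension on which `j` is still visible is indecomposable. -/
theorem exists_indecomposable_retract_comp_ne_zero {Y : QRep Q k} {j : Hom Y X} (hj : j ≠ 0) :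
    ∃ (P : QRep Q k) (i : Hom P X) (r : Hom X P),
      P.Indecomposable ∧ r.comp i = Hom.id P ∧ r.comp j ≠ 0 := by
  classical
  have exists_dim : ∃ n, ∃ (P : QRep Q k) (i : Hom P X) (r : Hom X P),
      r.comp i = Hom.id P ∧ r.comp j ≠ 0 ∧ totalDim P = n :=
    ⟨_, X, Hom.id X, Hom.id X, rfl, hj, rfl⟩
  obtain ⟨P, i, r, hri, hrj, hP⟩ := Nat.find_spec exists_dim
  have minimal {P' C : QRep Q k} (s : Biproduct P P' C) (h : s.fst.comp (r.comp j) ≠ 0) :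
      totalDim P ≤ totalDim P' := by
    rw [hP]
    refine Nat.find_min' exists_dim ⟨P', i.comp s.inl, s.fst.comp r, ?_, h, rfl⟩
    rw [Hom.comp_assoc, ← Hom.comp_assoc r, hri, Hom.id_comp, s.fst_inl]
  refine ⟨P, i, r, .of_biproducts (fun hz => hrj (Hom.eq_zero_of_isZero_right hz _)) ?_, hri, hrj⟩
  intro P' C s
  have hdim := s.totalDim
  simp only [isZero_iff_totalDim]
  by_cases hfst : s.fst.comp (r.comp j) = 0
  · have hsnd : s.snd.comp (r.comp j) ≠ 0 := by
      intro hsnd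
      apply hrj
      rw [← Hom.id_comp (r.comp j), ← s.total, Hom.add_comp, Hom.comp_assoc, Hom.comp_assoc, hfst,
        hsnd, Hom.comp_zero, Hom.comp_zero, add_zero]
    have := minimal s.symm hsnd
    lia
  · have := minimal s hfst
    lia

end Biproducts

section Rank

variable {Q : FinQuiver} {k : Type} [Field k] {W X Y Z : QRep Q k}

/-- The rank of a homomorphism: the total dimension of its range. -/
noncomputable def Hom.rank (f : Hom X Y) : ℕ := totalDim f.range.toRep

theorem Hom.totalDim_ker_add_rank (f : Hom X Y) :
    totalDim f.ker.toRep + f.rank = totalDim X :=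
  (ShortExact.ofHom f).totalDim.symm

theorem Hom.rank_ne_zero {f : Hom X Y} (h : f ≠ 0) : f.rank ≠ 0 :=
  fun h0 => h (Hom.eq_zero_of_isZero_range (isZero_iff_totalDim.2 h0))

theorem Hom.rank_comp_comp_le (g : Hom Y Z) (f : Hom X Y) (e : Hom W X) :
    (g.comp (f.comp e)).rank ≤ f.rank := by
  refine Finset.sum_le_sum fun i _ => ?_
  change Module.finrank k (LinearMap.range ((g.1 i).comp ((f.1 i).comp (e.1 i)))) ≤
    Module.finrank k (LinearMap.range (f.1 i))
  rw [LinearMap.range_comp]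
  exact (Submodule.finrank_map_le _ _).trans
    (Submodule.finrank_mono (LinearMap.range_comp_le_range _ _))

theorem Hom.injective_of_totalDim_le_rank {f : Hom X Y} (h : totalDim X ≤ f.rank) :
    f.Injective := by
  refine Hom.injective_of_isZero_ker (isZero_iff_totalDim.2 ?_)
  have := f.totalDim_ker_add_rank
  lia

/-- Factor `f = ι ∘ π` through its range; by minimality `f ∘ f ≠ 0` would make `π ∘ ι` invertible,
so that the range would be a direct summand. -/
theorem Indecomposable.comp_self_eq_zero_of_rank_le (hX : X.Indecomposable) {f : Hom X X}
    (hf : f ≠ 0) (hinj : ¬f.Injective)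
    (hmin : ∀ g : Hom X X, g ≠ 0 → ¬g.Injective → f.rank ≤ g.rank) : f.comp f = 0 := by
  let ι := f.range.incl
  let π := f.rangeRestrict
  by_contra hne
  have rank_le := hmin _ hne fun hi => hinj fun i => Function.Injective.of_comp (hi i)
  have rank_le' : (f.comp f).rank ≤ (π.comp ι).rank := Hom.rank_comp_comp_le ι (π.comp ι) π
  have πι_inj : (π.comp ι).Injective := Hom.injective_of_totalDim_le_rank (rank_le.trans rank_le')
  obtain ⟨g, -, hg⟩ := Hom.exists_inverse πι_inj (πι_inj.surjective_of_totalDim_le le_rfl)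
  rcases hX.isZero_or_bijective_of_retract ι (g.comp π) hg with hz | ⟨-, hinj'⟩
  · exact hf (Hom.eq_zero_of_isZero_range hz)
  · exact hinj (Hom.Injective.comp f.range.incl_injective
      fun i => Function.Injective.of_comp (hinj' i))

/-- Let `f` be a noninjective endomorphism of minimal rank. Its range embeds into an indecomposable
summand `P` of its kernel; were `Ext¹(P, P) = 0`, the projection `ker f → P` would extend to `X`. -/
theorem Indecomposable.exists_injective_not_extVanishes (hX : X.Indecomposable)
    (h : ∃ f : Hom X X, f ≠ 0 ∧ ¬f.Injective) :
    ∃ (P : QRep Q k) (i : Hom P X), P.Indecomposable ∧ i.Injective ∧ totalDim P < totalDim X ∧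
      ¬ExtVanishes P P := by
  obtain ⟨f, ⟨hf, hinj⟩, hmin⟩ := WellFounded.has_min (measure Hom.rank).wf
    {f : Hom X X | f ≠ 0 ∧ ¬f.Injective} h
  replace hmin (g : Hom X X) (h0 : g ≠ 0) (hi : ¬g.Injective) : f.rank ≤ g.rank :=
    not_lt.1 (hmin g ⟨h0, hi⟩)
  let π := f.rangeRestrict
  let t := ShortExact.ofHom f
  obtain ⟨j, hj⟩ : ∃ j, t.f.comp j = f.range.incl :=
    t.exists_f_comp_eq _ <| f.rangeRestrict_surjective.comp_right_cancel <|
      Hom.Injective.comp_left_cancel f.range.incl_injective <|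
        hX.comp_self_eq_zero_of_rank_le hf hinj hmin
  have hj0 : j ≠ 0 := fun h0 => hf <| by
    rw [← incl_comp_rangeRestrict f, ← hj, h0, Hom.comp_zero, Hom.zero_comp]
  obtain ⟨P, i, r, hP, hri, hrj⟩ := exists_indecomposable_retract_comp_ne_zero hj0
  have ti_inj : (t.f.comp i).Injective := Hom.Injective.comp t.inj (Hom.injective_of_comp_eq_id hri)
  have dim_lt : totalDim P < totalDim X := by
    have := (Hom.injective_of_comp_eq_id hri).totalDim_le
    have := f.totalDim_ker_add_rank
    have := Hom.rank_ne_zero hf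
    lia
  refine ⟨P, t.f.comp i, hP, ti_inj, dim_lt, fun hPP => ?_⟩
  let g : Hom X X := (t.f.comp i).comp ((r.comp j).comp π)
  have hg : g ≠ 0 := fun h0 => hrj <| f.rangeRestrict_surjective.comp_right_cancel <|
    ti_inj.comp_left_cancel (h0.trans (Hom.comp_zero _).symm)
  have hg_inj : ¬g.Injective := fun hi => hinj <| Hom.Injective.comp f.range.incl_injective fun v =>
    Function.Injective.of_comp (f := fun x => ((t.f.comp i).comp (r.comp j)).1 v x) (hi v)
  have rj_inj : (r.comp j).Injective := Hom.injective_of_totalDim_le_rank <|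
    (hmin g hg hg_inj).trans (Hom.rank_comp_comp_le _ _ _)
  obtain ⟨w, hw⟩ := t.exists_extension (hPP.of_injective rj_inj) r
  rcases hX.isZero_or_bijective_of_retract (t.f.comp i) w (by rw [← Hom.comp_assoc, hw, hri])
    with hz | ⟨hsurj, -⟩
  · exact hP.not_isZero hz
  · exact dim_lt.not_ge hsurj.totalDim_le

end Rank

section Rigidity

variable {Q : FinQuiver} {k : Type} [Field k] {X Y : QRep Q k}

theorem homDim_self_eq_one_of_injective [IsAlgClosed k] (h0 : ¬IsZero X)
    (h : ∀ f : Hom X X, f ≠ 0 → f.Injective) : homDim X X = 1 := by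
  obtain ⟨i, x, hx⟩ : ∃ i, ∃ x : X.carrier i, x ≠ 0 := by
    simpa only [IsZero, not_forall, exists_prop] using h0
  have : Nontrivial (X.carrier i) := ⟨x, 0, hx⟩
  refine finrank_eq_one (Hom.id X) (fun hid => hx (Hom.congr hid i x)) fun f => ?_
  obtain ⟨c, hc⟩ := Module.End.exists_eigenvalue (f.1 i)
  obtain ⟨y, hy⟩ := hc.exists_hasEigenvector
  refine ⟨c, (sub_eq_zero.1 ?_).symm⟩
  by_contra hne
  have hker : (f - c • Hom.id X).1 i y = 0 := by
    change f.1 i y - c • y = 0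
    rw [hy.apply_eq_smul, sub_self]
  exact hy.2 ((injective_iff_map_eq_zero _).1 (h _ hne i) y hker)

theorem dimVec_nonneg (X : QRep Q k) (i : Q.V) : 0 ≤ X.dimVec i := Int.natCast_nonneg _

theorem Hom.Injective.dimVec_le {f : Hom X Y} (hf : f.Injective) (i : Q.V) :
    X.dimVec i ≤ Y.dimVec i :=
  Int.ofNat_le.2 (LinearMap.finrank_le_finrank_of_injective (hf i))

theorem ExtVanishes.of_isZero_left (h : IsZero X) : ExtVanishes X Y := fun ξ => by
  have : ξ = 0 := funext fun a => LinearMap.ext fun x => by rw [h _ x, map_zero, map_zero]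
  exact this ▸ isCoboundary_zero

/-- A nonsplit extension `0 → P → E → C → 0` has a smaller endomorphism algebra than `P ⊕ C`. -/
theorem Biproduct.extVanishes_of_homDim_le {P C : QRep Q k} (s : Biproduct X P C)
    (hmin : ∀ Y : QRep Q k, Y.dimVec = X.dimVec → homDim X X ≤ homDim Y Y) : ExtVanishes C P := by
  intro ξ
  let t := ShortExact.ofCocycle ξ
  have h_le := hmin (extensionRep ξ) (by rw [t.dimVec, s.shortExact.dimVec])
  by_contra hξ
  have h_ne : homDim (extensionRep ξ) P ≠ homDim C P + homDim P P := by
    intro h_eq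
    have h_lift := (t.homDim_from_middle_eq_iff P).1 h_eq (Hom.id P)
    rw [(ShortExact.isExtensionClass_ofCocycle ξ).1 P (Hom.id P), push_id] at h_lift
    exact hξ h_lift
  have := t.homDim_from_middle_le P
  have := t.homDim_from_middle_le C
  have := t.homDim_to_middle_le (extensionRep ξ)
  have := s.homDim_to X
  have := s.homDim_from P
  have := s.homDim_from C
  lia

/-- The representation with spaces `k ^ d i` and zero maps. -/
def zeroMapsRep (k : Type) [Field k] (d : Q.V → ℕ) : QRep Q k where
  carrier i := Fin (d i) → k
  map _ := 0

theorem zeroMapsRep_dimVec (d : Q.V → ℕ) : (zeroMapsRep k d).dimVec = fun i => (d i : ℤ) :=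
  funext fun i => congrArg _ (Module.finrank_fin_fun k (n := d i))

theorem exists_dimVec_eq_and_homDim_le {θ : Q.V → ℤ} (hθ : ∀ i, 0 ≤ θ i) :
    ∃ X : QRep Q k, X.dimVec = θ ∧
      ∀ Y : QRep Q k, Y.dimVec = X.dimVec → homDim X X ≤ homDim Y Y := by
  obtain ⟨X, hX, hmin⟩ := WellFounded.has_min (measure fun X : QRep Q k => homDim X X).wf
    {X | X.dimVec = θ} ⟨zeroMapsRep k fun i => (θ i).toNat, by
      simp only [Set.mem_ofPred_eq, zeroMapsRep_dimVec, Int.toNat_of_nonneg (hθ _)]⟩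
  exact ⟨X, hX, fun Y hY => not_lt.1 (hmin Y (hY.trans hX))⟩

variable {δ : Q.V → ℤ} (h : Q.IsAffine δ) {e : Q.V}

include h

theorem _root_.FinQuiver.IsAffine.titsForm_pos_of_apply_eq_zero {x : Q.V → ℤ} (hx : x e = 0)
    (hx0 : x ≠ 0) : 0 < Q.titsForm x := by
  refine (h.titsForm_nonneg x).lt_of_ne' fun h0 => hx0 ?_
  obtain ⟨c, rfl⟩ := h.eq_smul_of_titsForm_eq_zero h0
  rw [(mul_eq_zero.1 hx).resolve_right (h.pos e).ne', zero_smul]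

variable [IsAlgClosed k]

theorem Indecomposable.extVanishes_self_of_dimVec_eq_zero (hX : X.Indecomposable)
    (he : X.dimVec e = 0) : ExtVanishes X X := by
  induction hn : totalDim X using Nat.strong_induction_on generalizing X with
  | _ n ih =>
  by_cases hbrick : ∀ f : Hom X X, f ≠ 0 → f.Injective
  · have hhom := homDim_self_eq_one_of_injective hX.not_isZero hbrick
    have heuler := homDim_sub_extDim X X
    have hpos := h.titsForm_pos_of_apply_eq_zero he (mt isZero_iff_dimVec.2 hX.not_isZero)
    rw [FinQuiver.titsForm] at hpos
    rw [extVanishes_iff_extDim_eq_zero]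
    lia
  · push Not at hbrick
    obtain ⟨P, i, hP, hi, hlt, hext⟩ := hX.exists_injective_not_extVanishes hbrick
    exact absurd (ih _ (hn ▸ hlt) hP (le_antisymm (he ▸ hi.dimVec_le e) (dimVec_nonneg P e)) rfl)
      hext

theorem extVanishes_retract_of_homDim_le (he : X.dimVec e = 0)
    (hmin : ∀ Y : QRep Q k, Y.dimVec = X.dimVec → homDim X X ≤ homDim Y Y)
    {P : QRep Q k} {i : Hom P X} {r : Hom X P} (hri : r.comp i = Hom.id P) : ExtVanishes P X := by
  induction hn : totalDim P using Nat.strong_induction_on generalizing P with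
  | _ n ih =>
  by_cases hz : IsZero P
  · exact .of_isZero_left hz
  by_cases hP : P.Indecomposable
  · obtain ⟨C, s, rfl, rfl⟩ := exists_biproduct_of_retract hri
    have hPe : P.dimVec e = 0 :=
      le_antisymm (he ▸ (Hom.injective_of_comp_eq_id hri).dimVec_le e) (dimVec_nonneg P e)
    exact s.shortExact.extVanishes_to_middle (hP.extVanishes_self_of_dimVec_eq_zero h hPe)
      (s.symm.extVanishes_of_homDim_le hmin)
  · obtain ⟨A, C, s, hA, hC⟩ : ∃ A C, ∃ _ : Biproduct P A C, ¬IsZero A ∧ ¬IsZero C := by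
      by_contra! hc
      exact hP (.of_biproducts hz fun A C s => or_iff_not_imp_left.2 (hc A C s))
    rw [isZero_iff_totalDim] at hA hC
    have hdim := s.totalDim
    have of_summand {A C : QRep Q k} (s : Biproduct P A C) (hlt : totalDim A < n) :
        ExtVanishes A X := by
      refine ih _ hlt (i := i.comp s.inl) (r := s.fst.comp r) ?_ rfl
      rw [Hom.comp_assoc, ← Hom.comp_assoc r, hri, Hom.id_comp, s.fst_inl]
    exact s.shortExact.extVanishes_from_middle (of_summand s (by lia)) (of_summand s.symm (by lia))

theorem exists_dimVec_eq_and_extVanishes {θ : Q.V → ℤ} (hθ : ∀ i, 0 ≤ θ i) (he : θ e = 0) :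
    ∃ X : QRep Q k, X.dimVec = θ ∧ ExtVanishes X X := by
  obtain ⟨X, rfl, hmin⟩ := exists_dimVec_eq_and_homDim_le (k := k) hθ
  exact ⟨X, rfl, extVanishes_retract_of_homDim_le h he hmin (Hom.id_comp (Hom.id X))⟩

end Rigidity

section IsomorphismTheorems

variable {Q : FinQuiver} {k : Type} [Field k] {A B C D K S X Y Z : QRep Q k}

theorem Hom.Injective.of_comp {g : Hom Y Z} {f : Hom X Y} (h : (g.comp f).Injective) :
    f.Injective := fun i => Function.Injective.of_comp (h i)

theorem Hom.Surjective.of_comp {g : Hom Y Z} {f : Hom X Y} (h : (g.comp f).Surjective) :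
    g.Surjective := fun i => Function.Surjective.of_comp (h i)

theorem Hom.Injective.isZero {f : Hom X Y} (hf : f.Injective) (h : IsZero Y) : IsZero X :=
  fun i _ => hf i ((h i _).trans (h i _).symm)

theorem Hom.Surjective.isZero {f : Hom X Y} (hf : f.Surjective) (h : IsZero X) : IsZero Y :=
  fun i y => by
    obtain ⟨x, rfl⟩ := hf i y
    rw [h i x, map_zero]

namespace ShortExact

theorem g_injective (s : ShortExact A B C) (h : IsZero A) : s.g.Injective :=
  Hom.Surjective.injective_of_totalDim_le s.surj (by
    rw [s.totalDim, isZero_iff_totalDim.1 h, zero_add])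

theorem f_surjective (s : ShortExact A B C) (h : IsZero C) : s.f.Surjective :=
  Hom.Injective.surjective_of_totalDim_le s.inj (by
    rw [s.totalDim, isZero_iff_totalDim.1 h, add_zero])

theorem exists_of_injective {f : Hom A B} (h : f.Injective) :
    ∃ (C : QRep Q k) (s : ShortExact A B C), s.f = f := ⟨_, ofInjective f h, rfl⟩

/-- Transport of a short exact sequence along an isomorphism of the middle terms. -/
def congrMiddle (s : ShortExact A B C) {f : Hom B X} {g : Hom X B} (hfg : f.comp g = Hom.id X)
    (hgf : g.comp f = Hom.id B) : ShortExact A X C where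
  f := f.comp s.f
  g := s.g.comp g
  inj := Hom.Injective.comp (Hom.injective_of_comp_eq_id hgf) s.inj
  surj := Hom.Surjective.comp s.surj (Hom.surjective_of_comp_eq_id hgf)
  exact i x := by
    change s.g.1 i (g.1 i x) = 0 ↔ ∃ y, f.1 i (s.f.1 i y) = x
    rw [s.exact]
    refine exists_congr fun y => ⟨fun hy => ?_, fun hy => ?_⟩
    · exact hy ▸ Hom.congr hfg i x
    · exact hy ▸ (Hom.congr hgf i _).symm

/-- Transport of a short exact sequence along an isomorphism of the right terms. -/
def congrRight (s : ShortExact A B C) {f : Hom C X} (hi : f.Injective) (hs : f.Surjective) :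
    ShortExact A B X where
  f := s.f
  g := f.comp s.g
  inj := s.inj
  surj := Hom.Surjective.comp hs s.surj
  exact i x := by
    change f.1 i (s.g.1 i x) = 0 ↔ _
    rw [← s.exact, map_eq_zero_iff _ (hi i)]

theorem g_comp_f_surjective (s : ShortExact A X C) (t : ShortExact B X D)
    (h : (s.g.comp t.f).Surjective) : (t.g.comp s.f).Surjective := by
  intro i d
  obtain ⟨x, rfl⟩ := t.surj i d
  obtain ⟨b, hb⟩ := h i (s.g.1 i x)
  obtain ⟨a, ha⟩ := (s.exact i (x - t.f.1 i b)).1 (by rw [map_sub, sub_eq_zero]; exact hb.symm)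
  refine ⟨a, ?_⟩
  change t.g.1 i (s.f.1 i a) = _
  rw [ha, map_sub, t.g_f_apply, sub_zero]

/-- The second isomorphism theorem: `A / (A ∩ B) ≅ X / B` if `A + B = X`. -/
theorem nonempty_of_g_comp_f (s : ShortExact A X C) (t : ShortExact B X D) (p : ShortExact K B C)
    (hp : p.g = s.g.comp t.f) : Nonempty (ShortExact K A D) := by
  obtain ⟨v, hv⟩ := s.exists_f_comp_eq (t.f.comp p.f) (by
    rw [← Hom.comp_assoc, ← hp, p.g_comp_f])
  refine ⟨⟨v, t.g.comp s.f, ?_, ?_, fun i x => ?_⟩⟩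
  · exact Hom.Injective.of_comp (g := s.f) (hv ▸ Hom.Injective.comp t.inj p.inj)
  · exact g_comp_f_surjective s t (hp ▸ p.surj)
  · change t.g.1 i (s.f.1 i x) = 0 ↔ _
    rw [t.exact]
    constructor
    · rintro ⟨b, hb⟩
      obtain ⟨y, rfl⟩ := (p.exact i b).1 (by
        rw [hp]
        change s.g.1 i (t.f.1 i b) = 0
        rw [hb, s.g_f_apply])
      exact ⟨y, s.inj i ((Hom.congr hv i y).trans hb)⟩
    · rintro ⟨y, rfl⟩
      exact ⟨p.f.1 i y, (Hom.congr hv i y).symm⟩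

/-- The third isomorphism theorem: for `A ⊆ K ⊆ X`, the sequence
`0 → K / A → X / A → X / K → 0`. -/
theorem exists_quotient (t : ShortExact K X Y) (p : ShortExact A K S) (r : ShortExact A X Z)
    (h : r.f = t.f.comp p.f) :
    ∃ s : ShortExact S Z Y, s.f.comp p.g = r.g.comp t.f ∧ s.g.comp r.g = t.g := by
  obtain ⟨v, hv⟩ := p.exists_comp_g_eq (r.g.comp t.f) (by rw [Hom.comp_assoc, ← h, r.g_comp_f])
  obtain ⟨w, hw⟩ := r.exists_comp_g_eq t.g (by
    rw [h, ← Hom.comp_assoc, t.g_comp_f, Hom.zero_comp])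
  have hv' (i x) : v.1 i (p.g.1 i x) = r.g.1 i (t.f.1 i x) := Hom.congr hv i x
  have hw' (i x) : w.1 i (r.g.1 i x) = t.g.1 i x := Hom.congr hw i x
  have hr (i a) : r.f.1 i a = t.f.1 i (p.f.1 i a) := Hom.congr h i a
  refine ⟨⟨v, w, fun i => ?_, fun i y => ?_, fun i z => ?_⟩, hv, hw⟩
  · rw [injective_iff_map_eq_zero]
    intro s hs
    obtain ⟨x, rfl⟩ := p.surj i s
    rw [hv', r.exact] at hs
    obtain ⟨a, ha⟩ := hs
    rw [p.exact]
    exact ⟨a, t.inj i ((hr i a).symm.trans ha)⟩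
  · obtain ⟨x, rfl⟩ := t.surj i y
    exact ⟨_, hw' i x⟩
  · obtain ⟨x, rfl⟩ := r.surj i z
    rw [hw', t.exact]
    constructor
    · rintro ⟨y, rfl⟩
      exact ⟨_, hv' i y⟩
    · rintro ⟨s, hs⟩
      obtain ⟨y, rfl⟩ := p.surj i s
      rw [hv'] at hs
      obtain ⟨a, ha⟩ := (r.exact i (x - t.f.1 i y)).1 (by rw [map_sub, hs, sub_self])
      refine ⟨p.f.1 i a + y, ?_⟩
      rw [map_add, ← hr, ha, sub_add_cancel]

/-- The preimage `K ⊆ X` of `S ⊆ C` under `X → C`, with kernel `A`. -/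
theorem exists_preimage (t : ShortExact A X C) (p : ShortExact S C D) (q : ShortExact K X D)
    (h : q.g = p.g.comp t.g) :
    ∃ s : ShortExact A K S, q.f.comp s.f = t.f ∧ p.f.comp s.g = t.g.comp q.f := by
  obtain ⟨w, hw⟩ := q.exists_f_comp_eq t.f (by rw [h, Hom.comp_assoc, t.g_comp_f, Hom.comp_zero])
  obtain ⟨v, hv⟩ := p.exists_f_comp_eq (t.g.comp q.f) (by rw [← Hom.comp_assoc, ← h, q.g_comp_f])
  have hw' (i x) : q.f.1 i (w.1 i x) = t.f.1 i x := Hom.congr hw i x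
  have hv' (i x) : p.f.1 i (v.1 i x) = t.g.1 i (q.f.1 i x) := Hom.congr hv i x
  refine ⟨⟨w, v, ?_, fun i c => ?_, fun i x => ?_⟩, hw, hv⟩
  · exact Hom.Injective.of_comp (g := q.f) (hw ▸ t.inj)
  · obtain ⟨b, hb⟩ := t.surj i (p.f.1 i c)
    obtain ⟨x, rfl⟩ := (q.exact i b).1 (by
      rw [h]
      change p.g.1 i (t.g.1 i b) = 0
      rw [hb, p.g_f_apply])
    exact ⟨x, p.inj i (by rw [hv', hb])⟩
  · rw [← map_eq_zero_iff _ (p.inj i), hv', t.exact]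
    exact exists_congr fun y => by rw [← hw', (q.inj i).eq_iff]

end ShortExact

end IsomorphismTheorems

section Semistability

variable {Q : FinQuiver} {k : Type} [Field k] {δ : Q.V → ℤ} {A B C S X Y : QRep Q k}

/-- Semistability for the defect `e(δ, ·)`, at slope `0`. -/
structure IsSemistable (δ : Q.V → ℤ) (X : QRep Q k) : Prop where
  defect_eq_zero : Q.eulerBilin δ X.dimVec = 0
  defect_sub_nonpos : ∀ {A : QRep Q k} {u : Hom A X}, u.Injective → Q.eulerBilin δ A.dimVec ≤ 0

theorem ShortExact.defect (s : ShortExact A B C) :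
    Q.eulerBilin δ B.dimVec = Q.eulerBilin δ A.dimVec + Q.eulerBilin δ C.dimVec := by
  rw [s.dimVec, map_add]

theorem IsZero.isSemistable (h : IsZero X) : IsSemistable δ X where
  defect_eq_zero := by rw [isZero_iff_dimVec.1 h, map_zero]
  defect_sub_nonpos hu := by rw [isZero_iff_dimVec.1 (hu.isZero h), map_zero]

namespace IsSemistable

theorem defect_quotient_nonneg (hX : IsSemistable δ X) {g : Hom X C} (hg : g.Surjective) :
    0 ≤ Q.eulerBilin δ C.dimVec := by
  let s := ShortExact.ofSurjective g hg
  have := s.defect (δ := δ)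
  have := hX.defect_sub_nonpos s.inj
  have := hX.defect_eq_zero
  lia

theorem of_injective (hX : IsSemistable δ X) {u : Hom A X} (hu : u.Injective)
    (h0 : Q.eulerBilin δ A.dimVec = 0) : IsSemistable δ A :=
  ⟨h0, fun hv => hX.defect_sub_nonpos (hu.comp hv)⟩

theorem of_surjective (hX : IsSemistable δ X) {g : Hom X C} (hg : g.Surjective)
    (h0 : Q.eulerBilin δ C.dimVec = 0) : IsSemistable δ C := by
  refine ⟨h0, fun {B v} hv => ?_⟩
  let s := ShortExact.ofInjective v hv
  have := s.defect (δ := δ)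
  have := hX.defect_quotient_nonneg (Hom.Surjective.comp s.surj hg)
  lia

theorem defect_range (hX : IsSemistable δ X) (hY : IsSemistable δ Y) (f : Hom X Y) :
    Q.eulerBilin δ f.range.toRep.dimVec = 0 :=
  le_antisymm (hY.defect_sub_nonpos f.range.incl_injective)
    (hX.defect_quotient_nonneg f.rangeRestrict_surjective)

theorem defect_ker (hX : IsSemistable δ X) (hY : IsSemistable δ Y) (f : Hom X Y) :
    Q.eulerBilin δ f.ker.toRep.dimVec = 0 := by
  have := (ShortExact.ofHom f).defect (δ := δ)
  have := hX.defect_eq_zero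
  have := hX.defect_range hY f
  lia

theorem left (s : ShortExact A B C) (hB : IsSemistable δ B) (hC : IsSemistable δ C) :
    IsSemistable δ A := by
  have := s.defect (δ := δ)
  have := hB.defect_eq_zero
  have := hC.defect_eq_zero
  exact hB.of_injective s.inj (by lia)

theorem right (s : ShortExact A B C) (hA : IsSemistable δ A) (hB : IsSemistable δ B) :
    IsSemistable δ C := by
  have := s.defect (δ := δ)
  have := hA.defect_eq_zero
  have := hB.defect_eq_zero
  exact hB.of_surjective s.surj (by lia)

theorem middle (s : ShortExact A B C) (hA : IsSemistable δ A) (hC : IsSemistable δ C) :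
    IsSemistable δ B := by
  refine ⟨by rw [s.defect, hA.defect_eq_zero, hC.defect_eq_zero, add_zero], fun {U u} hu => ?_⟩
  let t := ShortExact.ofHom (s.g.comp u)
  obtain ⟨v, hv⟩ := s.exists_f_comp_eq (u.comp t.f) (Hom.ext fun i x => x.2)
  have v_inj : v.Injective := Hom.Injective.of_comp (g := s.f) (hv ▸ hu.comp t.inj)
  have := t.defect (δ := δ)
  have := hA.defect_sub_nonpos v_inj
  have := hC.defect_sub_nonpos (s.g.comp u).range.incl_injective
  lia

end IsSemistable

/-- Stability for the defect `e(δ, ·)`, at slope `0`. -/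
structure IsStable (δ : Q.V → ℤ) (S : QRep Q k) : Prop extends IsSemistable δ S where
  not_isZero : ¬IsZero S
  isZero_or_surjective : ∀ {A : QRep Q k} {u : Hom A S}, u.Injective →
    Q.eulerBilin δ A.dimVec = 0 → IsZero A ∨ u.Surjective

namespace IsStable

theorem surjective_of_ne_zero (hS : IsStable δ S) (hX : IsSemistable δ X) {f : Hom X S}
    (hf : f ≠ 0) : f.Surjective := by
  rcases hS.isZero_or_surjective f.range.incl_injective (hX.defect_range hS.toIsSemistable f)
    with hzero | hsurj
  · exact absurd (Hom.eq_zero_of_isZero_range hzero) hf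
  · exact Hom.Surjective.comp hsurj f.rangeRestrict_surjective

theorem injective_of_ne_zero (hS : IsStable δ S) (hX : IsSemistable δ X) {f : Hom S X}
    (hf : f ≠ 0) : f.Injective := by
  rcases hS.isZero_or_surjective f.ker.incl_injective (hS.defect_ker hX f) with hzero | hsurj
  · exact Hom.injective_of_isZero_ker hzero
  · refine absurd (Hom.Surjective.comp_right_cancel hsurj ?_) hf
    exact Hom.ext fun i y => y.2

theorem homDim_self [IsAlgClosed k] (hS : IsStable δ S) : homDim S S = 1 :=
  homDim_self_eq_one_of_injective hS.not_isZero fun _ hf =>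
    hS.injective_of_ne_zero hS.toIsSemistable hf

end IsStable

theorem IsSemistable.exists_surjective_isStable (hX : IsSemistable δ X) (h0 : ¬IsZero X) :
    ∃ (S : QRep Q k) (g : Hom X S), g.Surjective ∧ IsStable δ S := by
  obtain ⟨S, ⟨⟨g, hg⟩, hS, hSδ⟩, hmin⟩ := WellFounded.has_min (measure totalDim).wf
    {S : QRep Q k | (∃ g : Hom X S, g.Surjective) ∧ ¬IsZero S ∧ Q.eulerBilin δ S.dimVec = 0}
    ⟨X, ⟨Hom.id X, fun i => Function.surjective_id⟩, h0, hX.defect_eq_zero⟩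
  refine ⟨S, g, hg, hX.of_surjective hg hSδ, hS, fun {A u} hu hA => or_iff_not_imp_right.2 ?_⟩
  intro hsurj
  let s := ShortExact.ofInjective u hu
  have hdim := s.totalDim
  have hdefect := s.defect (δ := δ)
  have quotient_not_isZero : ¬IsZero (S.quotBy u.range) := fun hz => hsurj (s.f_surjective hz)
  have := hmin _ ⟨⟨s.g.comp g, Hom.Surjective.comp s.surj hg⟩, quotient_not_isZero, by lia⟩
  rw [isZero_iff_totalDim]
  change ¬totalDim _ < totalDim S at this
  lia

end Semistability
end QRep

section Pencil

theorem exists_smul_apply_add_smul_apply_eq_zero {k L T : Type*} [Field k] [IsAlgClosed k]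
    [AddCommGroup L] [Module k L] [FiniteDimensional k L] [Nontrivial L]
    [AddCommGroup T] [Module k T] [FiniteDimensional k T]
    (h : Module.finrank k T ≤ Module.finrank k L) (φ ψ : L →ₗ[k] T) :
    ∃ c d : k, (c ≠ 0 ∨ d ≠ 0) ∧ ∃ x ≠ 0, c • φ x + d • ψ x = 0 := by
  by_cases hφ : Function.Injective φ
  · have hdim := le_antisymm (LinearMap.finrank_le_finrank_of_injective hφ) h
    let φ' := LinearEquiv.ofInjectiveOfFinrankEq φ hφ hdim
    obtain ⟨c, hc⟩ := Module.End.exists_eigenvalue (K := k) ((φ'.symm : T →ₗ[k] L).comp ψ)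
    obtain ⟨y, hy⟩ := hc.exists_hasEigenvector
    have hψ : ψ y = c • φ y := by
      have := congrArg φ' hy.apply_eq_smul
      rwa [LinearMap.comp_apply, LinearEquiv.coe_coe, LinearEquiv.apply_symm_apply,
        map_smul] at this
    refine ⟨-c, 1, Or.inr one_ne_zero, y, hy.2, ?_⟩
    rw [hψ, neg_smul, one_smul, neg_add_cancel]
  · rw [injective_iff_map_eq_zero] at hφ
    push Not at hφ
    obtain ⟨x, hx, hx0⟩ := hφ
    exact ⟨1, 0, Or.inl one_ne_zero, x, hx0, by rw [hx, smul_zero, zero_smul, add_zero]⟩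

namespace QRep

variable {Q : FinQuiver} {k : Type} [Field k] {B E U V X Y Z : QRep Q k}

theorem exists_push_isCoboundary [IsAlgClosed k] (hEB : 1 < extDim E B) (hBX : homDim B X ≠ 0)
    (h : extDim E X ≤ homDim B X) :
    ∃ ξ : ArrowMaps E B, ¬IsCoboundary ξ ∧ ∃ f : Hom B X, f ≠ 0 ∧ IsCoboundary (push f ξ) := by
  have : Nontrivial (Hom B X) := Module.finrank_pos_iff.1 (Nat.pos_of_ne_zero hBX)
  obtain ⟨ξ₀, ξ₁, hli⟩ : ∃ ξ₀ ξ₁ : ArrowMaps E B, ∀ c d : k,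
      IsCoboundary (c • ξ₀ + d • ξ₁) → c = 0 ∧ d = 0 := by
    have : Nontrivial (ArrowMaps E B ⧸ LinearMap.range (differential E B)) :=
      Module.finrank_pos_iff.1 (one_pos.trans hEB)
    obtain ⟨x, hx⟩ := exists_ne (0 : ArrowMaps E B ⧸ LinearMap.range (differential E B))
    obtain ⟨y, hxy⟩ := exists_linearIndependent_pair_of_one_lt_finrank hEB hx
    obtain ⟨ξ₀, rfl⟩ := Submodule.mkQ_surjective _ x
    obtain ⟨ξ₁, rfl⟩ := Submodule.mkQ_surjective _ y
    refine ⟨ξ₀, ξ₁, fun c d hcd => LinearIndependent.pair_iff.1 hxy c d ?_⟩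
    rw [← map_smul, ← map_smul, ← map_add]
    exact (Submodule.Quotient.mk_eq_zero _).2 hcd
  let q := (LinearMap.range (differential E X)).mkQ
  obtain ⟨c, d, hcd, f, hf, hfcd⟩ := exists_smul_apply_add_smul_apply_eq_zero h
    (q.comp (pushₗ ξ₀)) (q.comp (pushₗ ξ₁))
  refine ⟨c • ξ₀ + d • ξ₁, fun hξ => ?_, f, hf, (Submodule.Quotient.mk_eq_zero _).1 ?_⟩
  · obtain ⟨rfl, rfl⟩ := hli c d hξ
    exact hcd.elim (· rfl) (· rfl)
  · rw [map_add, map_smul, map_smul]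
    exact hfcd

theorem Hom.injective_of_totalDim_eq_one (hX : totalDim X = 1) {f : Hom X Y} (hf : f ≠ 0) :
    f.Injective :=
  Hom.injective_of_totalDim_le_rank (hX ▸ Nat.one_le_iff_ne_zero.2 (Hom.rank_ne_zero hf))

theorem Hom.surjective_of_totalDim_eq_one (hY : totalDim Y = 1) {f : Hom X Y} (hf : f ≠ 0) :
    f.Surjective :=
  Hom.Surjective.comp (f.range.incl_injective.surjective_of_totalDim_le
    (hY ▸ Nat.one_le_iff_ne_zero.2 (Hom.rank_ne_zero hf))) f.rangeRestrict_surjective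

theorem totalDim_eq_one_of_dimVec_eq_single {e : Q.V} (hE : E.dimVec = Pi.single e 1) :
    totalDim E = 1 := by
  have := totalDim_cast E
  rw [hE, Finset.sum_pi_single'] at this
  simpa using this

theorem Hom.injective_of_homDim_self_eq_one (h : homDim X X = 1) {f : Hom X X} (hf : f ≠ 0) :
    f.Injective := by
  obtain ⟨c, hc⟩ := (finrank_eq_one_iff_of_nonzero' f hf).1 h (Hom.id X)
  intro i
  rw [injective_iff_map_eq_zero]
  intro x hx
  have : c • f.1 i x = x := Hom.congr hc i x
  rw [← this, hx, smul_zero]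

theorem _root_.FinQuiver.eulerBilin_single_right_of_source {e : Q.V} (hs : ∀ a, Q.tgt a ≠ e)
    (x : Q.V → ℤ) : Q.eulerBilin x (Pi.single e 1) = x e := by
  rw [FinQuiver.eulerBilin_single_right, Finset.sum_eq_zero, sub_zero]
  exact fun a _ => if_neg (hs a)

section Source

variable {δ : Q.V → ℤ} {e : Q.V} (h : Q.IsAffine δ) (he : δ e = 1) (hs : ∀ a, Q.tgt a ≠ e)
  (hB : B.dimVec = δ - Pi.single e 1)

include h hs

include he in
theorem IsSemistable.extDim_of_source {m : ℕ} (hX : IsSemistable δ X) (hdim : X.dimVec = m • δ)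
    (hE : E.dimVec = Pi.single e 1) : extDim E X = m := by
  have E_dim := totalDim_eq_one_of_dimVec_eq_single hE
  have δE : Q.eulerBilin δ E.dimVec = 1 := by
    rw [hE, FinQuiver.eulerBilin_single_right_of_source hs, he]
  have homDim_EX : homDim E X = 0 := homDim_eq_zero_iff.2 fun f => by
    by_contra hf
    have := hX.defect_sub_nonpos (Hom.injective_of_totalDim_eq_one E_dim hf)
    lia
  have hom_sub_ext := homDim_sub_extDim E X
  rw [homDim_EX, ← FinQuiver.eulerBilin_apply, hdim, map_nsmul, h.eulerBilin_delta_right, δE,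
    nsmul_eq_mul] at hom_sub_ext
  lia

include hB

theorem eulerBilin_dimVec_of_source (V : QRep Q k) :
    Q.eulerBilin V.dimVec B.dimVec = -Q.eulerBilin δ V.dimVec - V.dimVec e := by
  rw [hB, map_sub, h.eulerBilin_delta_right, FinQuiver.eulerBilin_single_right_of_source hs]

theorem defect_nonpos_of_source (hBB : ExtVanishes B B) {v : Hom U B} (hv : v.Injective) :
    Q.eulerBilin δ U.dimVec ≤ 0 := by
  have hom_sub_ext := homDim_sub_extDim U B
  rw [extVanishes_iff_extDim_eq_zero.1 (hBB.of_injective hv), ← FinQuiver.eulerBilin_apply,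
    eulerBilin_dimVec_of_source h hs hB] at hom_sub_ext
  have := dimVec_nonneg U e
  lia

include he

theorem homDim_self_of_source (hBB : ExtVanishes B B) : homDim B B = 1 := by
  have hom_sub_ext := homDim_sub_extDim B B
  rw [extVanishes_iff_extDim_eq_zero.1 hBB, ← FinQuiver.eulerBilin_apply,
    eulerBilin_dimVec_of_source h hs hB, hB, map_sub, h.eulerBilin_delta_delta,
    FinQuiver.eulerBilin_single_right_of_source hs, Pi.sub_apply, Pi.single_eq_same, he]
    at hom_sub_ext
  lia

/-- A subrepresentation `U` mapping onto `E` has quotient `V = Z / U` generated by `B`. A nonzero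
map `V → B` would make `B → V` an isomorphism, and then `U ≅ E` splits the extension. -/
theorem isSemistable_of_source (hBB : ExtVanishes B B) (hE : E.dimVec = Pi.single e 1)
    (s : ShortExact B Z E) (hsplit : ∀ v : Hom E Z, s.g.comp v ≠ Hom.id E) : IsSemistable δ Z := by
  have hZ : Z.dimVec = δ := by rw [s.dimVec, hB, hE, sub_add_cancel]
  refine ⟨by rw [hZ, h.eulerBilin_delta_delta], fun {U u} hu => ?_⟩
  by_cases hsu : s.g.comp u = 0
  · obtain ⟨v, hv⟩ := s.exists_f_comp_eq u hsu
    exact defect_nonpos_of_source h hs hB hBB (Hom.Injective.of_comp (g := s.f) (hv ▸ hu))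
  obtain ⟨V, t, rfl⟩ := ShortExact.exists_of_injective hu
  have su_surj := Hom.surjective_of_totalDim_eq_one (totalDim_eq_one_of_dimVec_eq_single hE) hsu
  have q_surj := s.g_comp_f_surjective t su_surj
  have homDim_VB : homDim V B = 0 := by
    by_contra hVB
    obtain ⟨g, hg⟩ := exists_ne_zero_of_homDim_ne_zero hVB
    have gq_inj := Hom.injective_of_homDim_self_eq_one (homDim_self_of_source h he hs hB hBB)
      (f := g.comp (t.g.comp s.f)) fun h0 => hg (q_surj.comp_right_cancel h0)
    have := Hom.Injective.totalDim_le (Hom.Injective.of_comp gq_inj)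
    have := t.totalDim
    have := s.totalDim
    obtain ⟨v, hv, -⟩ := Hom.exists_inverse (su_surj.injective_of_totalDim_le (by lia)) su_surj
    exact hsplit (t.f.comp v) hv
  have hVe : V.dimVec e = 0 := by
    have hdim := congrFun t.dimVec e
    have hUE : E.dimVec e ≤ U.dimVec e :=
      Int.ofNat_le.2 (LinearMap.finrank_le_finrank_of_surjective (su_surj e))
    rw [hZ, Pi.add_apply, he] at hdim
    rw [hE, Pi.single_eq_same] at hUE
    have := dimVec_nonneg V e
    lia
  have hom_sub_ext := homDim_sub_extDim V B
  rw [homDim_VB, ← FinQuiver.eulerBilin_apply, eulerBilin_dimVec_of_source h hs hB, hVe]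
    at hom_sub_ext
  have hdefect := t.defect (δ := δ)
  rw [hZ, h.eulerBilin_delta_delta] at hdefect
  lia

theorem extDim_eq_two_of_source (hE : E.dimVec = Pi.single e 1) : extDim E B = 2 := by
  have E_dim := totalDim_eq_one_of_dimVec_eq_single hE
  have homDim_EB : homDim E B = 0 := homDim_eq_zero_iff.2 fun f => by
    by_contra hf
    have := (Hom.injective_of_totalDim_eq_one E_dim hf).dimVec_le e
    rw [hE, hB, Pi.sub_apply, Pi.single_eq_same, he] at this
    lia
  have hom_sub_ext := homDim_sub_extDim E B
  rw [homDim_EB, ← FinQuiver.eulerBilin_apply, eulerBilin_dimVec_of_source h hs hB, hE,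
    FinQuiver.eulerBilin_single_right_of_source hs, he, Pi.single_eq_same] at hom_sub_ext
  lia

theorem le_homDim_of_source {m : ℕ} (hdim : X.dimVec = m • δ) : m ≤ homDim B X := by
  have hom_sub_ext := homDim_sub_extDim B X
  rw [← FinQuiver.eulerBilin_apply, hdim, map_nsmul, h.eulerBilin_delta_right, hB, map_sub,
    h.eulerBilin_delta_delta, FinQuiver.eulerBilin_single_right_of_source hs, he, nsmul_eq_mul]
    at hom_sub_ext
  lia

end Source

theorem IsSemistable.exists_dimVec_eq_delta [IsAlgClosed k] {δ : Q.V → ℤ} {e : Q.V}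
    (h : Q.IsAffine δ) (he : δ e = 1) (hs : ∀ a, Q.tgt a ≠ e) {m : ℕ} (hm : 1 ≤ m)
    (hX : IsSemistable δ X) (hdim : X.dimVec = m • δ) :
    ∃ Z : QRep Q k, Z.dimVec = δ ∧ IsSemistable δ Z ∧ ∃ f : Hom Z X, f ≠ 0 := by
  obtain ⟨B, hB, hBB⟩ := exists_dimVec_eq_and_extVanishes (k := k) h (e := e)
    (θ := δ - Pi.single e 1) (fun i => by
      have := h.pos i
      rw [Pi.sub_apply, Pi.single_apply]
      split_ifs <;> lia) (by rw [Pi.sub_apply, Pi.single_eq_same, he, sub_self])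
  obtain ⟨E, hE⟩ : ∃ E : QRep Q k, E.dimVec = Pi.single e 1 :=
    ⟨zeroMapsRep k (Pi.single e 1), by
      rw [zeroMapsRep_dimVec]
      funext i
      rw [Pi.single_apply, Pi.single_apply, Nat.cast_ite, Nat.cast_one, Nat.cast_zero]⟩
  have ext_EB := extDim_eq_two_of_source h he hs hB hE
  have ext_EX := hX.extDim_of_source h he hs hdim hE
  have hom_BX := le_homDim_of_source h he hs hB hdim
  obtain ⟨ξ, hξ, f, hf, hfξ⟩ := exists_push_isCoboundary (E := E) (B := B) (X := X)
    (by lia) (by lia) (by lia)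
  let s := ShortExact.ofCocycle ξ
  have hsξ := ShortExact.isExtensionClass_ofCocycle ξ
  obtain ⟨w, rfl⟩ := (hsξ.exists_extension_iff X f).2 hfξ
  refine ⟨extensionRep ξ, by rw [s.dimVec, hB, hE, sub_add_cancel],
    isSemistable_of_source h he hs hB hBB hE s fun v hv => hξ ?_, w, ?_⟩
  · exact (hsξ.exists_lift_iff E (Hom.id E)).1 ⟨v, hv⟩
  · rintro rfl
    exact hf (Hom.zero_comp _)

end QRep
end Pencil

namespace QRep

section Filtrations

variable {Q : FinQuiver} {k : Type} [Field k] {δ : Q.V → ℤ} {ι : Type} {S : ι → QRep Q k}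
  {U V W X Y : QRep Q k} {n p : Multiset ι}

/-- Pairwise nonisomorphic stable representations. -/
structure IsStableFamily (δ : Q.V → ℤ) (S : ι → QRep Q k) : Prop where
  isStable : ∀ i, IsStable δ (S i)
  homDim_eq_zero : ∀ {i j}, i ≠ j → homDim (S i) (S j) = 0

theorem IsStableFamily.homDim_eq_ite [IsAlgClosed k] [DecidableEq ι] (hS : IsStableFamily δ S)
    (i j : ι) : homDim (S i) (S j) = if i = j then 1 else 0 := by
  split_ifs with hij
  · exact hij ▸ (hS.isStable i).homDim_self
  · exact hS.homDim_eq_zero hij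

/-- `HasFiltration S X n`: the representation `X` has a finite filtration whose factors are the
`S i` with `i` running through the multiset `n`. -/
inductive HasFiltration (S : ι → QRep Q k) : QRep Q k → Multiset ι → Prop
  | of_isZero {X : QRep Q k} (h : IsZero X) : HasFiltration S X 0
  | cons {X Y : QRep Q k} {i : ι} {n : Multiset ι} (s : ShortExact X Y (S i))
      (h : HasFiltration S X n) : HasFiltration S Y (i ::ₘ n)

namespace HasFiltration

theorem congr (h : HasFiltration S X n) {f : Hom X Y} (hi : f.Injective) (hs : f.Surjective) :
    HasFiltration S Y n := by
  cases h with
  | of_isZero hX => exact of_isZero (hs.isZero hX)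
  | cons s hV =>
    obtain ⟨g, hfg, hgf⟩ := Hom.exists_inverse hi hs
    exact cons (s.congrMiddle hfg hgf) hV

theorem extension (s : ShortExact X V Y) (hX : HasFiltration S X n) (hY : HasFiltration S Y p) :
    HasFiltration S V (p + n) := by
  induction hY generalizing V with
  | of_isZero hY => exact (zero_add n).symm ▸ hX.congr s.inj (s.f_surjective hY)
  | cons t _ ih =>
    let q := ShortExact.ofSurjective (t.g.comp s.g) (Hom.Surjective.comp t.surj s.surj)
    obtain ⟨r, -⟩ := s.exists_preimage t q rfl
    exact (Multiset.cons_add _ _ n).symm ▸ cons q (ih r)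

theorem isSemistable (hS : ∀ i, IsStable δ (S i)) (h : HasFiltration S X n) :
    IsSemistable δ X := by
  induction h with
  | of_isZero hX => exact hX.isSemistable
  | cons s _ ih => exact .middle s ih (hS _).toIsSemistable

theorem dimVec (h : HasFiltration S X n) : X.dimVec = (n.map fun i => (S i).dimVec).sum := by
  induction h with
  | of_isZero hX => exact isZero_iff_dimVec.1 hX
  | cons s _ ih => rw [s.dimVec, ih, Multiset.map_cons, Multiset.sum_cons, add_comm]

theorem exists_add (hS : ∀ i, IsStable δ (S i)) (h : HasFiltration S X n)
    (t : ShortExact W X U) (hW : IsSemistable δ W) :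
    ∃ n₁ n₂, n = n₁ + n₂ ∧ HasFiltration S W n₁ ∧ HasFiltration S U n₂ := by
  induction h generalizing W U with
  | of_isZero hX =>
    exact ⟨0, 0, rfl, of_isZero (Hom.Injective.isZero t.inj hX),
      of_isZero (Hom.Surjective.isZero t.surj hX)⟩
  | @cons V X i n s hV ih =>
    by_cases hst : s.g.comp t.f = 0
    · obtain ⟨w, hw⟩ := s.exists_f_comp_eq t.f hst
      have w_inj : w.Injective := Hom.Injective.of_comp (g := s.f) (hw ▸ t.inj)
      let p := ShortExact.ofInjective w w_inj
      obtain ⟨q, -⟩ := s.exists_quotient p t hw.symm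
      obtain ⟨n₁, n₂, rfl, hW', hU⟩ := ih p hW
      exact ⟨n₁, i ::ₘ n₂, (Multiset.add_cons i n₁ n₂).symm, hW', cons q hU⟩
    · let p := ShortExact.ofSurjective _ ((hS i).surjective_of_ne_zero hW hst)
      obtain ⟨q⟩ := s.nonempty_of_g_comp_f t p rfl
      obtain ⟨n₁, n₂, rfl, hW', hU⟩ := ih q (.left p hW (hS i).toIsSemistable)
      exact ⟨i ::ₘ n₁, n₂, (Multiset.cons_add i n₁ n₂).symm, cons p hW', hU⟩

theorem singleton (i : ι) : HasFiltration S (S i) {i} := by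
  have hz : IsZero (zeroMapsRep k (0 : Q.V → ℕ)) :=
    isZero_iff_dimVec.2 (zeroMapsRep_dimVec 0)
  exact cons (ShortExact.mk (0 : Hom (zeroMapsRep k 0) (S i)) (Hom.id (S i))
    (fun j x y _ => (hz j x).trans (hz j y).symm) (fun j => Function.surjective_id)
    fun j x => ⟨fun h => ⟨0, h.symm⟩, fun ⟨_, h⟩ => h.symm⟩) (of_isZero hz)

theorem exists_ne_zero_to (hS : ∀ i, IsStable δ (S i)) (h : HasFiltration S X n)
    (hX : ¬IsZero X) : ∃ i, ∃ f : Hom X (S i), f ≠ 0 := by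
  cases h with
  | of_isZero hz => exact absurd hz hX
  | @cons V _ i _ s _ =>
    refine ⟨i, s.g, fun h0 => (hS i).not_isZero fun j x => ?_⟩
    obtain ⟨y, rfl⟩ := s.surj j x
    exact Hom.congr h0 j y

theorem exists_ne_zero_from (hS : ∀ i, IsStable δ (S i)) (h : HasFiltration S X n)
    (hX : ¬IsZero X) : ∃ i, ∃ f : Hom (S i) X, f ≠ 0 := by
  induction h with
  | of_isZero hz => exact absurd hz hX
  | @cons V _ i _ s _ ih =>
    by_cases hV : IsZero V
    · obtain ⟨g, hg, -⟩ := Hom.exists_inverse (s.g_injective hV) s.surj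
      refine ⟨i, g, ?_⟩
      rintro rfl
      rw [Hom.comp_zero] at hg
      exact (hS i).not_isZero fun j x => (Hom.congr hg j x).symm
    · obtain ⟨j, f, hf⟩ := ih hV
      exact ⟨j, s.f.comp f, fun h0 => hf
        (Hom.Injective.comp_left_cancel s.inj (h0.trans (Hom.comp_zero _).symm))⟩

theorem map {κ : Type} {T : κ → QRep Q k} {φ : ι → κ} (hφ : ∀ i, T (φ i) = S i)
    (h : HasFiltration S X n) : HasFiltration T X (n.map φ) := by
  induction h with
  | of_isZero hX => exact of_isZero hX
  | cons s _ ih =>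
    rw [Multiset.map_cons]
    rw [← hφ] at s
    exact cons s ih

end HasFiltration

theorem IsStableFamily.option (hS : IsStableFamily δ S) {T : QRep Q k} (hT : IsStable δ T)
    (hTS : ∀ i, homDim T (S i) = 0) : IsStableFamily δ fun o : Option ι => o.elim T S := by
  have hST (i) : homDim (S i) T = 0 := homDim_eq_zero_iff.2 fun f => by
    by_contra hf
    have := hS.isStable i
    obtain ⟨g, hfg, -⟩ := Hom.exists_inverse (this.injective_of_ne_zero hT.toIsSemistable hf)
      (hT.surjective_of_ne_zero this.toIsSemistable hf)
    rw [homDim_eq_zero_iff.1 (hTS i) g, Hom.comp_zero] at hfg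
    exact hT.not_isZero fun j x => (Hom.congr hfg j x).symm
  constructor
  · rintro (_ | i)
    exacts [hT, hS.isStable i]
  · rintro (_ | i) (_ | j) hij
    exacts [absurd rfl hij, hTS j, hST i, hS.homDim_eq_zero fun h => hij (congrArg some h)]

theorem IsSemistable.exists_hasFiltration (hX : IsSemistable δ X) :
    ∃ (ι : Type) (_ : Fintype ι) (_ : DecidableEq ι) (S : ι → QRep Q k) (n : Multiset ι),
      IsStableFamily δ S ∧ HasFiltration S X n ∧ ∀ i, i ∈ n := by
  induction hN : totalDim X using Nat.strong_induction_on generalizing X with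
  | _ N ih =>
  by_cases hz : IsZero X
  · exact ⟨Empty, inferInstance, inferInstance, Empty.elim, 0,
      ⟨fun i => i.elim, fun {i} => i.elim⟩, .of_isZero hz, fun i => i.elim⟩
  obtain ⟨T, g, hg, hT⟩ := hX.exists_surjective_isStable hz
  let s := ShortExact.ofSurjective g hg
  have hdim := s.totalDim
  have T_dim : totalDim T ≠ 0 := mt isZero_iff_totalDim.2 hT.not_isZero
  obtain ⟨ι, _, _, S, n, hS, hF, hn⟩ := ih _ (by lia) (.left s hX hT.toIsSemistable) rfl
  by_cases hTS : ∀ i, homDim T (S i) = 0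
  · refine ⟨Option ι, inferInstance, inferInstance, fun o => o.elim T S, none ::ₘ n.map some,
      hS.option hT hTS, .cons (i := none) s (hF.map fun i => rfl), ?_⟩
    rintro (_ | i)
    · exact Multiset.mem_cons_self _ _
    · exact Multiset.mem_cons_of_mem (Multiset.mem_map_of_mem _ (hn i))
  · push Not at hTS
    obtain ⟨i, hi⟩ := hTS
    obtain ⟨f, hf⟩ := exists_ne_zero_of_homDim_ne_zero hi
    have := hS.isStable i
    let s' := s.congrRight (hT.injective_of_ne_zero this.toIsSemistable hf)
      (this.surjective_of_ne_zero hT.toIsSemistable hf)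
    exact ⟨ι, inferInstance, inferInstance, S, i ::ₘ n, hS, .cons s' hF,
      fun j => Multiset.mem_cons_of_mem (hn j)⟩

end Filtrations
end QRep

section LinearAlgebra

theorem sum_apply_eq_one_of_sum_mul_eq {ι : Type} [Fintype ι] {ε : ι → ι → ℕ} {n : ι → ℕ}
    (hn : ∀ i, 0 < n i) (hrow : ∀ i, ∑ j, n j * ε i j = n i) (hcol : ∀ j, ∑ i, n i * ε i j = n j)
    (i : ι) : ∑ j, ε i j = 1 := by
  have one_le (i) : 1 ≤ ∑ j, ε i j := by
    by_contra! hlt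
    have h0 := Finset.sum_eq_zero_iff.1 (Nat.lt_one_iff.1 hlt)
    have hzero : ∑ j, n j * ε i j = 0 := Finset.sum_eq_zero fun j hj => by rw [h0 j hj, mul_zero]
    exact (hn i).ne (hzero.symm.trans (hrow i))
  have total : ∑ i, n i * 1 = ∑ i, n i * ∑ j, ε i j := by
    simp only [mul_one, Finset.mul_sum]
    rw [Finset.sum_comm]
    exact Finset.sum_congr rfl fun j _ => (hcol j).symm
  have := (Finset.sum_eq_sum_iff_of_le fun i _ => Nat.mul_le_mul_left (n i) (one_le i)).1 total i
    (Finset.mem_univ i)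
  exact (Nat.eq_of_mul_eq_mul_left (hn i) this).symm

theorem eq_of_sum_eq_one {ι : Type} [Fintype ι] {f : ι → ℕ} (h : ∑ i, f i = 1) {i j : ι}
    (hi : f i ≠ 0) (hj : f j ≠ 0) : i = j := by
  classical
  by_contra hij
  have := Finset.sum_le_sum_of_subset (f := f) (Finset.subset_univ {i, j})
  rw [Finset.sum_pair hij, h] at this
  lia

theorem exists_perm_of_sum_eq_one {ι : Type} [Fintype ι] [DecidableEq ι] {ε : ι → ι → ℕ}
    (hrow : ∀ i, ∑ j, ε i j = 1) (hcol : ∀ j, ∑ i, ε i j = 1) :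
    ∃ σ : Equiv.Perm ι, ∀ i j, ε i j = if j = σ i then 1 else 0 := by
  have hex (i) := Finset.exists_ne_zero_of_sum_ne_zero (hrow i ▸ one_ne_zero)
  choose σ _ hσ using hex
  have eq_zero {i j} (hj : j ≠ σ i) : ε i j = 0 :=
    of_not_not fun h => hj (eq_of_sum_eq_one (hrow i) h (hσ i))
  have σ_injective : Function.Injective σ := fun i i' hi =>
    eq_of_sum_eq_one (f := fun l => ε l (σ i)) (hcol (σ i)) (hσ i) (hi ▸ hσ i')
  refine ⟨Equiv.ofBijective σ (Finite.injective_iff_bijective.1 σ_injective), fun i j => ?_⟩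
  split_ifs with hj
  · rw [hj, ← hrow i]
    exact (Fintype.sum_eq_single (σ i) fun l => eq_zero).symm
  · exact eq_zero hj

variable {k M N T : Type} [Field k] [AddCommGroup M] [Module k M] [AddCommGroup N] [Module k N]
  [AddCommGroup T] [Module k T] [FiniteDimensional k M] {B : M →ₗ[k] N →ₗ[k] T}

theorem finrank_linearMap_of_finrank_eq_one (hT : Module.finrank k T = 1) :
    Module.finrank k (M →ₗ[k] T) = Module.finrank k M := by
  have : FiniteDimensional k T := Module.finite_of_finrank_eq_succ hT
  rw [Module.finrank_linearMap, hT, mul_one]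

theorem finrank_le_of_separatingRight (hT : Module.finrank k T = 1) (hB : B.SeparatingRight) :
    Module.finrank k N ≤ Module.finrank k M := by
  have : FiniteDimensional k T := Module.finite_of_finrank_eq_succ hT
  rw [← finrank_linearMap_of_finrank_eq_one (M := M) hT]
  exact LinearMap.finrank_le_finrank_of_injective
    (LinearMap.ker_eq_bot.1 (LinearMap.separatingRight_iff_flip_ker_eq_bot.1 hB))

theorem separatingLeft_of_separatingRight [FiniteDimensional k N] (hT : Module.finrank k T = 1)
    (hB : B.SeparatingRight) (h : Module.finrank k N = Module.finrank k M) :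
    B.SeparatingLeft := by
  have : FiniteDimensional k T := Module.finite_of_finrank_eq_succ hT
  have flip_surjective : Function.Surjective B.flip :=
    (LinearMap.injective_iff_surjective_of_finrank_eq_finrank
      (h.trans (finrank_linearMap_of_finrank_eq_one hT).symm)).1
      (LinearMap.ker_eq_bot.1 (LinearMap.separatingRight_iff_flip_ker_eq_bot.1 hB))
  intro x hx
  by_contra hne
  obtain ⟨f, hf⟩ := Module.Projective.exists_dual_ne_zero k hne
  obtain ⟨t, ht⟩ := Module.finrank_pos_iff_exists_ne_zero.1 (hT ▸ one_pos)
  obtain ⟨y, hy⟩ := flip_surjective (f.smulRight t)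
  exact smul_ne_zero hf ht ((LinearMap.congr_fun hy x).symm.trans (hx y))

end LinearAlgebra

namespace QRep

section Tubes

variable {Q : FinQuiver} {k : Type} [Field k] {δ : Q.V → ℤ} {ι : Type} [DecidableEq ι]
  {S : ι → QRep Q k} {σ : Equiv.Perm ι} {X : QRep Q k} {n : Multiset ι}

/-- The stable representations `S i` of a union of tubes, with `σ` the Auslander–Reiten
translation; it is determined by the groups `Ext¹(S i, S j)`. -/
structure IsTube (δ : Q.V → ℤ) (S : ι → QRep Q k) (σ : Equiv.Perm ι) : Prop
    extends IsStableFamily δ S where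
  extDim_eq_ite : ∀ i j, extDim (S i) (S j) = if j = σ i then 1 else 0

theorem IsStableFamily.eulerBilin_eq [IsAlgClosed k] (hS : IsStableFamily δ S) (i j : ι) :
    Q.eulerBilin (S i).dimVec (S j).dimVec =
      (if i = j then 1 else 0) - (extDim (S i) (S j) : ℤ) := by
  rw [FinQuiver.eulerBilin_apply, ← homDim_sub_extDim, hS.homDim_eq_ite, Nat.cast_ite, Nat.cast_one,
    Nat.cast_zero]

section Fintype

variable [Fintype ι]

theorem HasFiltration.dimVec_eq_sum_count (h : HasFiltration S X n) :
    X.dimVec = ∑ i, (n.count i : ℤ) • (S i).dimVec := by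
  rw [h.dimVec, Finset.sum_multiset_map_count]
  refine (Finset.sum_subset (Finset.subset_univ _) fun i _ hi => ?_).trans
    (Finset.sum_congr rfl fun i _ => (natCast_zsmul _ _).symm)
  rw [Multiset.count_eq_zero_of_notMem (mt Multiset.mem_toFinset.2 hi), zero_smul]

variable [IsAlgClosed k]

theorem HasFiltration.eulerBilin_left (h : HasFiltration S X n) (hS : IsStableFamily δ S) (j : ι) :
    Q.eulerBilin X.dimVec (S j).dimVec =
      n.count j - ∑ i, (n.count i : ℤ) * extDim (S i) (S j) := by
  simp only [h.dimVec_eq_sum_count, map_sum, map_smul, LinearMap.sum_apply, LinearMap.smul_apply,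
    smul_eq_mul, hS.eulerBilin_eq, mul_sub, Finset.sum_sub_distrib, mul_ite, mul_one, mul_zero,
    Finset.sum_ite_eq', Finset.mem_univ, if_true]

theorem HasFiltration.eulerBilin_right (h : HasFiltration S X n) (hS : IsStableFamily δ S) (i : ι) :
    Q.eulerBilin (S i).dimVec X.dimVec =
      n.count i - ∑ j, (n.count j : ℤ) * extDim (S i) (S j) := by
  simp only [h.dimVec_eq_sum_count, map_sum, map_smul, smul_eq_mul, hS.eulerBilin_eq, mul_sub,
    Finset.sum_sub_distrib, mul_ite, mul_one, mul_zero, Finset.sum_ite_eq, Finset.mem_univ, if_true]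

end Fintype

variable [Finite ι] [IsAlgClosed k]

/-- The Euler form of `X` with each `S i` vanishes, so the multiplicities are a positive left and
right fixed vector of the matrix `dim Ext¹(S i, S j)`. -/
theorem IsStableFamily.exists_isTube (hS : IsStableFamily δ S) (h : Q.IsAffine δ)
    (hX : HasFiltration S X n) (hn : ∀ i, i ∈ n) {m : ℤ} (hdim : X.dimVec = m • δ) :
    ∃ σ, IsTube δ S σ := by
  have := Fintype.ofFinite ι
  have defect (i) := (hS.isStable i).defect_eq_zero
  have hpos (i) : 0 < n.count i := Multiset.count_pos.2 (hn i)
  have hcol (j) : ∑ i, n.count i * extDim (S i) (S j) = n.count j := by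
    have := hX.eulerBilin_left hS j
    rw [hdim, map_smul, LinearMap.smul_apply, defect, smul_zero, eq_comm, sub_eq_zero] at this
    exact_mod_cast this.symm
  have hrow (i) : ∑ j, n.count j * extDim (S i) (S j) = n.count i := by
    have := hX.eulerBilin_right hS i
    rw [hdim, map_smul, h.eulerBilin_delta_right, defect, neg_zero, smul_zero, eq_comm,
      sub_eq_zero] at this
    exact_mod_cast this.symm
  obtain ⟨σ, hσ⟩ := exists_perm_of_sum_eq_one
    (sum_apply_eq_one_of_sum_mul_eq hpos hrow hcol)
    (sum_apply_eq_one_of_sum_mul_eq (ε := fun j i => extDim (S i) (S j)) hpos hcol hrow)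
  exact ⟨σ, hS, hσ⟩

theorem IsTube.eulerBilin_left (hT : IsTube δ S σ) (h : HasFiltration S X n) (i : ι) :
    Q.eulerBilin X.dimVec (S (σ i)).dimVec = (n.count (σ i) : ℤ) - n.count i := by
  have := Fintype.ofFinite ι
  simp only [h.eulerBilin_left hT.toIsStableFamily, hT.extDim_eq_ite, σ.injective.eq_iff,
    Nat.cast_ite, Nat.cast_one, Nat.cast_zero, mul_ite, mul_one, mul_zero, Finset.sum_ite_eq,
    Finset.mem_univ, if_true]

theorem IsTube.eulerBilin_right (hT : IsTube δ S σ) (h : HasFiltration S X n) (i : ι) :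
    Q.eulerBilin (S i).dimVec X.dimVec = (n.count i : ℤ) - n.count (σ i) := by
  have := Fintype.ofFinite ι
  simp only [h.eulerBilin_right hT.toIsStableFamily, hT.extDim_eq_ite, Nat.cast_ite, Nat.cast_one,
    Nat.cast_zero, mul_ite, mul_one, mul_zero, Finset.sum_ite_eq', Finset.mem_univ, if_true]

end Tubes

section Serre

variable {Q : FinQuiver} {k : Type} [Field k] {X Y Z A B C : QRep Q k}

/-- `Ext¹(X, Y)`, as the space of cocycles modulo coboundaries. -/
abbrev ExtGroup (X Y : QRep Q k) : Type := ArrowMaps X Y ⧸ LinearMap.range (differential X Y)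

/-- The class of a cocycle in `Ext¹(X, Y)`. -/
def extClass (X Y : QRep Q k) : ArrowMaps X Y →ₗ[k] ExtGroup X Y := Submodule.mkQ _

theorem extClass_eq_zero_iff {ξ : ArrowMaps X Y} : extClass X Y ξ = 0 ↔ IsCoboundary ξ :=
  Submodule.Quotient.mk_eq_zero _

theorem isCoboundary_push_zero (ξ : ArrowMaps X Y) : IsCoboundary (push (0 : Hom Y Z) ξ) :=
  (map_zero (pushₗ ξ : Hom Y Z →ₗ[k] ArrowMaps X Z)).symm ▸ isCoboundary_zero

theorem isCoboundary_pull_zero (ξ : ArrowMaps Y Z) : IsCoboundary (pull (0 : Hom X Y) ξ) :=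
  (map_zero (pullₗ ξ : Hom X Y →ₗ[k] ArrowMaps X Z)).symm ▸ isCoboundary_zero

/-- The composition pairing `Ext¹(X, Y) × Hom(Y, Z) → Ext¹(X, Z)`. -/
def extPush (X Y Z : QRep Q k) : ExtGroup X Y →ₗ[k] Hom Y Z →ₗ[k] ExtGroup X Z :=
  Submodule.liftQ _ (LinearMap.mk₂ k (fun ξ u => extClass X Z (push u ξ))
    (fun ξ η u => by rw [map_add, map_add]) (fun c ξ u => by rw [map_smul, map_smul])
    (fun ξ u v => map_add ((extClass X Z).comp (pushₗ ξ)) u v)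
    (fun c ξ u => map_smul ((extClass X Z).comp (pushₗ ξ)) c u))
    fun _ hξ => LinearMap.ext fun u => extClass_eq_zero_iff.2 (IsCoboundary.push u hξ)

/-- The composition pairing `Ext¹(Y, Z) × Hom(X, Y) → Ext¹(X, Z)`. -/
def extPull (X Y Z : QRep Q k) : ExtGroup Y Z →ₗ[k] Hom X Y →ₗ[k] ExtGroup X Z :=
  Submodule.liftQ _ (LinearMap.mk₂ k (fun ξ u => extClass X Z (pull u ξ))
    (fun ξ η u => by rw [map_add, map_add]) (fun c ξ u => by rw [map_smul, map_smul])
    (fun ξ u v => map_add ((extClass X Z).comp (pullₗ ξ)) u v)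
    (fun c ξ u => map_smul ((extClass X Z).comp (pullₗ ξ)) c u))
    fun _ hξ => LinearMap.ext fun u => extClass_eq_zero_iff.2 (IsCoboundary.pull u hξ)

theorem exists_not_isCoboundary (h : extDim X Y = 1) : ∃ ξ : ArrowMaps X Y, ¬IsCoboundary ξ := by
  by_contra! hξ
  exact one_ne_zero (h.symm.trans (extVanishes_iff_extDim_eq_zero.1 hξ))

theorem extPush_separatingRight (hXZ : extDim X Z = 1)
    (h : ∀ f : Hom Y Z, f ≠ 0 → f.Surjective) : (extPush X Y Z).SeparatingRight := by
  intro u hu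
  by_contra hne
  obtain ⟨ξ, hξ⟩ := exists_not_isCoboundary hXZ
  obtain ⟨η, rfl⟩ := push_surjective (h u hne) ξ
  exact hξ (extClass_eq_zero_iff.1 (hu (extClass X Y η)))

theorem extPull_separatingRight (hXZ : extDim X Z = 1)
    (h : ∀ f : Hom X Y, f ≠ 0 → f.Injective) : (extPull X Y Z).SeparatingRight := by
  intro u hu
  by_contra hne
  obtain ⟨ξ, hξ⟩ := exists_not_isCoboundary hXZ
  obtain ⟨η, rfl⟩ := pull_surjective (h u hne) ξ
  exact hξ (extClass_eq_zero_iff.1 (hu (extClass Y Z η)))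

theorem exists_not_isCoboundary_push (hXZ : extDim X Z = 1)
    (h : ∀ f : Hom Y Z, f ≠ 0 → f.Surjective) (hdim : homDim Y Z = extDim X Y)
    {η : ArrowMaps X Y} (hη : ¬IsCoboundary η) : ∃ f : Hom Y Z, ¬IsCoboundary (push f η) := by
  by_contra! hpush
  exact hη (extClass_eq_zero_iff.1
    (separatingLeft_of_separatingRight hXZ (extPush_separatingRight hXZ h) hdim _
      fun f => extClass_eq_zero_iff.2 (hpush f)))

theorem exists_not_isCoboundary_pull (hXZ : extDim X Z = 1)
    (h : ∀ f : Hom X Y, f ≠ 0 → f.Injective) (hdim : homDim X Y = extDim Y Z)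
    {η : ArrowMaps Y Z} (hη : ¬IsCoboundary η) : ∃ f : Hom X Y, ¬IsCoboundary (pull f η) := by
  by_contra! hpull
  exact hη (extClass_eq_zero_iff.1
    (separatingLeft_of_separatingRight hXZ (extPull_separatingRight hXZ h) hdim _
      fun f => extClass_eq_zero_iff.2 (hpull f)))

theorem exists_eq_smul_of_homDim_eq_one (h : homDim X Y = 1) {f : Hom X Y} (hf : f ≠ 0)
    (g : Hom X Y) : ∃ c : k, g = c • f := by
  obtain ⟨c, hc⟩ := (finrank_eq_one_iff_of_nonzero' f hf).1 h g
  exact ⟨c, hc.symm⟩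

theorem eq_zero_of_isCoboundary_push (h : homDim Y Z = 1) {ξ : ArrowMaps X Y} {f g : Hom Y Z}
    (hf : ¬IsCoboundary (push f ξ)) (hg : IsCoboundary (push g ξ)) : g = 0 := by
  by_contra hne
  obtain ⟨c, rfl⟩ := exists_eq_smul_of_homDim_eq_one h hne f
  exact hf ((map_smul (pushₗ ξ) c g).symm ▸ Submodule.smul_mem _ c hg)

theorem eq_zero_of_isCoboundary_pull (h : homDim X Y = 1) {ξ : ArrowMaps Y Z} {f g : Hom X Y}
    (hf : ¬IsCoboundary (pull f ξ)) (hg : IsCoboundary (pull g ξ)) : g = 0 := by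
  by_contra hne
  obtain ⟨c, rfl⟩ := exists_eq_smul_of_homDim_eq_one h hne f
  exact hf ((map_smul (pullₗ ξ) c g).symm ▸ Submodule.smul_mem _ c hg)

theorem ShortExact.IsExtensionClass.homDim_to_middle_eq {s : ShortExact A B C} {ξ : ArrowMaps C A}
    (hξ : s.IsExtensionClass ξ) (h : ∀ w : Hom Y C, IsCoboundary (pull w ξ) → w = 0) :
    homDim Y B = homDim Y A := by
  have postcomp_eq_zero : s.g.postcomp Y = 0 :=
    LinearMap.ext fun w => h _ ((hξ.exists_lift_iff _ _).1 ⟨w, rfl⟩)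
  rw [s.homDim_to_middle, postcomp_eq_zero, LinearMap.range_zero, finrank_bot, add_zero]

theorem ShortExact.IsExtensionClass.homDim_from_middle_eq {s : ShortExact A B C}
    {ξ : ArrowMaps C A} (hξ : s.IsExtensionClass ξ)
    (h : ∀ w : Hom A Y, IsCoboundary (push w ξ) → w = 0) : homDim B Y = homDim C Y := by
  have precomp_eq_zero : s.f.precomp Y = 0 :=
    LinearMap.ext fun w => h _ ((hξ.exists_extension_iff _ _).1 ⟨w, rfl⟩)
  rw [s.homDim_from_middle, precomp_eq_zero, LinearMap.range_zero, finrank_bot, add_zero]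

variable {δ : Q.V → ℤ} {ι : Type} [DecidableEq ι] {S : ι → QRep Q k} {σ : Equiv.Perm ι}
  {n : Multiset ι}

namespace IsTube

theorem extDim_apply (hT : IsTube δ S σ) (i : ι) : extDim (S i) (S (σ i)) = 1 := by
  rw [hT.extDim_eq_ite, if_pos rfl]

variable [IsAlgClosed k] [Finite ι]

theorem homDim_to_eq_extDim_and (hT : IsTube δ S σ) (h : HasFiltration S X n) (i : ι) :
    homDim X (S (σ i)) = extDim (S i) X ∧ homDim (S i) X = extDim X (S (σ i)) := by
  have hX := h.isSemistable hT.isStable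
  have hto := finrank_le_of_separatingRight (hT.extDim_apply i)
    (extPush_separatingRight (hT.extDim_apply i) fun f hf =>
      (hT.isStable (σ i)).surjective_of_ne_zero hX hf)
  have hfrom := finrank_le_of_separatingRight (hT.extDim_apply i)
    (extPull_separatingRight (hT.extDim_apply i) fun f hf =>
      (hT.isStable i).injective_of_ne_zero hX hf)
  have euler_left := hT.eulerBilin_left h i
  have euler_right := hT.eulerBilin_right h i
  rw [FinQuiver.eulerBilin_apply, ← homDim_sub_extDim] at euler_left euler_right
  change homDim _ _ ≤ extDim _ _ at hto hfrom
  constructor <;> lia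

theorem exists_push (hT : IsTube δ S σ) (h : HasFiltration S X n) {i : ι} {η : ArrowMaps (S i) X}
    (hη : ¬IsCoboundary η) : ∃ f : Hom X (S (σ i)), ¬IsCoboundary (push f η) :=
  exists_not_isCoboundary_push (hT.extDim_apply i)
    (fun _ hf => (hT.isStable _).surjective_of_ne_zero (h.isSemistable hT.isStable) hf)
    (hT.homDim_to_eq_extDim_and h i).1 hη

theorem exists_pull (hT : IsTube δ S σ) (h : HasFiltration S X n) {i : ι}
    {η : ArrowMaps X (S (σ i))} (hη : ¬IsCoboundary η) :
    ∃ f : Hom (S i) X, ¬IsCoboundary (pull f η) :=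
  exists_not_isCoboundary_pull (hT.extDim_apply i)
    (fun _ hf => (hT.isStable _).injective_of_ne_zero (h.isSemistable hT.isStable) hf)
    (hT.homDim_to_eq_extDim_and h i).2 hη

end IsTube

end Serre

section TopAndSocle

variable {Q : FinQuiver} {k : Type} [Field k] {δ : Q.V → ℤ} {ι : Type}
  [DecidableEq ι] {S : ι → QRep Q k} {σ : Equiv.Perm ι} {V W X : QRep Q k} {t a i : ι}

/-- Representations filtered by the `S i` whose top `S t` and socle `S a` are simple, as expressed
by the spaces of homomorphisms to and from the `S i`. In a tube these are the uniserial objects. -/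
structure HasSimpleTopSocle (S : ι → QRep Q k) (V : QRep Q k) (t a : ι) : Prop where
  exists_hasFiltration : ∃ n, HasFiltration S V n
  homDim_to : ∀ j, homDim V (S j) = if j = t then 1 else 0
  homDim_from : ∀ j, homDim (S j) V = if j = a then 1 else 0

namespace HasSimpleTopSocle

theorem isSemistable (h : HasSimpleTopSocle S V t a) (hS : ∀ i, IsStable δ (S i)) :
    IsSemistable δ V :=
  h.exists_hasFiltration.elim fun _ hn => hn.isSemistable hS

theorem eq_top (h : HasSimpleTopSocle S V t a) {f : Hom V (S i)} (hf : f ≠ 0) : i = t := by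
  by_contra hi
  exact hf (homDim_eq_zero_iff.1 ((h.homDim_to i).trans (if_neg hi)) f)

theorem eq_socle (h : HasSimpleTopSocle S V t a) {f : Hom (S i) V} (hf : f ≠ 0) : i = a := by
  by_contra hi
  exact hf (homDim_eq_zero_iff.1 ((h.homDim_from i).trans (if_neg hi)) f)

theorem homDim_top (h : HasSimpleTopSocle S V t a) : homDim V (S t) = 1 :=
  (h.homDim_to t).trans (if_pos rfl)

theorem homDim_socle (h : HasSimpleTopSocle S V t a) : homDim (S a) V = 1 :=
  (h.homDim_from a).trans (if_pos rfl)

theorem not_isZero (h : HasSimpleTopSocle S V t a) : ¬IsZero V := fun hz =>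
  one_ne_zero (h.homDim_top.symm.trans
    (homDim_eq_zero_iff.2 fun f => Hom.eq_zero_of_isZero_left hz f))

theorem of_isStableFamily [IsAlgClosed k] (hS : IsStableFamily δ S) (i : ι) :
    HasSimpleTopSocle S (S i) i i where
  exists_hasFiltration := ⟨_, HasFiltration.singleton i⟩
  homDim_to j := by simp only [hS.homDim_eq_ite, eq_comm]
  homDim_from j := hS.homDim_eq_ite j i

theorem congr (h : HasSimpleTopSocle S V t a) {f : Hom V X} (hi : f.Injective)
    (hs : f.Surjective) : HasSimpleTopSocle S X t a := by
  obtain ⟨g, hfg, hgf⟩ := Hom.exists_inverse hi hs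
  obtain ⟨n, hn⟩ := h.exists_hasFiltration
  refine ⟨⟨n, hn.congr hi hs⟩, fun j => ?_, fun j => ?_⟩
  · rw [← h.homDim_to]
    exact le_antisymm (hs.homDim_le _) ((Hom.surjective_of_comp_eq_id hgf).homDim_le _)
  · rw [← h.homDim_from]
    exact le_antisymm ((Hom.injective_of_comp_eq_id hfg).homDim_le _) (hi.homDim_le _)

variable [IsAlgClosed k] [Finite ι]

theorem extend_top (hT : IsTube δ S σ) (h : HasSimpleTopSocle S V t a) {s : ShortExact V W (S i)}
    {ξ : ArrowMaps (S i) V} (hξ : s.IsExtensionClass ξ) (hne : ¬IsCoboundary ξ) :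
    HasSimpleTopSocle S W i a := by
  obtain ⟨n, hn⟩ := h.exists_hasFiltration
  obtain ⟨f, hf⟩ := hT.exists_push hn hne
  obtain rfl : σ i = t := h.eq_top (f := f) (by rintro rfl; exact hf (isCoboundary_push_zero ξ))
  refine ⟨⟨_, .cons s hn⟩, fun j => ?_, fun j => ?_⟩
  · have connecting_injective (w : Hom V (S j)) (hw : IsCoboundary (push w ξ)) : w = 0 := by
      by_contra hw0
      obtain rfl := h.eq_top hw0
      exact hw0 (eq_zero_of_isCoboundary_push h.homDim_top hf hw)
    simp only [hξ.homDim_from_middle_eq connecting_injective, hT.homDim_eq_ite, eq_comm]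
  · rw [← h.homDim_from]
    refine hξ.homDim_to_middle_eq fun w hw => ?_
    by_cases hji : j = i
    · subst hji
      exact eq_zero_of_isCoboundary_pull (hT.isStable j).homDim_self (f := Hom.id _) hne hw
    · exact homDim_eq_zero_iff.1 (hT.homDim_eq_zero hji) w

theorem extend_socle (hT : IsTube δ S σ) (h : HasSimpleTopSocle S V t a)
    {s : ShortExact (S i) W V} {ξ : ArrowMaps V (S i)} (hξ : s.IsExtensionClass ξ)
    (hne : ¬IsCoboundary ξ) : HasSimpleTopSocle S W t i := by
  obtain ⟨i, rfl⟩ := σ.surjective i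
  obtain ⟨n, hn⟩ := h.exists_hasFiltration
  obtain ⟨f, hf⟩ := hT.exists_pull hn hne
  obtain rfl : i = a := h.eq_socle (f := f) (by rintro rfl; exact hf (isCoboundary_pull_zero ξ))
  refine ⟨⟨_, .extension s (.singleton _) hn⟩, fun j => ?_, fun j => ?_⟩
  · rw [← h.homDim_to]
    refine hξ.homDim_from_middle_eq fun w hw => ?_
    by_cases hij : σ i = j
    · subst hij
      exact eq_zero_of_isCoboundary_push (hT.isStable _).homDim_self (f := Hom.id _) hne hw
    · exact homDim_eq_zero_iff.1 (hT.homDim_eq_zero hij) w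
  · rw [← hT.homDim_eq_ite]
    refine hξ.homDim_to_middle_eq fun w hw => ?_
    by_contra hw0
    obtain rfl := h.eq_socle hw0
    exact hw0 (eq_zero_of_isCoboundary_pull h.homDim_socle hf hw)

end HasSimpleTopSocle

end TopAndSocle
end QRep

theorem exists_forall_le_of_bounded {α : Type*} {p : α → Prop} (f : α → ℕ) {N : ℕ}
    (h : ∃ x, p x) (hN : ∀ x, p x → f x ≤ N) : ∃ x, p x ∧ ∀ y, p y → f y ≤ f x := by
  obtain ⟨x, hx, hmin⟩ := WellFounded.has_min (measure fun x => N - f x).wf {x | p x} h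
  refine ⟨x, hx, fun y hy => ?_⟩
  have hle : N - f x ≤ N - f y := not_lt.1 (hmin y hy)
  have := hN y hy
  lia

namespace QRep

section Uniserial

variable {Q : FinQuiver} {k : Type} [Field k] {A B C V X Y Z A' B' C' : QRep Q k}

theorem totalDim_pos (h : ¬IsZero X) : 0 < totalDim X :=
  Nat.pos_of_ne_zero (mt isZero_iff_totalDim.2 h)

theorem ShortExact.surjective_of_comp (s : ShortExact A' B' C') {f : Hom A B} {w : Hom B B'}
    {p : Hom A A'} (hp : p.Surjective) (h : w.comp f = s.f.comp p)
    (hg : (s.g.comp w).Surjective) : w.Surjective := by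
  intro i x
  obtain ⟨y, hy⟩ := hg i (s.g.1 i x)
  replace hy : s.g.1 i (w.1 i y) = s.g.1 i x := hy
  obtain ⟨z, hz⟩ := (s.exact i (x - w.1 i y)).1 (by rw [map_sub, hy, sub_self])
  obtain ⟨z, rfl⟩ := hp i z
  have hwz : w.1 i (f.1 i z) = s.f.1 i (p.1 i z) := Hom.congr h i z
  exact ⟨f.1 i z + y, by rw [map_add, hwz, hz, sub_add_cancel]⟩

theorem ShortExact.injective_of_comp (s : ShortExact A B C) {w : Hom B Y} {g : Hom Y Z}
    {u : Hom C Z} (hu : u.Injective) (h : g.comp w = u.comp s.g) (hf : (w.comp s.f).Injective) :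
    w.Injective := by
  intro i
  rw [injective_iff_map_eq_zero]
  intro x hx
  have hux : g.1 i (w.1 i x) = u.1 i (s.g.1 i x) := Hom.congr h i x
  rw [hx, map_zero] at hux
  obtain ⟨y, rfl⟩ := (s.exact i x).1 (hu i (by rw [← hux, map_zero]))
  rw [hf i (hx.trans (map_zero ((w.comp s.f).1 i)).symm), map_zero]

variable {δ : Q.V → ℤ} {ι : Type} {S : ι → QRep Q k} {n : Multiset ι} {t a i : ι}

/-- `V` is a quotient of a semistable subrepresentation of `X`. -/
def IsSemistableSubquotient (δ : Q.V → ℤ) (V X : QRep Q k) : Prop :=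
  ∃ (A : QRep Q k) (u : Hom A X) (p : Hom A V), u.Injective ∧ p.Surjective ∧ IsSemistable δ A

namespace IsSemistableSubquotient

theorem totalDim_le (h : IsSemistableSubquotient δ V X) : totalDim V ≤ totalDim X := by
  obtain ⟨A, u, p, hu, hp, -⟩ := h
  exact hp.totalDim_le.trans hu.totalDim_le

theorem of_quotient_of_sub (hX : IsSemistable δ X) (hY : IsSemistable δ Y) (hV : IsSemistable δ V)
    {q : Hom X Y} (hq : q.Surjective) {w : Hom V Y} (hw : w.Injective) :
    IsSemistableSubquotient δ V X := by
  let t := ShortExact.ofSurjective q hq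
  let p := ShortExact.ofInjective w hw
  let r := ShortExact.ofSurjective (p.g.comp t.g) (Hom.Surjective.comp p.surj t.surj)
  obtain ⟨s, -⟩ := t.exists_preimage p r rfl
  exact ⟨_, r.f, s.g, r.inj, s.surj, .middle s (.left t hX hY) hV⟩

end IsSemistableSubquotient

theorem HasFiltration.exists_larger_sub (hS : ∀ i, IsStable δ (S i)) (hX : HasFiltration S X n)
    (hA : IsSemistable δ A) {u : Hom A X} (hu : u.Injective) (hus : ¬u.Surjective) :
    ∃ (B : QRep Q k) (i : ι) (_ : ShortExact A B (S i)) (v : Hom B X),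
      v.Injective ∧ IsSemistable δ B := by
  let r := ShortExact.ofInjective u hu
  have hC := IsSemistable.right r hA (hX.isSemistable hS)
  obtain ⟨_, _, -, -, hC'⟩ := hX.exists_add hS r hA
  obtain ⟨i, f, hf⟩ := hC'.exists_ne_zero_from hS (mt r.f_surjective hus)
  let p := ShortExact.ofInjective f ((hS i).injective_of_ne_zero hC hf)
  let q := ShortExact.ofSurjective (p.g.comp r.g) (Hom.Surjective.comp p.surj r.surj)
  obtain ⟨s, -⟩ := r.exists_preimage p q rfl
  exact ⟨_, i, s, q.f, q.inj, .middle s hA (hS i).toIsSemistable⟩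

theorem HasFiltration.exists_larger_quotient (hS : ∀ i, IsStable δ (S i))
    (hX : HasFiltration S X n) (hY : IsSemistable δ Y) {q : Hom X Y} (hq : q.Surjective)
    (hqi : ¬q.Injective) :
    ∃ (Z : QRep Q k) (i : ι) (_ : ShortExact (S i) Z Y) (v : Hom X Z),
      v.Surjective ∧ IsSemistable δ Z := by
  let r := ShortExact.ofSurjective q hq
  have hK := IsSemistable.left r (hX.isSemistable hS) hY
  obtain ⟨_, _, -, hK', -⟩ := hX.exists_add hS r hK
  obtain ⟨i, f, hf⟩ := hK'.exists_ne_zero_to hS (mt r.g_injective hqi)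
  let p := ShortExact.ofSurjective f ((hS i).surjective_of_ne_zero hK hf)
  let t := ShortExact.ofInjective (r.f.comp p.f) (Hom.Injective.comp r.inj p.inj)
  obtain ⟨s, -⟩ := r.exists_quotient p t rfl
  exact ⟨_, i, s, t.g, t.surj, .middle s (hS i).toIsSemistable hY⟩

variable [IsAlgClosed k] [DecidableEq ι] [Finite ι] {σ : Equiv.Perm ι}

namespace HasSimpleTopSocle

theorem exists_extension_or_larger_quotient (hT : IsTube δ S σ) (hV : HasSimpleTopSocle S V t a)
    (s : ShortExact A B (S i)) (hB : IsSemistable δ B) {p : Hom A V} (hp : p.Surjective) :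
    (∃ w : Hom B V, w.comp s.f = p) ∨ ∃ W, HasSimpleTopSocle S W i a ∧ totalDim V < totalDim W ∧
      ∃ w : Hom B W, w.Surjective := by
  obtain ⟨ξ, hξ⟩ := s.exists_isExtensionClass
  by_cases hpξ : IsCoboundary (push p ξ)
  · exact .inl ((hξ.exists_extension_iff _ p).2 hpξ)
  let s' := ShortExact.ofCocycle (push p ξ)
  have hs' : s'.IsExtensionClass (push p ξ) := ShortExact.isExtensionClass_ofCocycle _
  refine .inr ⟨_, hV.extend_top hT hs' hpξ, ?_, ?_⟩
  · rw [s'.totalDim]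
    exact Nat.lt_add_of_pos_right (totalDim_pos (hT.isStable i).not_isZero)
  obtain ⟨w, hw⟩ := (hξ.exists_extension_iff _ (s'.f.comp p)).2
    ((hs'.exists_extension_iff _ s'.f).1 ⟨Hom.id _, rfl⟩)
  refine ⟨w, s'.surjective_of_comp hp hw ((hT.isStable i).surjective_of_ne_zero hB fun h0 => ?_)⟩
  obtain ⟨v, rfl⟩ := s'.exists_f_comp_eq w h0
  exact hpξ ((hξ.exists_extension_iff _ p).1 ⟨v, Hom.Injective.comp_left_cancel s'.inj hw⟩)

theorem exists_lift_or_larger_sub (hT : IsTube δ S σ) (hV : HasSimpleTopSocle S V t a)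
    (s : ShortExact (S i) Z Y) (hZ : IsSemistable δ Z) {c : Hom V Y} (hc : c.Injective) :
    (∃ w : Hom V Z, s.g.comp w = c) ∨ ∃ W, HasSimpleTopSocle S W t i ∧ totalDim V < totalDim W ∧
      ∃ w : Hom W Z, w.Injective := by
  obtain ⟨ξ, hξ⟩ := s.exists_isExtensionClass
  by_cases hcξ : IsCoboundary (pull c ξ)
  · exact .inl ((hξ.exists_lift_iff _ c).2 hcξ)
  let s' := ShortExact.ofCocycle (pull c ξ)
  have hs' : s'.IsExtensionClass (pull c ξ) := ShortExact.isExtensionClass_ofCocycle _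
  refine .inr ⟨_, hV.extend_socle hT hs' hcξ, ?_, ?_⟩
  · rw [s'.totalDim]
    exact Nat.lt_add_of_pos_left (totalDim_pos (hT.isStable i).not_isZero)
  obtain ⟨w, hw⟩ := (hξ.exists_lift_iff _ (c.comp s'.g)).2
    ((hs'.exists_lift_iff _ s'.g).1 ⟨Hom.id _, rfl⟩)
  refine ⟨w, s'.injective_of_comp hc hw ((hT.isStable i).injective_of_ne_zero hZ fun h0 => ?_)⟩
  obtain ⟨v, rfl⟩ := s'.exists_comp_g_eq w h0
  exact hcξ ((hξ.exists_lift_iff _ c).1 ⟨v, Hom.Surjective.comp_right_cancel s'.surj hw⟩)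

section Maximal

variable (hT : IsTube δ S σ) (hX : HasFiltration S X n) (hV : HasSimpleTopSocle S V t a)
  (hmax : ∀ {W t a}, HasSimpleTopSocle S W t a → IsSemistableSubquotient δ W X →
    totalDim W ≤ totalDim V)
include hT hX hV hmax

theorem exists_surjective_of_maximal (hVX : IsSemistableSubquotient δ V X) :
    ∃ p : Hom X V, p.Surjective := by
  obtain ⟨A, ⟨u, p, hu, hp, hA⟩, hAmax⟩ := exists_forall_le_of_bounded totalDim hVX
    fun A ⟨u, _, hu, _⟩ => hu.totalDim_le
  by_cases hus : u.Surjective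
  · obtain ⟨v, -, hvu⟩ := Hom.exists_inverse hu hus
    exact ⟨p.comp v, hp.comp (Hom.surjective_of_comp_eq_id hvu)⟩
  obtain ⟨B, i, s, v, hv, hB⟩ := hX.exists_larger_sub hT.isStable hA hu hus
  obtain ⟨w, rfl⟩ | ⟨W, hW, hlt, w, hw⟩ := hV.exists_extension_or_larger_quotient hT s hB hp
  · have hle := hAmax B ⟨v, w, hv, .of_comp hp, hB⟩
    rw [s.totalDim] at hle
    have := totalDim_pos (hT.isStable i).not_isZero
    lia
  · exact absurd (hmax hW ⟨B, v, w, hv, hw, hB⟩) hlt.not_ge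

theorem exists_retraction_of_maximal {p : Hom X V} (hp : p.Surjective) :
    ∃ (j : Hom V X) (r : Hom X V), r.comp j = Hom.id V := by
  have hXs := hX.isSemistable hT.isStable
  obtain ⟨Y, ⟨q, c, b, hq, hbc, hY⟩, hYmax⟩ := exists_forall_le_of_bounded totalDim
    (p := fun Y => ∃ (q : Hom X Y) (c : Hom V Y) (b : Hom Y V),
      q.Surjective ∧ b.comp c = Hom.id V ∧ IsSemistable δ Y)
    ⟨V, p, Hom.id V, Hom.id V, hp, rfl, hV.isSemistable hT.isStable⟩
    fun Y ⟨q, _, _, hq, _⟩ => hq.totalDim_le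
  by_cases hqi : q.Injective
  · obtain ⟨v, hqv, -⟩ := Hom.exists_inverse hqi hq
    refine ⟨v.comp c, b.comp q, ?_⟩
    rw [← hbc, Hom.comp_assoc, ← Hom.comp_assoc q v c, hqv, Hom.id_comp]
  obtain ⟨Z, i, s, q', hq', hZ⟩ := hX.exists_larger_quotient hT.isStable hY hq hqi
  obtain ⟨w, rfl⟩ | ⟨W, hW, hlt, w, hw⟩ :=
    hV.exists_lift_or_larger_sub hT s hZ (Hom.injective_of_comp_eq_id hbc)
  · have hle := hYmax Z ⟨q', w, b.comp s.g, hq', hbc, hZ⟩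
    rw [s.totalDim] at hle
    have := totalDim_pos (hT.isStable i).not_isZero
    lia
  · exact absurd (hmax hW (.of_quotient_of_sub hXs hZ (hW.isSemistable hT.isStable) hq' hw))
      hlt.not_ge

end Maximal

end HasSimpleTopSocle

theorem Indecomposable.exists_hasSimpleTopSocle (hT : IsTube δ S σ) (hX : HasFiltration S X n)
    (hi : X.Indecomposable) : ∃ t a, HasSimpleTopSocle S X t a := by
  have hXs := hX.isSemistable hT.isStable
  obtain ⟨i, f, hf⟩ := hX.exists_ne_zero_to hT.isStable (Indecomposable.not_isZero hi)
  obtain ⟨V, ⟨⟨t, a, hV⟩, hVX⟩, hmax⟩ := exists_forall_le_of_bounded totalDim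
    (p := fun V => (∃ t a, HasSimpleTopSocle S V t a) ∧ IsSemistableSubquotient δ V X)
    ⟨S i, ⟨i, i, .of_isStableFamily hT.toIsStableFamily i⟩, X, Hom.id X, f,
      fun _ => Function.injective_id, (hT.isStable i).surjective_of_ne_zero hXs hf, hXs⟩
    fun V hV => hV.2.totalDim_le
  replace hmax {W t a} (hW : HasSimpleTopSocle S W t a) (hWX : IsSemistableSubquotient δ W X) :
      totalDim W ≤ totalDim V := hmax W ⟨⟨t, a, hW⟩, hWX⟩
  obtain ⟨p, hp⟩ := hV.exists_surjective_of_maximal hT hX hmax hVX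
  obtain ⟨j, r, hrj⟩ := hV.exists_retraction_of_maximal hT hX hmax hp
  obtain hzero | ⟨hj, -⟩ := Indecomposable.isZero_or_bijective_of_retract hi j r hrj
  · exact absurd hzero hV.not_isZero
  · exact ⟨t, a, hV.congr (Hom.injective_of_comp_eq_id hrj) hj⟩

end Uniserial

section Multiplicities

variable {Q : FinQuiver} {k : Type} [Field k] {δ : Q.V → ℤ} {ι : Type} {S : ι → QRep Q k}
  {A V X : QRep Q k} {n : Multiset ι} {t a i j : ι}

theorem HasFiltration.exists_mem_ne_zero (h : HasFiltration S V n) {f : Hom V X} (hf : f ≠ 0) :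
    ∃ i ∈ n, ∃ g : Hom (S i) X, g ≠ 0 := by
  induction h with
  | of_isZero hz => exact absurd (Hom.eq_zero_of_isZero_left hz f) hf
  | @cons _ _ i n s _ ih =>
    by_cases h0 : f.comp s.f = 0
    · obtain ⟨v, rfl⟩ := s.exists_comp_g_eq f h0
      exact ⟨i, Multiset.mem_cons_self _ _, v, fun hv => hf (by rw [hv, Hom.zero_comp])⟩
    · obtain ⟨j, hj, hg⟩ := ih h0
      exact ⟨j, Multiset.mem_cons_of_mem hj, hg⟩

theorem HasFiltration.mem_of_ne_zero (hS : IsStableFamily δ S) (h : HasFiltration S V n)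
    {f : Hom V (S j)} (hf : f ≠ 0) : j ∈ n := by
  obtain ⟨i, hi, g, hg⟩ := h.exists_mem_ne_zero hf
  obtain rfl | hij := eq_or_ne i j
  · exact hi
  · exact absurd (homDim_eq_zero_iff.1 (hS.homDim_eq_zero hij) g) hg

variable [DecidableEq ι]

theorem HasSimpleTopSocle.comp_eq_zero (hS : ∀ i, IsStable δ (S i)) (h : HasSimpleTopSocle S X t a)
    (hA : IsSemistable δ A) {g : Hom A X} (hg : ¬g.Surjective) (f : Hom X (S j)) :
    f.comp g = 0 := by
  obtain ⟨n, hn⟩ := h.exists_hasFiltration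
  have hX := hn.isSemistable hS
  by_cases hf : f = 0
  · rw [hf, Hom.zero_comp]
  let r := ShortExact.ofInjective _ g.range.incl_injective
  obtain ⟨_, _, -, -, hC⟩ :=
    hn.exists_add hS r (hX.of_injective g.range.incl_injective (hA.defect_range hX g))
  obtain ⟨i, q, hq⟩ := hC.exists_ne_zero_to hS fun hz =>
    hg (Hom.Surjective.comp (r.f_surjective hz) g.rangeRestrict_surjective)
  have hqr : q.comp r.g ≠ 0 := fun h0 =>
    hq (Hom.Surjective.comp_right_cancel r.surj (h0.trans (Hom.zero_comp _).symm))
  obtain rfl := h.eq_top hqr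
  obtain rfl := h.eq_top hf
  obtain ⟨c, rfl⟩ := exists_eq_smul_of_homDim_eq_one h.homDim_top hqr f
  have hrg : r.g.comp g = 0 := congrArg (fun u => Hom.comp u g.rangeRestrict) r.g_comp_f
  rw [Hom.smul_comp, Hom.comp_assoc, hrg, Hom.comp_zero, smul_zero]

variable [IsAlgClosed k] {σ : Equiv.Perm ι}

section Finite

variable [Finite ι]

theorem HasSimpleTopSocle.homDim_eq_count (hT : IsTube δ S σ) (h : HasSimpleTopSocle S X t a)
    (hA : HasFiltration S A n) {u : Hom A X} (hu : u.Injective) : homDim A X = n.count a := by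
  obtain ⟨_, hX⟩ := h.exists_hasFiltration
  induction hA with
  | of_isZero hz =>
    rw [homDim_eq_zero_iff.2 fun f => Hom.eq_zero_of_isZero_left hz f, Multiset.count_zero]
  | @cons A _ i n s hA ih =>
    have not_surjective (g : Hom A X) : ¬g.Surjective := fun hg => by
      have := hu.totalDim_le
      rw [s.totalDim] at this
      have := hg.totalDim_le
      have := totalDim_pos (hT.isStable i).not_isZero
      lia
    obtain ⟨ξ, hξ⟩ := s.exists_isExtensionClass
    have push_isCoboundary (g : Hom A X) : IsCoboundary (push g ξ) := by
      by_contra hg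
      obtain ⟨f, hf⟩ := hT.exists_push hX hg
      have hfg := h.comp_eq_zero hT.isStable (hA.isSemistable hT.isStable) (not_surjective g) f
      exact hf (by
        change IsCoboundary (push (f.comp g) ξ)
        exact hfg ▸ isCoboundary_push_zero ξ)
    rw [(s.homDim_from_middle_eq_iff X).2
      fun g => (hξ.exists_extension_iff _ g).2 (push_isCoboundary g),
      ih (Hom.Injective.comp hu s.inj), h.homDim_from, Multiset.count_cons, add_comm]
    simp only [eq_comm]

theorem HasSimpleTopSocle.sameCycle (hT : IsTube δ S σ) (h : HasSimpleTopSocle S X t a)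
    (hA : HasFiltration S A n) {u : Hom A X} (hu : u.Injective) (hi : i ∈ n) :
    σ.SameCycle a i := by
  induction hA generalizing i with
  | of_isZero => exact absurd hi (Multiset.notMem_zero i)
  | @cons A _ j n s hA ih =>
    replace ih {i} := ih (i := i) (Hom.Injective.comp hu s.inj)
    obtain rfl | hi := Multiset.mem_cons.1 hi
    swap
    · exact ih hi
    obtain ⟨ξ, hξ⟩ := s.exists_isExtensionClass
    by_cases hsplit : IsCoboundary ξ
    · obtain ⟨w, hw⟩ := (hξ.exists_lift_iff _ (Hom.id _)).2 hsplit
      obtain rfl := h.eq_socle (f := u.comp w) fun h0 => (hT.isStable _).not_isZero fun l _ =>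
        Hom.Injective.comp hu (Hom.injective_of_comp_eq_id hw) l (by rw [h0]; rfl)
      exact Equiv.Perm.SameCycle.refl _ _
    · obtain ⟨f, hf⟩ := hT.exists_push hA hsplit
      have hf0 : f ≠ 0 := by
        rintro rfl
        exact hf (isCoboundary_push_zero ξ)
      exact Equiv.Perm.sameCycle_apply_right.1 (ih (hA.mem_of_ne_zero hT.toIsStableFamily hf0))

theorem IsTube.count_eq_of_sameCycle (h : Q.IsAffine δ) (hT : IsTube δ S σ)
    (hX : HasFiltration S X n) {m : ℤ} (hdim : X.dimVec = m • δ) (ha : σ.SameCycle a i) :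
    n.count i = n.count a := by
  have count_apply (i) : n.count (σ i) = n.count i := by
    have := hT.eulerBilin_right hX i
    rw [hdim, map_smul, h.eulerBilin_delta_right, (hT.isStable i).defect_eq_zero, neg_zero,
      smul_zero] at this
    lia
  obtain ⟨l, -, rfl⟩ := ha.exists_pow_eq'
  clear ha
  induction l with
  | zero => rfl
  | succ l ih => rw [pow_succ', Equiv.Perm.mul_apply, count_apply, ih]

end Finite

variable [Fintype ι]

/-- The sum of the dimension vectors of the `S i` with `i` in the `σ`-cycle of `a`. -/
noncomputable def cycleDimVec (S : ι → QRep Q k) (σ : Equiv.Perm ι) (a : ι) : Q.V → ℤ :=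
  ∑ i with σ.SameCycle a i, (S i).dimVec

theorem IsTube.dimVec_eq_smul_cycleDimVec (h : Q.IsAffine δ) (hT : IsTube δ S σ)
    (hX : HasFiltration S X n) {m : ℤ} (hdim : X.dimVec = m • δ)
    (hn : ∀ i ∈ n, σ.SameCycle a i) : X.dimVec = (n.count a : ℤ) • cycleDimVec S σ a := by
  rw [hX.dimVec_eq_sum_count, cycleDimVec, Finset.smul_sum, Finset.sum_filter]
  refine Finset.sum_congr rfl fun i _ => ?_
  split_ifs with hi
  · rw [hT.count_eq_of_sameCycle h hX hdim hi]
  · rw [Multiset.count_eq_zero_of_notMem (mt (hn i) hi), Nat.cast_zero, zero_smul]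

theorem IsTube.cycleDimVec_le (h : Q.IsAffine δ) (hT : IsTube δ S σ)
    (hX : HasFiltration S X n) {m : ℤ} (hdim : X.dimVec = m • δ) (ha : a ∈ n) (v : Q.V) :
    cycleDimVec S σ a v ≤ X.dimVec v := by
  rw [hX.dimVec_eq_sum_count, cycleDimVec, Finset.sum_apply, Finset.sum_apply, Finset.sum_filter]
  refine Finset.sum_le_sum fun i _ => ?_
  rw [Pi.smul_apply, smul_eq_mul]
  split_ifs with hi
  · have : 0 < n.count i := hT.count_eq_of_sameCycle h hX hdim hi ▸ Multiset.count_pos.2 ha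
    exact le_mul_of_one_le_left (dimVec_nonneg _ _) (mod_cast this)
  · exact mul_nonneg (Int.natCast_nonneg _) (dimVec_nonneg _ _)

end Multiplicities

section Regular

variable {Q : FinQuiver} {k : Type} [Field k] {δ : Q.V → ℤ} {X Y : QRep Q k} {m : ℕ}

theorem Hom.Injective.dimVec_range {f : Hom X Y} (hf : f.Injective) : f.range.dimVec = X.dimVec :=
  funext fun i => congrArg Nat.cast (LinearMap.finrank_range_of_inj (hf i))

theorem Indecomposable.isSemistable (h : Q.IsAffine δ) (hm : 1 ≤ m) (hX : X.Indecomposable)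
    (hdim : X.dimVec = m • δ) : IsSemistable δ X where
  defect_eq_zero := by rw [hdim, map_nsmul, h.eulerBilin_delta_delta, smul_zero]
  defect_sub_nonpos {_ u} hu :=
    hu.dimVec_range ▸ hX.eulerBilin_delta_dimVec_nonpos h hm hdim (Hom.range u)

theorem Indecomposable.homDim_self_of_source [IsAlgClosed k] (h : Q.IsAffine δ) {e : Q.V}
    (he : δ e = 1) (hs : ∀ a, Q.tgt a ≠ e) (hm : 1 ≤ m) (hX : X.Indecomposable)
    (hdim : X.dimVec = m • δ) : homDim X X = m := by
  have hXs := hX.isSemistable h hm hdim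
  obtain ⟨Z, hZdim, hZs, f, hf⟩ := hXs.exists_dimVec_eq_delta h he hs hm hdim
  let s : ShortExact Z (extensionRep 0) X := ShortExact.ofCocycle 0
  obtain ⟨ι, _, _, S, n, hS, hn, hall⟩ := (IsSemistable.middle s hZs hXs).exists_hasFiltration
  rw [← natCast_zsmul] at hdim
  obtain ⟨σ, hT⟩ := hS.exists_isTube h hn hall (m := 1 + m)
    (by rw [s.dimVec, hZdim, hdim, add_smul, one_smul])
  obtain ⟨nZ, nX, -, hnZ, hnX⟩ := hn.exists_add hS.isStable s hZs
  obtain ⟨t, a, hta⟩ := hX.exists_hasSimpleTopSocle hT hnX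
  have hid : (Hom.id X).Injective := fun _ => Function.injective_id
  have ha : a ∈ nZ := by
    obtain ⟨i, hi, g, hg⟩ := hnZ.exists_mem_ne_zero hf
    exact hta.eq_socle hg ▸ hi
  have cycle_le : cycleDimVec S σ a e ≤ 1 := by
    have := hT.cycleDimVec_le h hnZ (m := 1) (hZdim.trans (one_smul ℤ δ).symm) ha e
    rwa [hZdim, he] at this
  have count_mul : (m : ℤ) = nX.count a * cycleDimVec S σ a e := by
    have := congrFun (hT.dimVec_eq_smul_cycleDimVec h hnX hdim
      fun i hi => hta.sameCycle hT hnX hid hi) e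
    rwa [hdim, Pi.smul_apply, he, smul_eq_mul, mul_one, Pi.smul_apply, smul_eq_mul] at this
  rw [hta.homDim_eq_count hT hnX hid]
  have cycle_eq : cycleDimVec S σ a e = 1 := by
    have : 0 < (nX.count a : ℤ) * cycleDimVec S σ a e := by lia
    exact cycle_le.antisymm (pos_of_mul_pos_right this (Int.natCast_nonneg _))
  rw [cycle_eq, mul_one] at count_mul
  exact_mod_cast count_mul.symm

end Regular
end QRep

namespace FinQuiver

section Opposite

variable (Q : FinQuiver)

/-- The opposite quiver. It is reducible so that instances on `Q.V` apply to its vertices. -/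
@[reducible] def op : FinQuiver := { Q with src := Q.tgt, tgt := Q.src }

theorem eulerForm_op (x y : Q.V → ℤ) : Q.op.eulerForm x y = Q.eulerForm y x := by
  simp only [eulerForm, mul_comm]

variable {Q} in
theorem IsAffine.op {δ : Q.V → ℤ} (h : Q.IsAffine δ) : Q.op.IsAffine δ where
  pos := h.pos
  titsForm_nonneg x := (h.titsForm_nonneg x).trans_eq (Q.eulerForm_op x x).symm
  radical_iff x := by
    simp only [Q.eulerForm_op, add_comm (Q.eulerForm _ x), h.radical_iff]
  exists_order := by
    obtain ⟨r, hr, hlt⟩ := h.exists_order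
    have hle (v) : r v ≤ Finset.univ.sup r := Finset.le_sup (Finset.mem_univ v)
    refine ⟨fun v => Finset.univ.sup r - r v, fun v w hvw => hr ?_, fun a => ?_⟩
    · have := hle v
      have := hle w
      dsimp only at hvw
      lia
    · have := hlt a
      have := hle (Q.tgt a)
      dsimp only
      lia

end Opposite
end FinQuiver

namespace QRep

section Duality

variable {Q : FinQuiver} {k : Type} [Field k] {X Y : QRep Q k}

/-- The dual of a representation, a representation of the opposite quiver. -/
def dual (X : QRep Q k) : QRep Q.op k where
  carrier (i : Q.V) := Module.Dual k (X.carrier i)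
  acgI (i : Q.V) := inferInstanceAs (AddCommGroup (Module.Dual k (X.carrier i)))
  modI (i : Q.V) := inferInstanceAs (Module k (Module.Dual k (X.carrier i)))
  fdI (i : Q.V) := inferInstanceAs (FiniteDimensional k (Module.Dual k (X.carrier i)))
  map a := (X.map a).dualMap

theorem dimVec_dual (X : QRep Q k) : X.dual.dimVec = X.dimVec :=
  funext fun (i : Q.V) => congrArg Nat.cast (Subspace.dual_finrank_eq (V := X.carrier i))

/-- The subrepresentation of `X` annihilated by a subrepresentation of its dual. -/
def _root_.SubRep.dualCoannihilator (U : SubRep X.dual) : SubRep X where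
  mod (i : Q.V) := Submodule.dualCoannihilator (M := X.carrier i) (U.mod i)
  stable a _ hx := (Submodule.mem_dualCoannihilator _).2 fun φ hφ =>
    (Submodule.mem_dualCoannihilator _).1 hx _ (U.stable a φ hφ)

theorem Indecomposable.dual (hX : X.Indecomposable) : X.dual.Indecomposable := by
  refine ⟨?_, fun U W hUW => ?_⟩
  · obtain ⟨i, hi⟩ := hX.1
    exact ⟨i, hi.trans_eq (Subspace.dual_finrank_eq (V := X.carrier i)).symm⟩
  have eq_bot {U W : SubRep X.dual} (hUW : ∀ i, IsCompl (U.mod i) (W.mod i))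
      (hU : ∀ i, U.dualCoannihilator.mod i = ⊥) (i : Q.V) : W.mod i = ⊥ := by
    have hU_top : U.mod i = ⊤ := by
      refine (Subspace.orderIsoFiniteDimensional (V := X.carrier i)).symm.injective ?_
      exact (hU i).trans Submodule.dualCoannihilator_top.symm
    exact eq_bot_of_top_isCompl (hU_top ▸ hUW i)
  exact (hX.2 U.dualCoannihilator W.dualCoannihilator fun i =>
    (Subspace.orderIsoFiniteDimensional (V := X.carrier i)).symm.isCompl (hUW i).dual).symm.imp
    (eq_bot fun i => (hUW i).symm) (eq_bot hUW)

/-- Transposition, as a linear map to the homomorphisms between the duals. -/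
def Hom.transpose (X Y : QRep Q k) : Hom X Y →ₗ[k] Hom Y.dual X.dual where
  toFun f := ⟨fun (i : Q.V) => (f.1 i).dualMap, mem_homSubmodule.2
    fun a (φ : Module.Dual k (Y.carrier (Q.tgt a))) =>
      LinearMap.ext fun x => (congrArg φ (f.comm a x)).symm⟩
  map_add' f g := Hom.ext fun (i : Q.V) (φ : Module.Dual k (Y.carrier i)) =>
    LinearMap.ext fun x => map_add φ (f.1 i x) (g.1 i x)
  map_smul' c f := Hom.ext fun (i : Q.V) (φ : Module.Dual k (Y.carrier i)) =>
    LinearMap.ext fun x => map_smul φ c (f.1 i x)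

theorem homDim_le_homDim_dual (X Y : QRep Q k) : homDim X Y ≤ homDim Y.dual X.dual := by
  refine LinearMap.finrank_le_finrank_of_injective (f := Hom.transpose X Y) fun f g hfg =>
    Hom.ext fun i x => ?_
  rw [← sub_eq_zero, ← Module.forall_dual_apply_eq_zero_iff k]
  intro φ
  rw [map_sub, sub_eq_zero]
  exact LinearMap.congr_fun (Hom.congr (X := Y.dual) hfg i φ :) x

/-- The evaluation map to the bidual, which is a representation of `Q.op.op = Q`. -/
def evalDual (X : QRep Q k) : Hom X X.dual.dual :=
  ⟨fun i => Module.Dual.eval k (X.carrier i), mem_homSubmodule.2 fun _ _ => rfl⟩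

theorem evalDual_injective (X : QRep Q k) : X.evalDual.Injective := fun i =>
  (Module.evalEquiv k (X.carrier i)).injective

theorem evalDual_surjective (X : QRep Q k) : X.evalDual.Surjective := fun i =>
  (Module.evalEquiv k (X.carrier i)).surjective

theorem homDim_dual_self (X : QRep Q k) : homDim X.dual X.dual = homDim X X := by
  refine le_antisymm ?_ (homDim_le_homDim_dual X X)
  obtain ⟨r, hr, -⟩ := Hom.exists_inverse X.evalDual_injective X.evalDual_surjective
  calc homDim X.dual X.dual ≤ homDim X.dual.dual X.dual.dual := homDim_le_homDim_dual _ _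
    _ ≤ homDim X.dual.dual X := (Hom.injective_of_comp_eq_id hr).homDim_le _
    _ ≤ homDim X X := X.evalDual_surjective.homDim_le _

end Duality

theorem Indecomposable.homDim_self {Q : FinQuiver} {k : Type} [Field k] [IsAlgClosed k]
    [Nonempty Q.V] {δ : Q.V → ℤ} (h : Q.IsAffine δ) {X : QRep Q k} {m : ℕ} (hm : 1 ≤ m)
    (hX : X.Indecomposable) (hdim : X.dimVec = m • δ) : homDim X X = m := by
  obtain ⟨e, he, source | sink⟩ := h.exists_extending_vertex
  · exact hX.homDim_self_of_source h he source hm hdim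
  · rw [← homDim_dual_self]
    exact hX.dual.homDim_self_of_source h.op he sink hm (X.dimVec_dual.trans hdim)

end QRep

/-- Every indecomposable representation `X` of an affine quiver over an algebraically
closed field with dimension vector `mδ` satisfies `dim End(X) = m`. -/
theorem endomorphism_dimension_of_imaginary_indecomposable
    (Q : AffineQuiver) (k : Type) [Field k] [IsAlgClosed k] (m : ℕ) (hm : 1 ≤ m)
    (X : QRep Q.toFinQuiver k) (hX : X.Indecomposable)
    (hdim : X.dimVec = fun i => (m : ℤ) * Q.δ i) :
    Module.finrank k ↥(endSubmodule X) = m := by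
  have := Q.connected.nonempty
  have affine : Q.toFinQuiver.IsAffine Q.δ :=
    ⟨Q.delta_pos, Q.posSemidef, Q.radical_iff, Q.acyclic.exists_order⟩
  rw [QRep.endSubmodule_eq_homSubmodule]
  exact hX.homDim_self affine hm (hdim.trans (funext fun _ => (nsmul_eq_mul m _).symm))
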